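/- Let (R,𝔪) be an analytically unramified Cohen–Macaulay local ring of dimension 2 and I, J 𝔪-primary ideals, and suppose the normal joint reduction number of I and J is zero with respect to some good joint reduction. Then the bigraded Rees ring R̄(I,J) = ⊕_{r,s ≥ 0} (I^r J^s‾) t₁^r t₂^s is Cohen–Macaulay if and only if both R̄(I) = ⊕_{n ≥ 0} (I^n‾) t^n and R̄(J) = ⊕_{n ≥ 0} (J^n‾) t^n are Cohen–Macaulay. -/

import Mathlib

/-!
Write `F(r, s)` for the integral closure of `I^r J^s`. The Rees rings in question are exactly the
families of coefficients in `F(r, s)`, respectively `F(n, 0)` and `F(0, n)` (`mem_reesBar2`,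
`mem_reesBar1`). Since `R` is Cohen–Macaulay of dimension two and `𝔪` is the radical of `(a, b)`,
the pairs `a, b` and `a + b, a` are regular sequences (`setup_of_good`). Passing to the
one-dimensional ring `R / a`, where a power of every `𝔪`-primary ideal has a principal reduction
(`exists_reduction`, valid for any residue field), yields `a' ∈ I^e` generating a reduction of
`I^e` modulo `a` (`exists_red`), and likewise `b' ∈ J^e'` modulo `b`.

Both sides of the equivalence are compared with the numerical condition `TwoGen`:
`F(n, 0) = a F(n - 1, 0) + a' F(n - e, 0)` for all `n > e`, together with its analogue for `J`.

*Cohen–Macaulay implies `TwoGen`.* Put `σ = (a + b)^N ∈ I^(l + e)`, so that `σ = a' d + a w`. The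
sequence `a t₁, b t₂, σ` is regular on the bigraded Rees ring and `a t, σ` is regular on that of `I`
(`isWeaklyRegular_seq2`, `isWeaklyRegular_seq1`). For `x ∈ F(m + e + 1, 0)` the homogeneous element
`d x t₁^(m+1)` is killed, modulo this sequence, by powers of all homogeneous elements of the
homogeneous maximal ideal (`twoGen_aux`, `pow_mem_pow_mul'`). As the localization at the
homogeneous maximal ideal is Cohen–Macaulay of dimension at least `4`, respectively `3`, its depth
exceeds the length of the sequence, and an `Ext` argument (`mem_ofList_of_pow_mul_mem`,
`mem_of_CM`) puts `d x t₁^(m+1)` into the ideal generated by the sequence. Cancelling `d` modulo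
`a` gives the decomposition of `x` (`twoGen_of_mem`).

*`TwoGen` implies Cohen–Macaulay.* `TwoGen` makes the Rees rings Noetherian, and it makes
`a t, a + b, a' t^e + a`, respectively `a t₁, b t₂, a + b, a' t₁^e + b' t₂^e' + a`, a regular
sequence (`isWeaklyRegular_tau1`, `isWeaklyRegular_tau2`). The homogeneous maximal ideal is minimal
over this sequence, so by the height theorem its localization is Cohen–Macaulay
(`isCMLocalRing_of_minimal`). Every prime `P` is then reached by the torus action: a grading
gives an automorphism of `S[T, T⁻¹]`, which reduces Cohen–Macaulayness at `P` to the largest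
homogeneous ideal inside `P`, and that ideal lies in the homogeneous maximal ideal
(`IsCMLocalRing.torus`, `torus_step`, `isCMRing_of_zeroPart2`).
-/


/-! ### Basic notions: integral closure of ideals, analytic unramifiedness,
lengths, regular sequences, Cohen-Macaulayness, primary ideals -/

/-- `x` is integral over the ideal `I`: it satisfies an equation
`x^n + a₁ x^(n-1) + ⋯ + aₙ = 0` with `aᵢ ∈ Iⁱ`. -/
def IsIntegralOverIdeal {R : Type*} [CommRing R] (I : Ideal R) (x : R) : Prop :=
  ∃ n : ℕ, 0 < n ∧ ∃ c : ℕ → R, (∀ i, c i ∈ I ^ i) ∧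
    x ^ n + ∑ i ∈ Finset.range n, c (i + 1) * x ^ (n - (i + 1)) = 0

/-- The integral closure `\overline{I}` of an ideal `I` (the set of elements integral
over `I` is an ideal, so it coincides with the ideal it spans). -/
noncomputable def intCl {R : Type*} [CommRing R] (I : Ideal R) : Ideal R :=
  Ideal.span {x | IsIntegralOverIdeal I x}

/-- A local ring is analytically unramified if its `𝔪`-adic completion is reduced. -/
def AnalyticallyUnramified (R : Type*) [CommRing R] [IsLocalRing R] : Prop :=
  IsReduced (AdicCompletion (IsLocalRing.maximalIdeal R) R)

/-- The length `λ(M)` of a module, as the Krull dimension of its lattice of submodules. -/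
noncomputable def moduleLength (R M : Type*) [Ring R] [AddCommGroup M] [Module R M] :
    WithBot ℕ∞ :=
  Order.krullDim (Submodule R M)

/-- `f` is a regular sequence on the module `M`. -/
def IsRegularSeq {R : Type*} (M : Type*) [CommRing R] [AddCommGroup M] [Module R M]
    {n : ℕ} (f : Fin n → R) : Prop :=
  (∀ i : Fin n, ∀ z : M,
      f i • z ∈ Ideal.span (f '' {j | j < i}) • (⊤ : Submodule R M) →
      z ∈ Ideal.span (f '' {j | j < i}) • (⊤ : Submodule R M)) ∧
  Ideal.span (Set.range f) • (⊤ : Submodule R M) ≠ ⊤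

/-- A local ring is Cohen-Macaulay if there is a regular sequence of length
`dim` inside the maximal ideal. -/
def IsCMLocalRing (A : Type*) [CommRing A] [IsLocalRing A] : Prop :=
  ∃ (n : ℕ) (f : Fin n → A), (∀ i, f i ∈ IsLocalRing.maximalIdeal A) ∧
    IsRegularSeq A f ∧ (n : WithBot ℕ∞) = ringKrullDim A

/-- A commutative ring is Cohen-Macaulay if all its localizations at primes are. -/
def IsCMRing (A : Type*) [CommRing A] : Prop :=
  ∀ (P : Ideal A) (_ : P.IsPrime), IsCMLocalRing (Localization.AtPrime P)

/-- An ideal of a local ring is `𝔪`-primary if its radical is the maximal ideal. -/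
def IsMPrimary {R : Type*} [CommRing R] [IsLocalRing R] (I : Ideal R) : Prop :=
  I.radical = IsLocalRing.maximalIdeal R

/-- `I^r J^s` for `r s : ℤ`, with the convention that nonpositive powers give the
unit ideal. -/
noncomputable def IJ {R : Type*} [CommRing R] (I J : Ideal R) (r s : ℤ) : Ideal R :=
  I ^ r.toNat * J ^ s.toNat

/-- `\overline{I^r J^s}` for `r s : ℤ`. -/
noncomputable def IJbar {R : Type*} [CommRing R] (I J : Ideal R) (r s : ℤ) : Ideal R :=
  intCl (IJ I J r s)

/-- A good joint reduction `(a,b)` of the filtration `{\overline{I^r J^s}}`: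
a joint reduction such that moreover `(a) ∩ \overline{I^r J^s} = a ⬝ \overline{I^{r-1} J^s}`
for all `s` and all `r > 0`, and symmetrically for `b`. -/
def IsGoodJointReduction {R : Type*} [CommRing R] (I J : Ideal R) (a b : R) : Prop :=
  a ∈ I ∧ b ∈ J ∧
  (∃ N : ℤ, ∀ r s : ℤ, N ≤ r → N ≤ s →
      IJbar I J r s =
        Ideal.span {a} * IJbar I J (r - 1) s ⊔ Ideal.span {b} * IJbar I J r (s - 1)) ∧
  (∀ r s : ℤ, 0 < r →
      Ideal.span {a} ⊓ IJbar I J r s = Ideal.span {a} * IJbar I J (r - 1) s) ∧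
  (∀ r s : ℤ, 0 < s →
      Ideal.span {b} ⊓ IJbar I J r s = Ideal.span {b} * IJbar I J r (s - 1))
/-! ### The (bi)graded Rees rings of the filtrations `{\overline{I^n}}` and
`{\overline{I^r J^s}}` -/

/-- the polynomial ring `R[t]`. -/
abbrev Amb1 (R : Type*) [CommRing R] := AddMonoidAlgebra R ℕ

/-- the polynomial ring `R[t₁,t₂]`. -/
abbrev Amb2 (R : Type*) [CommRing R] := AddMonoidAlgebra R (ℕ × ℕ)

/-- the Rees ring `𝓡(I) = ⊕_{n ≥ 0} I^n t^n`. -/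
noncomputable def rees1 {R : Type*} [CommRing R] (I : Ideal R) : Subalgebra R (Amb1 R) :=
  Algebra.adjoin R {x | ∃ a ∈ I, x = AddMonoidAlgebra.single 1 a}

/-- the Rees ring `\overline{𝓡}(I) = ⊕_{n ≥ 0} \overline{I^n} t^n` of the filtration
`{\overline{I^n}}`: by the theorem on integral closures of graded rings it is the
integral closure of `𝓡(I)` in `R[t]`. -/
noncomputable def reesBar1 {R : Type*} [CommRing R] (I : Ideal R) : Subalgebra R (Amb1 R) :=
  (integralClosure (rees1 I) (Amb1 R)).restrictScalars R

/-- the bigraded Rees ring `𝓡(I,J) = ⊕_{r,s ≥ 0} I^r J^s t₁^r t₂^s`. -/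
noncomputable def rees2 {R : Type*} [CommRing R] (I J : Ideal R) : Subalgebra R (Amb2 R) :=
  Algebra.adjoin R
    ({x | ∃ a ∈ I, x = AddMonoidAlgebra.single (1, 0) a} ∪
      {x | ∃ b ∈ J, x = AddMonoidAlgebra.single (0, 1) b})

/-- the bigraded Rees ring `\overline{𝓡}(I,J) = ⊕_{r,s ≥ 0} \overline{I^r J^s} t₁^r t₂^s`
of the filtration `{\overline{I^r J^s}}`: the integral closure of `𝓡(I,J)` in
`R[t₁,t₂]`. -/
noncomputable def reesBar2 {R : Type*} [CommRing R] (I J : Ideal R) :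
    Subalgebra R (Amb2 R) :=
  (integralClosure (rees2 I J) (Amb2 R)).restrictScalars R

universe u v w

open RingTheory.Sequence IsLocalRing Polynomial
open scoped Pointwise

/-! ### Depth sensitivity through `Ext`, and Cohen–Macaulay local rings via lists -/

open RingTheory.Sequence CategoryTheory Abelian Limits in
/-- Vanishing of `Ext` below the length of a weakly regular sequence each of whose members has a
power annihilating the first argument; no finiteness is assumed. -/
lemma ext_vanish {Λ : Type u} [CommRing Λ] (N : ModuleCat.{u} Λ) (xs : List Λ)
    (hann : ∀ x ∈ xs, ∃ k : ℕ, x ^ k ∈ Module.annihilator Λ N) (M : ModuleCat.{u} Λ)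
    (reg : IsWeaklyRegular M xs) : ∀ i < xs.length, Subsingleton (Ext N M i) := by
  induction xs generalizing M with
  | nil => simp
  | cons a xs ih =>
    intro i hi
    simp only [List.mem_cons, forall_eq_or_imp] at hann
    obtain ⟨⟨k, hk⟩, hann⟩ := hann
    simp only [isWeaklyRegular_cons_iff] at reg
    match i with
    | 0 =>
      have : Subsingleton (N →ₗ[Λ] M) := by
        refine ⟨fun f g => ?_⟩
        ext z
        apply (reg.1.pow k)
        change a ^ k • f z = a ^ k • g z
        rw [← map_smul, ← map_smul, Module.mem_annihilator.mp hk z]; simp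
      exact (Ext.addEquiv₀.trans ModuleCat.homAddEquiv).subsingleton
    | i + 1 =>
      let g := (AddCommGrpCat.ofHom ((Ext.mk₀ (M.smulShortComplex a).f).postcomp N
          (add_zero (i + 1))))
      have mono_g : Mono g := by
        apply (Ext.covariant_sequence_exact₁' N reg.1.smulShortComplex_shortExact i (i + 1)
            rfl).mono_g ((AddCommGrpCat.isZero_of_iff_subsingleton.mpr ?_).eq_zero_of_src _)
        exact ih hann (ModuleCat.of Λ (QuotSMulTop a M)) reg.2 i (by simpa using hi)
      let gk := AddCommGrpCat.ofHom ((Ext.mk₀ (M.smulShortComplex (a ^ k)).f).postcomp N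
          (add_zero (i + 1)))
      have mono_gk : Mono gk := by
        simp only [ModuleCat.smulShortComplex_f_eq_smul_id, g, gk] at mono_g ⊢
        exact (Ext.postcomp_smul_id_mono_iff (a ^ k) (i + 1)).mpr <|
          ((Ext.postcomp_smul_id_mono_iff a (i + 1)).mp mono_g).pow k
      have zero_gk : gk = 0 := Ext.postcomp_smul_id_eq_zero_of_mem_annihilator hk (i + 1)
      exact AddCommGrpCat.subsingleton_of_isZero (IsZero.of_mono_eq_zero _ zero_gk)

open RingTheory.Sequence CategoryTheory Abelian Limits in
/-- Dimension shifting along `ys`: vanishing of `Ext` below `n > ys.length` on `M` gives vanishing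
of `Hom` into `M / (ys) M`. -/
lemma hom_vanish {Λ : Type u} [CommRing Λ] (N : ModuleCat.{u} Λ) (ys : List Λ)
    (M : ModuleCat.{u} Λ) (n : ℕ) (hE : ∀ i < n, Subsingleton (Ext N M i))
    (reg : IsWeaklyRegular M ys) (hn : ys.length < n) :
    Subsingleton (N →ₗ[Λ] (M ⧸ (Ideal.ofList ys • (⊤ : Submodule Λ M)))) := by
  induction ys generalizing M n with
  | nil =>
    have h0 := hE 0 hn
    have : Subsingleton (N →ₗ[Λ] M) :=
      ((Ext.addEquiv₀.trans ModuleCat.homAddEquiv).symm).toEquiv.subsingleton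
    have e : (M ⧸ (Ideal.ofList ([] : List Λ) • (⊤ : Submodule Λ M))) ≃ₗ[Λ] M :=
      Submodule.quotEquivOfEqBot _ (by simp)
    refine ⟨fun f g => ?_⟩
    have := Subsingleton.elim (e.toLinearMap ∘ₗ f) (e.toLinearMap ∘ₗ g)
    ext z
    exact e.injective (LinearMap.congr_fun this z)
  | cons a ys ih =>
    simp only [isWeaklyRegular_cons_iff] at reg
    obtain ⟨n, rfl⟩ : ∃ m, n = m + 1 := ⟨n - 1, by simp at hn; omega⟩
    have := ih (ModuleCat.of Λ (QuotSMulTop a M)) n (fun i hi => by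
      have zero1 := AddCommGrpCat.isZero_of_iff_subsingleton.mpr (hE i (by omega))
      have zero2 := AddCommGrpCat.isZero_of_iff_subsingleton.mpr (hE (i + 1) (by omega))
      exact AddCommGrpCat.subsingleton_of_isZero <| ShortComplex.Exact.isZero_of_both_zeros
        ((Ext.covariant_sequence_exact₃' N reg.1.smulShortComplex_shortExact) i (i + 1) rfl)
        (zero1.eq_zero_of_src _) (zero2.eq_zero_of_tgt _)) reg.2 (by simpa using hn)
    have e := Submodule.quotOfListConsSMulTopEquivQuotSMulTopInner M a ys
    refine ⟨fun f g => ?_⟩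
    have := Subsingleton.elim (e.toLinearMap ∘ₗ f) (e.toLinearMap ∘ₗ g)
    ext z
    exact e.injective (LinearMap.congr_fun this z)

open RingTheory.Sequence in
/-- If `xs` is longer than `ys`, both weakly regular on `Λ`, then an element multiplied into `(ys)`
by powers of all members of `xs` lies in `(ys)`. -/
lemma mem_ofList_of_pow_mul_mem {Λ : Type u} [CommRing Λ] (xs ys : List Λ)
    (hx : IsWeaklyRegular Λ xs) (hy : IsWeaklyRegular Λ ys) (hlt : ys.length < xs.length) (p : Λ)
    (h : ∀ x ∈ xs, ∃ N : ℕ, x ^ N * p ∈ Ideal.ofList ys) : p ∈ Ideal.ofList ys := by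
  let f : Λ →ₗ[Λ] (Λ ⧸ (Ideal.ofList ys • (⊤ : Submodule Λ Λ))) :=
    (Submodule.mkQ _).comp (LinearMap.toSpanSingleton Λ Λ p)
  let N := ModuleCat.of Λ (Λ ⧸ LinearMap.ker f)
  have hker : ∀ r : Λ, r ∈ LinearMap.ker f ↔ r * p ∈ Ideal.ofList ys := by
    intro r
    simp [f, LinearMap.mem_ker, LinearMap.toSpanSingleton_apply]
    exact Submodule.Quotient.mk_eq_zero _ |>.trans (by simp)
  have hann : ∀ x ∈ xs, ∃ k : ℕ, x ^ k ∈ Module.annihilator Λ N := by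
    intro x hxx
    obtain ⟨k, hk⟩ := h x hxx
    refine ⟨k, Module.mem_annihilator.mpr ?_⟩
    intro z
    obtain ⟨z, rfl⟩ := Submodule.Quotient.mk_surjective _ z
    rw [← Submodule.Quotient.mk_smul, Submodule.Quotient.mk_eq_zero, hker]
    have : x ^ k • z * p = z * (x ^ k * p) := by simp; ring
    rw [this]; exact Ideal.mul_mem_left _ _ hk
  have hS := hom_vanish N ys (ModuleCat.of Λ Λ) _ (ext_vanish N xs hann (ModuleCat.of Λ Λ) hx) hy hlt
  have := LinearMap.congr_fun (Subsingleton.elim (α := N →ₗ[Λ] _)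
    ((LinearMap.ker f).liftQ f le_rfl) 0) (Submodule.Quotient.mk 1)
  have h1 : f 1 = 0 := by rwa [Submodule.liftQ_apply] at this
  simpa using (hker 1).mp h1

open RingTheory.Sequence in
lemma isWeaklyRegular_iff_mem {A : Type u} [CommRing A] (rs : List A) :
    IsWeaklyRegular A rs ↔ ∀ i (h : i < rs.length), ∀ z : A,
      rs[i] * z ∈ Ideal.ofList (rs.take i) → z ∈ Ideal.ofList (rs.take i) := by
  rw [isWeaklyRegular_iff]
  refine forall_congr' fun i => forall_congr' fun h => ?_
  rw [isSMulRegular_quotient_iff_mem_of_smul_mem]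
  simp

/-- `IsCMLocalRing` in terms of lists and weakly regular sequences. -/
lemma isCMLocalRing_iff_list {A : Type u} [CommRing A] [IsLocalRing A] :
    IsCMLocalRing A ↔ ∃ rs : List A, (∀ r ∈ rs, r ∈ IsLocalRing.maximalIdeal A) ∧
      RingTheory.Sequence.IsWeaklyRegular A rs ∧ (rs.length : WithBot ℕ∞) = ringKrullDim A := by
  have key : ∀ (n : ℕ) (f : Fin n → A) (i : ℕ) (hi : i < n),
      Ideal.ofList ((List.ofFn f).take i) = Ideal.span (f '' {j | j < ⟨i, hi⟩}) := by
    intro n f i hi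
    unfold Ideal.ofList
    congr 1
    ext z
    simp only [Set.mem_ofPred_eq, List.mem_take_iff_getElem, Set.mem_image]
    constructor
    · rintro ⟨j, hj, rfl⟩
      simp only [List.length_ofFn, lt_inf_iff] at hj
      exact ⟨⟨j, hj.2⟩, by simpa using hj.1, by simp⟩
    · rintro ⟨j, hj, rfl⟩
      exact ⟨j, by simp; exact hj, by simp⟩
  constructor
  · rintro ⟨n, f, hm, ⟨hr, -⟩, hd⟩
    refine ⟨List.ofFn f, ?_, ?_, by simpa using hd⟩
    · intro r hr
      rw [List.mem_ofFn] at hr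
      obtain ⟨i, rfl⟩ := hr
      exact hm i
    · rw [isWeaklyRegular_iff_mem]
      intro i hi z hz
      have hi' : i < n := by simpa using hi
      rw [key n f i hi'] at hz ⊢
      have := hr ⟨i, hi'⟩ z
      simp only [smul_eq_mul, Ideal.mul_top] at this
      apply this
      simpa using hz
  · rintro ⟨rs, hm, hr, hd⟩
    refine ⟨rs.length, rs.get, fun i => hm _ (List.get_mem _ _), ⟨?_, ?_⟩, hd⟩
    · intro i z hz
      rw [isWeaklyRegular_iff_mem] at hr
      have := hr i i.2 z
      have k := key rs.length rs.get i i.2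
      rw [List.ofFn_get] at k
      rw [k] at this
      simp only [smul_eq_mul, Ideal.mul_top] at hz ⊢
      exact this hz
    · simp only [smul_eq_mul, Ideal.mul_top]
      intro h
      have : Ideal.span (Set.range rs.get) ≤ IsLocalRing.maximalIdeal A := by
        rw [Ideal.span_le]
        rintro _ ⟨i, rfl⟩
        exact hm _ (List.get_mem _ _)
      rw [h, top_le_iff] at this
      exact Ideal.IsPrime.ne_top' this

open RingTheory.Sequence in
lemma isWeaklyRegular_map_ringEquiv {A : Type u} {B : Type v} [CommRing A] [CommRing B]
    (e : A ≃+* B) (rs : List A) (h : IsWeaklyRegular A rs) : IsWeaklyRegular B (rs.map e) := by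
  rw [isWeaklyRegular_iff_mem] at h ⊢
  intro i hi z hz
  have hi' : i < rs.length := by simpa using hi
  have key : ∀ w : B, w ∈ Ideal.ofList ((rs.take i).map e) ↔
      e.symm w ∈ Ideal.ofList (rs.take i) := by
    intro w
    have : Ideal.ofList ((rs.take i).map e) = Ideal.map e (Ideal.ofList (rs.take i)) :=
      (Ideal.map_ofList (e : A →+* B) _).symm
    rw [this, Ideal.mem_map_of_equiv]
    exact ⟨by rintro ⟨x, hx, rfl⟩; simpa using hx, fun hx => ⟨_, hx, by simp⟩⟩
  have := h i hi' (e.symm z)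
  rw [← List.map_take, key] at hz ⊢
  apply this
  simpa using hz

lemma IsCMLocalRing.of_ringEquiv {A : Type u} {B : Type v} [CommRing A] [CommRing B]
    [IsLocalRing A] [IsLocalRing B] (e : A ≃+* B) (h : IsCMLocalRing A) : IsCMLocalRing B := by
  rw [isCMLocalRing_iff_list] at h ⊢
  obtain ⟨rs, hm, hr, hd⟩ := h
  refine ⟨rs.map e, ?_, isWeaklyRegular_map_ringEquiv e rs hr, ?_⟩
  · intro r hr
    obtain ⟨r, h, rfl⟩ := List.mem_map.mp hr
    have := hm r h
    rw [IsLocalRing.mem_maximalIdeal, mem_nonunits_iff] at this ⊢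
    rwa [MulEquiv.isUnit_map e]
  · rw [List.length_map, hd, ringKrullDim_eq_of_ringEquiv e]

/-! ### Regular sequences and associated primes -/

lemma exists_nat_ringKrullDim (A : Type u) [CommRing A] [IsNoetherianRing A] [IsLocalRing A] :
    ∃ d : ℕ, ringKrullDim A = d := by
  rw [← IsLocalRing.maximalIdeal_height_eq_ringKrullDim]
  have : (maximalIdeal A).height ≠ ⊤ := Ideal.height_ne_top Ideal.IsPrime.ne_top'
  obtain ⟨d, hd⟩ := ENat.ne_top_iff_exists.mp this
  exact ⟨d, by rw [← hd]; rfl⟩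

lemma exists_le_assPrime {A : Type u} [CommRing A] [IsNoetherianRing A] (N : Type v)
    [AddCommGroup N] [Module A N] [Module.Finite A N] (K : Ideal A)
    (h : ∀ x ∈ K, ¬ IsSMulRegular N x) : ∃ Q ∈ associatedPrimes A N, K ≤ Q := by
  refine (Ideal.subset_union_prime_finite (associatedPrimes.finite A N) ⊥ ⊥ ?_).mp ?_
  · exact fun I hin _ _ ↦ IsAssociatedPrime.isPrime hin
  · rw [biUnion_associatedPrimes_eq_compl_regular A N]
    exact fun r hr ↦ h r hr

lemma exists_mem_assPrime_quot {A : Type u} [CommRing A] [IsNoetherianRing A] [IsLocalRing A]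
    (N : Type v) [AddCommGroup N] [Module A N] [Module.Finite A N] (x : A)
    (hx : x ∈ maximalIdeal A) (hreg : IsSMulRegular N x) (Q : Ideal A)
    (hQ : Q ∈ associatedPrimes A N) :
    ∃ Q' ∈ associatedPrimes A (QuotSMulTop x N), Q < Q' := by
  have hQ0 := hQ
  rw [AssociatedPrimes.mem_iff, isAssociatedPrime_iff] at hQ
  obtain ⟨hp, n, hn⟩ := hQ
  have hxQ : x ∉ Q := by
    intro hxQ
    have : x • n = 0 := by rw [hn] at hxQ; simpa [Submodule.mem_colon_singleton] using hxQ
    have n0 : n = 0 := hreg (by simpa using this)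
    apply hp.ne_top
    rw [hn, n0]; ext; simp
  let W : Submodule A N :=
    { carrier := {w | ∀ q ∈ Q, q • w = 0}
      add_mem' := fun {a b} ha hb q hq => by simp [ha q hq, hb q hq]
      zero_mem' := by simp
      smul_mem' := fun c w hw q hq => by rw [smul_comm, hw q hq, smul_zero] }
  have hnW : n ∈ W := by
    intro q hq
    rw [hn] at hq; simpa [Submodule.mem_colon_singleton] using hq
  have key : ∃ w ∈ W, w ∉ x • (⊤ : Submodule A N) := by
    by_contra hcon
    push Not at hcon
    have hW : W ≤ maximalIdeal A • W := by
      intro w hw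
      obtain ⟨n', -, rfl⟩ := (Submodule.mem_smul_pointwise_iff_exists _ _ _).mp (hcon w hw)
      refine Submodule.smul_mem_smul hx ?_
      intro q hq
      apply hreg
      have := hw q hq
      simp only [smul_zero]
      rw [smul_comm]; exact this
    have : W = ⊥ := Submodule.eq_bot_of_le_smul_of_le_jacobson_bot (maximalIdeal A) W
      (IsNoetherian.noetherian W) hW (maximalIdeal_le_jacobson _)
    rw [this, Submodule.mem_bot] at hnW
    apply hp.ne_top
    rw [hn, hnW]; ext; simp
  obtain ⟨w, hw, hwx⟩ := key
  obtain ⟨Q', hQ', hle⟩ := exists_le_isAssociatedPrime_of_isNoetherianRing A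
    (M := QuotSMulTop x N) (Submodule.Quotient.mk w)
    (by rwa [Ne, Submodule.Quotient.mk_eq_zero])
  refine ⟨Q', hQ', lt_of_le_of_ne ?_ ?_⟩
  · intro q hq
    apply hle
    rw [Submodule.mem_colon_singleton, Submodule.mem_bot, ← Submodule.Quotient.mk_smul, hw q hq,
      Submodule.Quotient.mk_zero]
  · rintro rfl
    apply hxQ
    apply hle
    rw [Submodule.mem_colon_singleton, Submodule.mem_bot, ← Submodule.Quotient.mk_smul,
      Submodule.Quotient.mk_eq_zero]
    exact Submodule.smul_mem_pointwise_smul _ _ _ trivial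

/-- A regular sequence on `N` is no longer than `dim A/Q`, for every associated prime `Q` of
`N`. -/
lemma length_le_coheight {A : Type u} [CommRing A] [IsNoetherianRing A] [IsLocalRing A]
    (xs : List A) (N : Type v) [AddCommGroup N] [Module A N] [Module.Finite A N]
    (hx : ∀ x ∈ xs, x ∈ maximalIdeal A) (hreg : IsWeaklyRegular N xs) (Q : Ideal A)
    (hQ : Q ∈ associatedPrimes A N) (hp : Q.IsPrime) :
    (xs.length : ℕ∞) ≤ Order.coheight (⟨Q, hp⟩ : PrimeSpectrum A) := by
  induction xs generalizing N Q with
  | nil => simp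
  | cons x xs ih =>
    simp only [List.mem_cons, forall_eq_or_imp] at hx
    rw [isWeaklyRegular_cons_iff] at hreg
    obtain ⟨Q', hQ', hlt⟩ := exists_mem_assPrime_quot N x hx.1 hreg.1 Q hQ
    have := ih (QuotSMulTop x N) hx.2 hreg.2 Q' hQ' hQ'.1
    calc ((x :: xs).length : ℕ∞) = xs.length + 1 := by simp
      _ ≤ Order.coheight (⟨Q', hQ'.1⟩ : PrimeSpectrum A) + 1 := by gcongr
      _ ≤ _ := Order.coheight_add_one_le (by exact hlt)

lemma length_le_dim {A : Type u} [CommRing A] [IsNoetherianRing A] [IsLocalRing A]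
    (xs : List A) (hx : ∀ x ∈ xs, x ∈ maximalIdeal A) (hreg : IsWeaklyRegular A xs) :
    (xs.length : WithBot ℕ∞) ≤ ringKrullDim A := by
  obtain ⟨Q, hQ⟩ := associatedPrimes.nonempty A A
  have := length_le_coheight xs A hx hreg Q hQ hQ.1
  exact (WithBot.coe_le_coe.mpr this).trans (Order.coheight_le_krullDim _)

lemma isCMLocalRing_of_le {A : Type u} [CommRing A] [IsNoetherianRing A] [IsLocalRing A]
    (xs : List A) (hx : ∀ x ∈ xs, x ∈ maximalIdeal A) (hreg : IsWeaklyRegular A xs)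
    (h : ringKrullDim A ≤ xs.length) : IsCMLocalRing A :=
  isCMLocalRing_iff_list.mpr ⟨xs, hx, hreg, le_antisymm (length_le_dim xs hx hreg) h⟩

/-- There is a maximal weakly regular sequence inside an ideal contained in the maximal ideal. -/
lemma exists_maximal_regular {A : Type u} [CommRing A] [IsNoetherianRing A] [IsLocalRing A]
    (K : Ideal A) (hK : K ≤ maximalIdeal A) (xs : List A) (hxK : ∀ x ∈ xs, x ∈ K)
    (hreg : IsWeaklyRegular A xs) :
    ∃ zs : List A, (∀ x ∈ zs, x ∈ K) ∧ IsWeaklyRegular A (xs ++ zs) ∧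
      ∃ Q ∈ associatedPrimes A (A ⧸ (Ideal.ofList (xs ++ zs) • (⊤ : Submodule A A))), K ≤ Q := by
  by_contra hcon
  push Not at hcon
  have step : ∀ zs : List A, (∀ x ∈ zs, x ∈ K) → IsWeaklyRegular A (xs ++ zs) →
      ∃ z ∈ K, IsWeaklyRegular A (xs ++ (zs ++ [z])) := by
    intro zs h1 h2
    have := hcon zs h1 h2
    by_contra h3
    push Not at h3
    obtain ⟨Q, hQ, hle⟩ := exists_le_assPrime
      (A ⧸ (Ideal.ofList (xs ++ zs) • (⊤ : Submodule A A))) K (fun z hz hr => h3 z hz (by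
        rw [← List.append_assoc, isWeaklyRegular_append_iff]
        exact ⟨h2, by simpa using hr⟩))
    exact this Q hQ hle
  have all : ∀ n : ℕ, ∃ zs : List A, (∀ x ∈ zs, x ∈ K) ∧ IsWeaklyRegular A (xs ++ zs) ∧
      zs.length = n := by
    intro n
    induction n with
    | zero => exact ⟨[], by simp, by simpa using hreg, rfl⟩
    | succ n ih =>
      obtain ⟨zs, h1, h2, h3⟩ := ih
      obtain ⟨z, hz, h4⟩ := step zs h1 h2
      refine ⟨zs ++ [z], ?_, h4, by simp [h3]⟩
      intro x hx
      rcases List.mem_append.mp hx with h | h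
      · exact h1 x h
      · rw [List.mem_singleton.mp h]; exact hz
  obtain ⟨d, hd⟩ := exists_nat_ringKrullDim A
  obtain ⟨zs, h1, h2, h3⟩ := all (d + 1)
  have := length_le_dim (xs ++ zs) (by
    intro x hx
    rcases List.mem_append.mp hx with h | h
    · exact hK (hxK x h)
    · exact hK (h1 x h)) h2
  have := this.trans hd.le
  simp [h3] at this
  norm_cast at this
  omega

/-! ### Unmixedness and localization of Cohen–Macaulay local rings -/

/-- In a Cohen-Macaulay local ring, a weakly regular sequence in the maximal ideal extends to one
of length at least `dim A`. -/
lemma IsCMLocalRing.exists_extend {A : Type u} [CommRing A] [IsNoetherianRing A] [IsLocalRing A]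
    (hCM : IsCMLocalRing A) (ys : List A) (hy : ∀ y ∈ ys, y ∈ maximalIdeal A)
    (hreg : IsWeaklyRegular A ys) :
    ∃ zs : List A, (∀ x ∈ zs, x ∈ maximalIdeal A) ∧ IsWeaklyRegular A (ys ++ zs) ∧
      ringKrullDim A ≤ (ys ++ zs).length := by
  obtain ⟨xs, hx, hxr, hxd⟩ := isCMLocalRing_iff_list.mp hCM
  obtain ⟨zs, h1, h2, Q, hQ, hle⟩ := exists_maximal_regular (maximalIdeal A) le_rfl ys hy hreg
  refine ⟨zs, h1, h2, ?_⟩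
  rw [← hxd]
  by_contra hlt
  rw [not_le] at hlt
  have hlt' : (ys ++ zs).length < xs.length := by exact_mod_cast hlt
  rw [AssociatedPrimes.mem_iff, isAssociatedPrime_iff] at hQ
  obtain ⟨hp, n, hn⟩ := hQ
  obtain ⟨p, rfl⟩ := Submodule.Quotient.mk_surjective _ n
  have hmem : ∀ x, x * p ∈ Ideal.ofList (ys ++ zs) ↔ x ∈ Q := by
    intro x
    rw [hn, Submodule.mem_colon_singleton, Submodule.mem_bot, ← Submodule.Quotient.mk_smul,
      Submodule.Quotient.mk_eq_zero]
    simp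
  have := mem_ofList_of_pow_mul_mem xs (ys ++ zs) hxr h2 hlt' p
    (fun x hxx => ⟨1, by rw [pow_one, hmem]; exact hle (hx x hxx)⟩)
  apply hp.ne_top
  rw [Ideal.eq_top_iff_one, ← hmem, one_mul]
  exact this

/-- Unmixedness: an associated prime of a regular sequence of length `k` in a Cohen-Macaulay
local ring has height at most `k`. -/
lemma IsCMLocalRing.height_le_of_ass {A : Type u} [CommRing A] [IsNoetherianRing A] [IsLocalRing A]
    (hCM : IsCMLocalRing A) (ys : List A) (hy : ∀ y ∈ ys, y ∈ maximalIdeal A)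
    (hreg : IsWeaklyRegular A ys) (Q : Ideal A)
    (hQ : Q ∈ associatedPrimes A (A ⧸ (Ideal.ofList ys • (⊤ : Submodule A A)))) :
    Q.height ≤ ys.length := by
  obtain ⟨zs, h1, h2, h3⟩ := hCM.exists_extend ys hy hreg
  rw [isWeaklyRegular_append_iff] at h2
  have hp : Q.IsPrime := hQ.1
  have h4 := length_le_coheight zs _ h1 h2.2 Q hQ hp
  have h5 : ((Order.height (⟨Q, hp⟩ : PrimeSpectrum A) +
      Order.coheight (⟨Q, hp⟩ : PrimeSpectrum A) : ℕ∞) : WithBot ℕ∞) ≤ ringKrullDim A := by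
    rw [ringKrullDim, Order.krullDim_eq_iSup_height_add_coheight_of_nonempty]
    exact WithBot.coe_le_coe.mpr (le_iSup (fun a : PrimeSpectrum A =>
      Order.height a + Order.coheight a) _)
  have h6 := h5.trans h3
  have h7 : Q.height = Order.height (⟨Q, hp⟩ : PrimeSpectrum A) :=
    PrimeSpectrum.height_eq_orderHeight ⟨Q, hp⟩
  rw [← h7] at h6
  have h8 : Q.height + zs.length ≤ (ys.length : ℕ∞) + zs.length := by
    refine (add_le_add_right h4 _).trans ?_
    have : (((ys ++ zs).length : ℕ) : WithBot ℕ∞) = ((ys.length + zs.length : ℕ∞) : WithBot ℕ∞) := by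
      simp
    rw [this] at h6
    exact WithBot.coe_le_coe.mp h6
  exact (ENat.add_le_add_iff_right (by simp)).mp h8

/-- Localizations of Cohen-Macaulay local rings are Cohen-Macaulay. -/
lemma IsCMLocalRing.localization {A : Type u} [CommRing A] [IsNoetherianRing A] [IsLocalRing A]
    (hCM : IsCMLocalRing A) (p : Ideal A) [hp : p.IsPrime] (B : Type v) [CommRing B]
    [Algebra A B] [IsLocalization.AtPrime B p] [IsLocalRing B] : IsCMLocalRing B := by
  have : IsNoetherianRing B := IsLocalization.isNoetherianRing p.primeCompl B inferInstance
  obtain ⟨zs, h1, h2, Q, hQ, hle⟩ := exists_maximal_regular p (IsLocalRing.le_maximalIdeal hp.ne_top)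
    [] (by simp) (by simp)
  rw [List.nil_append] at h2 hQ
  refine isCMLocalRing_of_le (zs.map (algebraMap A B)) ?_ (h2.of_isLocalization B p.primeCompl) ?_
  · intro x hx
    obtain ⟨z, hz, rfl⟩ := List.mem_map.mp hx
    exact (IsLocalization.AtPrime.to_map_mem_maximal_iff B p z).mpr (h1 z hz)
  · rw [IsLocalization.AtPrime.ringKrullDim_eq_height p B]
    have := hCM.height_le_of_ass zs (fun y hy => IsLocalRing.le_maximalIdeal hp.ne_top (h1 y hy)) h2
      Q hQ
    rw [List.length_map]
    exact WithBot.coe_le_coe.mpr ((Ideal.height_mono hle).trans this)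

/-- In a two-dimensional Cohen-Macaulay local ring, a system of parameters is a regular
sequence. -/
lemma IsCMLocalRing.pair_regular {A : Type u} [CommRing A] [IsNoetherianRing A] [IsLocalRing A]
    (hCM : IsCMLocalRing A) (hdim : ringKrullDim A = 2) (a b : A) (ha : a ∈ maximalIdeal A)
    (hb : b ∈ maximalIdeal A)
    (hrad : maximalIdeal A ≤ (Ideal.span {a, b}).radical) : IsWeaklyRegular A [a, b] := by
  have hmax : ∀ Q : Ideal A, Q.IsPrime → a ∈ Q → b ∈ Q → maximalIdeal A ≤ Q := by
    intro Q hQ h1 h2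
    refine hrad.trans (hQ.radical_le_iff.mpr ?_)
    rw [Ideal.span_le]
    rintro x (rfl | rfl) <;> assumption
  obtain ⟨xs, hx, hxr, hxd⟩ := isCMLocalRing_iff_list.mp hCM
  have hlen : xs.length = 2 := by rw [hdim] at hxd; exact_mod_cast hxd
  have hareg : IsSMulRegular A a := by
    by_contra hcon
    have : a ∈ ({ r : A | IsSMulRegular A r }ᶜ : Set A) := hcon
    rw [← biUnion_associatedPrimes_eq_compl_regular] at this
    obtain ⟨Q, hQ, haQ⟩ := Set.mem_iUnion₂.mp this
    have hp : Q.IsPrime := hQ.1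
    have h1 := length_le_coheight xs A hx hxr Q hQ hp
    have h2 : ((Order.coheight (⟨Q, hp⟩ : PrimeSpectrum A) : ℕ∞) : WithBot ℕ∞) =
        ringKrullDim (A ⧸ Q) := by
      rw [ringKrullDim_quotient, Order.coheight_eq_krullDim_Ici]
      congr!
    have hloc : IsLocalRing (A ⧸ Q) :=
      IsLocalRing.of_surjective' (Ideal.Quotient.mk Q) Ideal.Quotient.mk_surjective
    have hmap : (maximalIdeal A).map (Ideal.Quotient.mk Q) = maximalIdeal (A ⧸ Q) :=
      IsLocalRing.map_maximalIdeal_of_surjective _ Ideal.Quotient.mk_surjective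
    have h3 : maximalIdeal A ∈ (Q ⊔ Ideal.span {b}).minimalPrimes := by
      refine ⟨⟨inferInstance, sup_le (IsLocalRing.le_maximalIdeal hp.ne_top) ?_⟩, ?_⟩
      · rwa [Ideal.span_singleton_le_iff_mem]
      · rintro Q' ⟨hQ', hle⟩ -
        exact hmax Q' hQ' (hle (Ideal.mem_sup_left haQ))
          (hle (Ideal.mem_sup_right (Ideal.mem_span_singleton_self b)))
    have h4 := Ideal.map_height_le_one_of_mem_minimalPrimes h3
    rw [hmap] at h4
    have h5 := h1
    rw [← WithBot.coe_le_coe, h2, ← IsLocalRing.maximalIdeal_height_eq_ringKrullDim,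
      WithBot.coe_le_coe, hlen] at h5
    have := h5.trans h4
    norm_num at this
  have hbreg : IsSMulRegular (A ⧸ (Ideal.ofList [a] • (⊤ : Submodule A A))) b := by
    by_contra hcon
    have : b ∈ ({ r : A | IsSMulRegular (A ⧸ (Ideal.ofList [a] • (⊤ : Submodule A A))) r }ᶜ :
      Set A) := hcon
    rw [← biUnion_associatedPrimes_eq_compl_regular] at this
    obtain ⟨Q, hQ, hbQ⟩ := Set.mem_iUnion₂.mp this
    have hp : Q.IsPrime := hQ.1
    have h1 := hCM.height_le_of_ass [a] (by simpa using ha) (by simpa using hareg) Q hQ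
    have haQ : a ∈ Q := by
      obtain ⟨-, n, hn⟩ := isAssociatedPrime_iff.mp hQ
      obtain ⟨z, rfl⟩ := Submodule.Quotient.mk_surjective _ n
      rw [hn, Submodule.mem_colon_singleton, Submodule.mem_bot, ← Submodule.Quotient.mk_smul,
        Submodule.Quotient.mk_eq_zero]
      exact Submodule.smul_mem_smul (by simp) trivial
    have h2 := Ideal.height_mono (hmax Q hp haQ hbQ)
    have h3 := IsLocalRing.maximalIdeal_height_eq_ringKrullDim (R := A)
    rw [hdim] at h3
    have h4 : (maximalIdeal A).height = 2 := WithBot.coe_injective h3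
    rw [h4] at h2
    have := h2.trans h1
    norm_num at this
  have : [a, b] = [a] ++ [b] := rfl
  rw [this, isWeaklyRegular_append_iff]
  exact ⟨by simpa using hareg, by simpa using hbreg⟩

/-! ### Polynomial extensions and flat descent -/

lemma poly_regular {A : Type u} [CommRing A] [IsLocalRing A] (K : Ideal A) (g : A[X])
    (hg : g ∉ (maximalIdeal A).map C) (h : A[X]) (hgh : g * h ∈ K.map C) : h ∈ K.map C := by
  let f := Polynomial.mapRingHom (Ideal.Quotient.mk K)
  have hf : ∀ p : A[X], p ∈ K.map C ↔ f p = 0 := by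
    intro p
    rw [← RingHom.mem_ker, Polynomial.ker_mapRingHom, Ideal.mk_ker]
  rw [hf] at hgh ⊢
  by_contra hne
  rw [map_mul] at hgh
  have h1 : f g ∉ nonZeroDivisors (A ⧸ K)[X] := by
    intro hm
    exact hne ((mul_left_mem_nonZeroDivisors_eq_zero_iff hm).mp hgh)
  rw [Polynomial.notMem_nonZeroDivisors_iff] at h1
  obtain ⟨a, ha, hag⟩ := h1
  rw [Ideal.mem_map_C_iff] at hg
  push Not at hg
  obtain ⟨n, hn⟩ := hg
  have hu : IsUnit (g.coeff n) := by simpa using hn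
  apply ha
  have := congrArg (fun p => Polynomial.coeff p n) hag
  simp only [f, Polynomial.coeff_smul, Polynomial.coe_mapRingHom, Polynomial.coeff_map,
    Polynomial.coeff_zero, smul_eq_mul] at this
  exact (hu.map (Ideal.Quotient.mk K)).mul_left_eq_zero.mp this

/-- Polynomial extensions of a Cohen-Macaulay local ring are Cohen-Macaulay at primes over the
maximal ideal. -/
lemma IsCMLocalRing.polynomial {A : Type u} [CommRing A] [IsNoetherianRing A] [IsLocalRing A]
    (hCM : IsCMLocalRing A) (Q : Ideal A[X]) [hQ : Q.IsPrime] (hover : Q.comap C = maximalIdeal A)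
    (B : Type v) [CommRing B] [Algebra A[X] B] [IsLocalization.AtPrime B Q] [IsLocalRing B] :
    IsCMLocalRing B := by
  have : IsNoetherianRing B := IsLocalization.isNoetherianRing Q.primeCompl B inferInstance
  obtain ⟨xs, hx, hxr, hxd⟩ := isCMLocalRing_iff_list.mp hCM
  have hxr' : IsWeaklyRegular A[X] (xs.map C) := hxr.of_flat (S := A[X])
  have hmem : ∀ x ∈ xs.map C, x ∈ Q := by
    intro x hxx
    obtain ⟨z, hz, rfl⟩ := List.mem_map.mp hxx
    rw [← Ideal.mem_comap, hover]; exact hx z hz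
  have key : ∀ ys : List A[X], (∀ y ∈ ys, y ∈ Q) → IsWeaklyRegular A[X] ys →
      (Q.height : WithBot ℕ∞) ≤ ys.length → IsCMLocalRing B := by
    intro ys h1 h2 h3
    refine isCMLocalRing_of_le (ys.map (algebraMap A[X] B)) ?_
      (h2.of_isLocalization B Q.primeCompl) ?_
    · intro x hx
      obtain ⟨z, hz, rfl⟩ := List.mem_map.mp hx
      exact (IsLocalization.AtPrime.to_map_mem_maximal_iff B Q z).mpr (h1 z hz)
    · rw [IsLocalization.AtPrime.ringKrullDim_eq_height Q B, List.length_map]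
      exact h3
  have hle : (maximalIdeal A).map C ≤ Q := by rw [Ideal.map_le_iff_le_comap, hover]
  rcases eq_or_ne Q ((maximalIdeal A).map C) with h | h
  · apply key (xs.map C) hmem hxr'
    have : Q.height = (maximalIdeal A).height := by rw [h, Polynomial.height_map_C]
    rw [this, IsLocalRing.maximalIdeal_height_eq_ringKrullDim, List.length_map, hxd]
  · obtain ⟨g, hgQ, hg⟩ := SetLike.exists_of_lt (lt_of_le_of_ne hle h.symm)
    apply key (xs.map C ++ [g])
    · intro y hy
      rcases List.mem_append.mp hy with h | h
      · exact hmem y h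
      · rw [List.mem_singleton.mp h]; exact hgQ
    · rw [isWeaklyRegular_append_iff]
      refine ⟨hxr', ?_⟩
      rw [isWeaklyRegular_singleton_iff, isSMulRegular_quotient_iff_mem_of_smul_mem]
      intro z hz
      have e : (Ideal.ofList (xs.map C) • ⊤ : Submodule A[X] A[X]) = (Ideal.ofList xs).map C := by
        rw [Ideal.map_ofList]; simp
      rw [e] at hz ⊢
      exact poly_regular _ g hg z hz
    · have := Ideal.height_le_ringKrullDim_of_ne_top hQ.ne_top
      rw [Polynomial.ringKrullDim_of_isNoetherianRing, ← hxd] at this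
      simpa using this

/-- Descent of the Cohen-Macaulay property along a flat local map with `𝔪_A C = 𝔪_C`. -/
lemma IsCMLocalRing.descend {A : Type u} {C : Type v} [CommRing A] [IsNoetherianRing A]
    [IsLocalRing A] [CommRing C] [IsNoetherianRing C] [IsLocalRing C] [Algebra A C]
    [Module.Flat A C] [IsLocalHom (algebraMap A C)]
    (hm : maximalIdeal C ≤ (maximalIdeal A).map (algebraMap A C)) (hCM : IsCMLocalRing C) :
    IsCMLocalRing A := by
  obtain ⟨xs, hx, hxr, hxd⟩ := isCMLocalRing_iff_list.mp hCM
  obtain ⟨zs, h1, h2, Q, hQ, hle⟩ := exists_maximal_regular (maximalIdeal A) le_rfl [] (by simp)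
    (by simp)
  rw [List.nil_append] at h2 hQ
  have hff : Module.FaithfullyFlat A C := Module.FaithfullyFlat.of_flat_of_isLocalHom
  obtain ⟨hp, n, hn⟩ := isAssociatedPrime_iff.mp hQ
  obtain ⟨p, rfl⟩ := Submodule.Quotient.mk_surjective _ n
  have hmem : ∀ x, x * p ∈ Ideal.ofList zs ↔ x ∈ Q := by
    intro x
    rw [hn, Submodule.mem_colon_singleton, Submodule.mem_bot, ← Submodule.Quotient.mk_smul,
      Submodule.Quotient.mk_eq_zero]
    simp
  have hzr : IsWeaklyRegular C (zs.map (algebraMap A C)) := h2.of_flat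
  refine isCMLocalRing_of_le zs h1 h2 ?_
  have hdimAC : ringKrullDim A ≤ ringKrullDim C := by
    have : (maximalIdeal C).LiesOver (maximalIdeal A) :=
      ⟨(IsLocalRing.maximalIdeal_comap (algebraMap A C)).symm⟩
    rw [← IsLocalRing.maximalIdeal_height_eq_ringKrullDim,
      ← IsLocalRing.maximalIdeal_height_eq_ringKrullDim,
      Ideal.height_eq_height_add_of_liesOver_of_hasGoingDown (maximalIdeal A) (maximalIdeal C)]
    exact WithBot.coe_le_coe.mpr le_self_add
  refine hdimAC.trans ?_
  rw [← hxd]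
  by_contra hlt
  rw [not_le] at hlt
  have hlt' : (zs.map (algebraMap A C)).length < xs.length := by
    rw [List.length_map]; exact_mod_cast hlt
  have := mem_ofList_of_pow_mul_mem xs _ hxr hzr hlt' (algebraMap A C p)
    (fun x hxx => ⟨1, by
      rw [pow_one]
      have h3 := hm (hx x hxx)
      rw [← Ideal.map_ofList]
      clear hxx
      refine Submodule.span_induction (p := fun x _ => x * algebraMap A C p ∈ _) ?_ ?_ ?_ ?_ h3
      · rintro _ ⟨y, hy, rfl⟩
        rw [← map_mul]
        exact Ideal.mem_map_of_mem _ ((hmem y).mpr (hle hy))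
      · simp
      · intro x y _ _ hx hy
        rw [add_mul]; exact Ideal.add_mem _ hx hy
      · intro c x _ hx
        rw [smul_eq_mul, mul_assoc]; exact Ideal.mul_mem_left _ _ hx⟩)
  apply hp.ne_top
  rw [Ideal.eq_top_iff_one, ← hmem, one_mul]
  rw [← Ideal.map_ofList] at this
  rw [← Ideal.comap_map_eq_self_of_faithfullyFlat (B := C) (Ideal.ofList zs)]
  exact this

/-! ### Laurent polynomial extensions -/

attribute [local instance] Polynomial.algebra Polynomial.isLocalization in
lemma IsCMLocalRing.polynomial_global {S : Type u} [CommRing S] [IsNoetherianRing S]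
    (Q : Ideal S[X]) [hQ : Q.IsPrime] (p : Ideal S) [p.IsPrime] (hp : Q.comap C = p)
    (h : IsCMLocalRing (Localization.AtPrime p)) :
    IsCMLocalRing (Localization.AtPrime Q) := by
  let A := Localization.AtPrime p
  have disj : Disjoint (p.primeCompl.map C : Set S[X]) Q := by
    refine Set.disjoint_left.mpr fun a ⟨b, hb⟩ ha ↦ hb.1 ?_
    rw [SetLike.mem_coe, ← hp, Ideal.mem_comap]
    rw [hb.2]; exact ha
  let Q' : Ideal A[X] := Q.map (algebraMap S[X] A[X])
  have eq : Q'.comap (algebraMap S[X] A[X]) = Q :=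
    IsLocalization.under_map_of_isPrime_disjoint _ A[X] hQ disj
  have hQ' : Q'.IsPrime := IsLocalization.isPrime_of_isPrime_disjoint (p.primeCompl.map C) _ _ hQ disj
  have hcomm : ∀ x : S, algebraMap S[X] A[X] (C x) = C (algebraMap S A x) := by
    intro x
    simp [Polynomial.algebraMap_def]
  have hover : Q'.comap C = maximalIdeal A := by
    have : (Q'.comap C).comap (algebraMap S A) = p := by
      refine Eq.trans ?_ hp
      ext x
      rw [Ideal.mem_comap, Ideal.mem_comap, ← hcomm, ← Ideal.mem_comap, eq, Ideal.mem_comap]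
    have h2 := IsLocalization.map_under p.primeCompl A (Q'.comap C)
    change ((Q'.comap C).comap (algebraMap S A)).map (algebraMap S A) = _ at h2
    rw [this, Localization.AtPrime.map_eq_maximalIdeal] at h2
    exact h2.symm
  have hB : IsCMLocalRing (Localization.AtPrime Q') :=
    IsCMLocalRing.polynomial h Q' hover (Localization.AtPrime Q')
  have : IsLocalization.AtPrime (Localization.AtPrime Q') (Q'.comap (algebraMap S[X] A[X])) :=
    IsLocalization.isLocalization_isLocalization_atPrime_isLocalization (p.primeCompl.map C) _ Q'
  have : IsLocalization.AtPrime (Localization.AtPrime Q') Q := by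
    simpa only [eq] using this
  exact IsCMLocalRing.of_ringEquiv
    (IsLocalization.algEquiv Q.primeCompl (Localization.AtPrime Q')
      (Localization.AtPrime Q)).toRingEquiv hB

open LaurentPolynomial in
lemma IsCMLocalRing.laurent {S : Type u} [CommRing S] [IsNoetherianRing S]
    (Q : Ideal S[T;T⁻¹]) [hQ : Q.IsPrime] (p : Ideal S) [p.IsPrime]
    (hp : Q.comap LaurentPolynomial.C = p)
    (h : IsCMLocalRing (Localization.AtPrime p)) :
    IsCMLocalRing (Localization.AtPrime Q) := by
  let Q0 : Ideal S[X] := Q.comap (algebraMap S[X] S[T;T⁻¹])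
  have h0 : IsCMLocalRing (Localization.AtPrime Q0) := by
    refine IsCMLocalRing.polynomial_global Q0 p ?_ h
    rw [← hp]
    ext x
    simp [Q0, Ideal.mem_comap]
  have : IsLocalization.AtPrime (Localization.AtPrime Q) Q0 :=
    IsLocalization.isLocalization_isLocalization_atPrime_isLocalization
      (Submonoid.powers (X : S[X])) _ Q
  exact IsCMLocalRing.of_ringEquiv
    (IsLocalization.algEquiv Q0.primeCompl (Localization.AtPrime Q0)
      (Localization.AtPrime Q)).toRingEquiv h0


open LaurentPolynomial in
/-- The extension of `P` to the Laurent polynomial ring: all coefficients in `P`. -/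
noncomputable def laurentExt {S : Type u} [CommRing S] (P : Ideal S) : Ideal S[T;T⁻¹] :=
  RingHom.ker (AddMonoidAlgebra.mapRingHom ℤ (Ideal.Quotient.mk P))

open LaurentPolynomial in
lemma mem_laurentExt {S : Type u} [CommRing S] (P : Ideal S) (f : S[T;T⁻¹]) :
    f ∈ laurentExt P ↔ ∀ n, f.coeff n ∈ P := by
  rw [laurentExt, RingHom.mem_ker, AddMonoidAlgebra.ext_iff, Finsupp.ext_iff]
  refine forall_congr' fun n => ?_
  rw [AddMonoidAlgebra.coeff_mapRingHom]
  simp [Ideal.Quotient.eq_zero_iff_mem]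

instance laurentExt_isPrime {S : Type u} [CommRing S] (P : Ideal S) [P.IsPrime] :
    (laurentExt P).IsPrime := by
  have : IsDomain (AddMonoidAlgebra (S ⧸ P) ℤ) := NoZeroDivisors.to_isDomain _
  exact RingHom.ker_isPrime _

open LaurentPolynomial in
lemma laurentExt_le {S : Type u} [CommRing S] (P : Ideal S) :
    laurentExt P ≤ P.map LaurentPolynomial.C := by
  intro f hf
  rw [mem_laurentExt] at hf
  have : f = ∑ n ∈ f.coeff.support, LaurentPolynomial.C (f.coeff n) * LaurentPolynomial.T n := by
    simp_rw [← single_eq_C_mul_T]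
    exact (AddMonoidAlgebra.sum_coeff_single f).symm
  rw [this]
  exact Ideal.sum_mem _ fun n _ => Ideal.mul_mem_right _ _ (Ideal.mem_map_of_mem _ (hf n))

open LaurentPolynomial in
lemma laurentExt_comap {S : Type u} [CommRing S] (P : Ideal S) :
    P = (laurentExt P).comap LaurentPolynomial.C := by
  ext x
  rw [Ideal.mem_comap, mem_laurentExt]
  constructor
  · intro hx n
    change (AddMonoidAlgebra.single (0:ℤ) x).coeff n ∈ P
    rw [AddMonoidAlgebra.coeff_single, Finsupp.single_apply]
    split_ifs
    · exact hx
    · exact P.zero_mem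
  · intro h
    have := h 0
    change (AddMonoidAlgebra.single (0:ℤ) x).coeff 0 ∈ P at this
    simpa using this

open LaurentPolynomial in
/-- Flat descent from `P[T, T⁻¹]` to `P`. -/
lemma IsCMLocalRing.of_laurentExt {S : Type u} [CommRing S] [IsNoetherianRing S]
    (P : Ideal S) [P.IsPrime]
    (h : IsCMLocalRing (Localization.AtPrime (laurentExt P))) :
    IsCMLocalRing (Localization.AtPrime P) := by
  have : IsNoetherianRing S[T;T⁻¹] :=
    IsLocalization.isNoetherianRing (Submonoid.powers (X : S[X])) _ inferInstance
  let φ := Localization.localRingHom P (laurentExt P) LaurentPolynomial.C (laurentExt_comap P)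
  let := φ.toAlgebra
  have hfl : Module.Flat (Localization.AtPrime P) (Localization.AtPrime (laurentExt P)) := by
    refine RingHom.Flat.localRingHom (f := LaurentPolynomial.C) ?_ _ _ _
    change RingHom.Flat (algebraMap S S[T;T⁻¹])
    rw [RingHom.flat_algebraMap_iff]
    exact Module.Flat.of_free
  have : IsLocalHom (algebraMap (Localization.AtPrime P) (Localization.AtPrime (laurentExt P))) :=
    Localization.isLocalHom_localRingHom P _ _ (laurentExt_comap P)
  refine IsCMLocalRing.descend (C := Localization.AtPrime (laurentExt P)) ?_ h
  rw [← Localization.AtPrime.map_eq_maximalIdeal, ← Localization.AtPrime.map_eq_maximalIdeal,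
    Ideal.map_map]
  refine (Ideal.map_mono (laurentExt_le P)).trans ?_
  rw [Ideal.map_map]
  apply le_of_eq
  congr 1
  ext x
  change _ = φ (algebraMap _ _ x)
  rw [Localization.localRingHom_to_map]
  rfl

open LaurentPolynomial in
/-- Cohen–Macaulayness transported along an automorphism `θ` of the Laurent polynomial ring:
`θ⁻¹(P[T, T⁻¹])` is a prime lying over `P'`, so it inherits the property from `P'`, and `P` gets it
from `P[T, T⁻¹]` by flat descent. -/
lemma IsCMLocalRing.torus {S : Type u} [CommRing S] [IsNoetherianRing S]
    (θ : S[T;T⁻¹] ≃+* S[T;T⁻¹]) (P P' : Ideal S) [P.IsPrime] [P'.IsPrime]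
    (hPP' : ∀ s, s ∈ P' ↔ ∀ n, (θ (LaurentPolynomial.C s)).coeff n ∈ P)
    (h : IsCMLocalRing (Localization.AtPrime P')) :
    IsCMLocalRing (Localization.AtPrime P) := by
  apply IsCMLocalRing.of_laurentExt
  let Q := (laurentExt P).comap (θ : S[T;T⁻¹] →+* S[T;T⁻¹])
  have hQ : IsCMLocalRing (Localization.AtPrime Q) := by
    refine IsCMLocalRing.laurent Q P' ?_ h
    ext x
    rw [hPP', Ideal.mem_comap, Ideal.mem_comap, mem_laurentExt]
    rfl
  refine IsCMLocalRing.of_ringEquiv (IsLocalization.ringEquivOfRingEquiv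
    (M := Q.primeCompl) (T := (laurentExt P).primeCompl) (Localization.AtPrime Q)
    (Localization.AtPrime (laurentExt P)) θ ?_) hQ
  ext x
  constructor
  · rintro ⟨y, hy, rfl⟩
    exact hy
  · intro hx
    refine ⟨θ.symm x, ?_, by simp⟩
    change ¬ (θ (θ.symm x) ∈ laurentExt P)
    simpa using hx

/-! ### Integral elements of monoid algebras -/

section Homogeneity

variable {R : Type u} [CommRing R] {Γ : Type v} [AddCommMonoid Γ]

/-- The `R`-algebra map `R[Γ] → R[Γ][X]` recording the weight `w` in the exponent of `X`. -/
noncomputable def weightHom (w : Γ →+ ℕ) :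
    AddMonoidAlgebra R Γ →ₐ[R] (AddMonoidAlgebra R Γ)[X] :=
  AddMonoidAlgebra.lift R _ Γ
    { toFun := fun γ => monomial (w γ.toAdd) (AddMonoidAlgebra.single γ.toAdd (1 : R))
      map_one' := by simp; rfl
      map_mul' := fun x y => by
        simp [monomial_mul_monomial, AddMonoidAlgebra.single_mul_single] }

lemma weightHom_single (w : Γ →+ ℕ) (γ : Γ) (c : R) :
    weightHom w (AddMonoidAlgebra.single γ c) = monomial (w γ) (AddMonoidAlgebra.single γ c) := by
  rw [weightHom, AddMonoidAlgebra.lift_single]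
  change c • monomial (w γ) (AddMonoidAlgebra.single γ (1 : R)) = _
  rw [smul_monomial]
  congr 1
  simp

lemma weightHom_coeff (w : Γ →+ ℕ) (f : AddMonoidAlgebra R Γ) (n : ℕ) (γ : Γ) :
    ((weightHom w f).coeff n).coeff γ = if w γ = n then f.coeff γ else 0 := by
  classical
  induction f using AddMonoidAlgebra.induction_linear with
  | zero => simp
  | add f g hf hg =>
    rw [map_add, coeff_add, AddMonoidAlgebra.coeff_add, AddMonoidAlgebra.coeff_add,
      Finsupp.add_apply, Finsupp.add_apply, hf, hg]
    split_ifs <;> simp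
  | single δ c =>
    rw [weightHom_single, coeff_monomial, AddMonoidAlgebra.coeff_single, Finsupp.single_apply]
    by_cases h : δ = γ
    · subst h
      by_cases h' : w δ = n <;> simp [h']
    · simp only [h, if_false, ite_self]
      split_ifs <;> simp [h]

attribute [local instance] Polynomial.algebra in
/-- Weight components of elements integral over a subalgebra generated by homogeneous elements
are integral over it. -/
lemma isIntegral_weight_component (w : Γ →+ ℕ) (G : Set (AddMonoidAlgebra R Γ))
    (hG : ∀ g ∈ G, ∃ γ a, g = AddMonoidAlgebra.single γ a) (f : AddMonoidAlgebra R Γ)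
    (hf : IsIntegral (Algebra.adjoin R G) f) (n : ℕ) :
    IsIntegral (Algebra.adjoin R G) ((weightHom w f).coeff n) := by
  let B := Algebra.adjoin R G
  let m : B[X] →ₐ[R] (AddMonoidAlgebra R Γ)[X] := Polynomial.mapAlgHom B.val
  have hm : Function.Injective m := Polynomial.map_injective _ Subtype.val_injective
  have hr : ∀ x : B, (weightHom w).comp B.val x ∈ m.range := by
    have : B ≤ m.range.comap (weightHom w) := by
      refine Algebra.adjoin_le fun g hg => ?_
      obtain ⟨γ, a, rfl⟩ := hG g hg
      refine ⟨monomial (w γ) ⟨_, Algebra.subset_adjoin hg⟩, ?_⟩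
      change Polynomial.map _ _ = weightHom w _
      rw [weightHom_single, Polynomial.map_monomial]
      rfl
    exact fun x => this x.2
  let ψ : B →ₐ[R] B[X] := ((AlgEquiv.ofInjective m hm).symm : m.range →ₐ[R] B[X]).comp
    (((weightHom w).comp B.val).codRestrict m.range hr)
  have hψ : ∀ x : B, m (ψ x) = weightHom w (x : AddMonoidAlgebra R Γ) := by
    intro x
    have := AlgEquiv.apply_symm_apply (AlgEquiv.ofInjective m hm)
      (((weightHom w).comp B.val).codRestrict m.range hr x)
    exact congrArg Subtype.val this
  have key : IsIntegral B[X] (weightHom w f) := by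
    obtain ⟨p, hp, hpf⟩ := hf
    refine ⟨p.map (ψ : B →+* B[X]), hp.map _, ?_⟩
    rw [eval₂_map]
    have : (algebraMap B[X] (AddMonoidAlgebra R Γ)[X]).comp (ψ : B →+* B[X]) =
        ((weightHom w : AddMonoidAlgebra R Γ →ₐ[R] _) : AddMonoidAlgebra R Γ →+* _).comp
          (algebraMap B (AddMonoidAlgebra R Γ)) := by
      ext1 x
      exact hψ x
    rw [this]
    have h := Polynomial.hom_eval₂ p (algebraMap B (AddMonoidAlgebra R Γ))
      ((weightHom w : AddMonoidAlgebra R Γ →ₐ[R] (AddMonoidAlgebra R Γ)[X]) :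
        AddMonoidAlgebra R Γ →+* (AddMonoidAlgebra R Γ)[X]) f
    rw [show eval₂ (algebraMap B (AddMonoidAlgebra R Γ)) f p = 0 from hpf, map_zero] at h
    exact h.symm
  exact Polynomial.isIntegral_iff_isIntegral_coeff.mp key n

/-- The ideal of coefficients `c` with `c·t^γ ∈ B`. -/
def compIdeal (B : Subalgebra R (AddMonoidAlgebra R Γ)) (γ : Γ) : Ideal R where
  carrier := {c | AddMonoidAlgebra.single γ c ∈ B}
  add_mem' := fun {x y} hx hy => by
    change AddMonoidAlgebra.single γ (x + y) ∈ B
    rw [AddMonoidAlgebra.single_add]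
    exact B.add_mem hx hy
  zero_mem' := by
    change AddMonoidAlgebra.single γ (0 : R) ∈ B
    rw [AddMonoidAlgebra.single_zero]
    exact B.zero_mem
  smul_mem' := fun c {x} hx => by
    change AddMonoidAlgebra.single γ (c * x) ∈ B
    rw [← AddMonoidAlgebra.smul_single']
    exact B.smul_mem hx c

lemma mem_compIdeal {B : Subalgebra R (AddMonoidAlgebra R Γ)} {γ : Γ} {c : R} :
    c ∈ compIdeal B γ ↔ AddMonoidAlgebra.single γ c ∈ B := Iff.rfl

lemma compIdeal_mul_le (B : Subalgebra R (AddMonoidAlgebra R Γ)) (γ δ : Γ) :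
    compIdeal B γ * compIdeal B δ ≤ compIdeal B (γ + δ) := by
  rw [Ideal.mul_le]
  intro r hr s hs
  rw [mem_compIdeal, ← AddMonoidAlgebra.single_mul_single]
  exact B.mul_mem hr hs

lemma compIdeal_zero (B : Subalgebra R (AddMonoidAlgebra R Γ)) : compIdeal B 0 = ⊤ := by
  rw [Ideal.eq_top_iff_one, mem_compIdeal]
  exact B.one_mem

lemma compIdeal_pow_le (B : Subalgebra R (AddMonoidAlgebra R Γ)) (γ : Γ) (n : ℕ) :
    compIdeal B γ ^ n ≤ compIdeal B (n • γ) := by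
  induction n with
  | zero => simp [compIdeal_zero]
  | succ n ih =>
    rw [pow_succ, succ_nsmul]
    exact (Ideal.mul_mono_left ih).trans (compIdeal_mul_le B _ _)

/-- The Rees algebra `⊕ K_γ t^γ` of a multiplicative family of ideals. -/
def filtAlg (K : Γ → Ideal R) (h0 : K 0 = ⊤) (hK : ∀ γ δ, K γ * K δ ≤ K (γ + δ)) :
    Subalgebra R (AddMonoidAlgebra R Γ) where
  carrier := {f | ∀ γ, f.coeff γ ∈ K γ}
  add_mem' := fun hf hg γ => (K γ).add_mem (hf γ) (hg γ)
  mul_mem' := fun {f g} hf hg γ => by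
    classical
    rw [AddMonoidAlgebra.coeff_mul]
    refine Ideal.sum_mem _ fun i _ => Ideal.sum_mem _ fun j _ => ?_
    dsimp only
    split_ifs with h
    · rw [← h]
      exact hK _ _ (Ideal.mul_mem_mul (hf i) (hg j))
    · exact Ideal.zero_mem _
  algebraMap_mem' := fun r γ => by
    classical
    change (AddMonoidAlgebra.single (0 : Γ) r).coeff γ ∈ K γ
    rw [AddMonoidAlgebra.coeff_single, Finsupp.single_apply]
    split_ifs with h
    · rw [← h, h0]; trivial
    · exact Ideal.zero_mem _

lemma mem_of_forall_single (B : Subalgebra R (AddMonoidAlgebra R Γ)) (f : AddMonoidAlgebra R Γ)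
    (h : ∀ γ, AddMonoidAlgebra.single γ (f.coeff γ) ∈ B) : f ∈ B := by
  rw [← AddMonoidAlgebra.sum_coeff_single f]
  exact B.sum_mem fun γ _ => h γ

end Homogeneity

section Integral

variable {R : Type u} [CommRing R] {Γ : Type v} [AddCancelCommMonoid Γ]

/-- Comparison of integral elements: `c t^γ` is integral over the Rees algebra of `K` exactly
when `c` is integral over the ideal `K γ`. -/
lemma isIntegral_single_iff (B : Subalgebra R (AddMonoidAlgebra R Γ)) (K : Γ → Ideal R)
    (hB : ∀ f, f ∈ B ↔ ∀ γ, f.coeff γ ∈ K γ) (hK : ∀ (n : ℕ) γ, K (n • γ) = K γ ^ n)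
    (γ : Γ) (c : R) :
    IsIntegral B (AddMonoidAlgebra.single γ c) ↔ IsIntegralOverIdeal (K γ) c := by
  classical
  have hs : ∀ δ x, AddMonoidAlgebra.single δ x ∈ B ↔ x ∈ K δ := by
    intro δ x
    rw [hB]
    constructor
    · intro h; simpa using h δ
    · intro h ε
      rw [AddMonoidAlgebra.coeff_single, Finsupp.single_apply]
      split_ifs with h'
      · rwa [← h']
      · exact Ideal.zero_mem _
  constructor
  · rintro ⟨p0, hp0, hpf0⟩
    rcases subsingleton_or_nontrivial R with hR | hR
    · exact ⟨1, one_pos, fun _ => 0, fun _ => Ideal.zero_mem _, Subsingleton.elim _ _⟩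
    have hntB : Nontrivial B := inferInstance
    obtain ⟨p, hp, hpf, hn⟩ : ∃ p : B[X], p.Monic ∧
        eval₂ (algebraMap B (AddMonoidAlgebra R Γ)) (AddMonoidAlgebra.single γ c) p = 0 ∧
        0 < p.natDegree := by
      refine ⟨p0 * X, hp0.mul monic_X, ?_, ?_⟩
      · rw [eval₂_mul, hpf0, zero_mul]
      · rw [hp0.natDegree_mul monic_X]; simp
    set n := p.natDegree with hnd
    refine ⟨n, hn, fun i => if i ≤ n then ((p.coeff (n - i) : AddMonoidAlgebra R Γ)).coeff (i • γ)
      else 0, ?_, ?_⟩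
    · intro i
      dsimp only
      split_ifs
      · rw [← hK]
        exact (hB _).1 (p.coeff (n - i)).2 _
      · exact Ideal.zero_mem _
    · have hcoef : ∀ i, i ≤ n → ((algebraMap B (AddMonoidAlgebra R Γ) (p.coeff i)) *
          AddMonoidAlgebra.single γ c ^ i).coeff (n • γ) =
          ((p.coeff i : AddMonoidAlgebra R Γ)).coeff ((n - i) • γ) * c ^ i := by
        intro i hi
        rw [AddMonoidAlgebra.single_pow]
        apply AddMonoidAlgebra.coeff_mul_single_eq_coeff_mul
        intro m' _
        have : n • γ = (n - i) • γ + i • γ := by rw [← add_nsmul, Nat.sub_add_cancel hi]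
        rw [this]
        exact add_left_inj _
      have h1 := congrArg (fun f => f.coeff (n • γ)) hpf
      rw [eval₂_eq_sum_range, AddMonoidAlgebra.coeff_sum, Finsupp.finsetSum_apply,
        ← hnd, Finset.sum_congr rfl fun i hi =>
          hcoef i (Nat.lt_succ_iff.1 (Finset.mem_range.1 hi)), Finset.sum_range_succ] at h1
      have h2 : p.coeff n = 1 := hp.coeff_natDegree
      rw [h2] at h1
      rw [← Finset.sum_range_reflect] at h1
      rw [add_comm]
      convert h1 using 2
      · refine Finset.sum_congr rfl fun i hi => ?_
        rw [Finset.mem_range] at hi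
        dsimp only
        rw [if_pos (by omega : i + 1 ≤ n), show n - 1 - i = n - (i+1) by omega,
          show n - (n - (i + 1)) = i + 1 by omega]
      · rw [Nat.sub_self, zero_nsmul]
        simp [AddMonoidAlgebra.one_def]
      · simp
  · rintro ⟨n, hn, d, hd, he⟩
    let q : B[X] := X ^ n + ∑ i ∈ (Finset.range n).attach,
      C (⟨AddMonoidAlgebra.single ((i.1 + 1) • γ) (d (i.1 + 1)), (hs _ _).2 (by
        rw [hK]; exact hd _)⟩ : B) * X ^ (n - (i.1 + 1))
    refine ⟨q, ?_, ?_⟩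
    · apply monic_X_pow_add
      refine lt_of_le_of_lt (degree_sum_le _ _) ?_
      rw [Finset.sup_lt_iff (by exact WithBot.bot_lt_coe n)]
      intro i _
      refine lt_of_le_of_lt (degree_C_mul_X_pow_le _ _) ?_
      have := Finset.mem_range.1 i.2
      exact_mod_cast (by omega : n - (i.1 + 1) < n)
    · simp only [q, eval₂_add, eval₂_finsetSum, eval₂_mul, eval₂_C, eval₂_pow, eval₂_X]
      rw [AddMonoidAlgebra.single_pow]
      have : ∀ i : {x // x ∈ Finset.range n}, (algebraMap B (AddMonoidAlgebra R Γ))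
          (⟨AddMonoidAlgebra.single ((i.1 + 1) • γ) (d (i.1 + 1)), (hs _ _).2 (by
            rw [hK]; exact hd _)⟩ : B) * AddMonoidAlgebra.single γ c ^ (n - (i.1 + 1)) =
          AddMonoidAlgebra.single (n • γ) (d (i.1 + 1) * c ^ (n - (i.1 + 1))) := by
        intro i
        have := Finset.mem_range.1 i.2
        change AddMonoidAlgebra.single ((i.1 + 1) • γ) (d (i.1 + 1)) * _ = _
        rw [AddMonoidAlgebra.single_pow, AddMonoidAlgebra.single_mul_single, ← add_nsmul,
          show i.1 + 1 + (n - (i.1 + 1)) = n by omega]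
      rw [Finset.sum_congr rfl fun i _ => this i,
        Finset.sum_attach (Finset.range n) (fun i => AddMonoidAlgebra.single (n • γ)
          (d (i + 1) * c ^ (n - (i + 1))))]
      have h3 := map_sum (AddMonoidAlgebra.singleAddHom (R := R) (n • γ))
        (fun i => d (i + 1) * c ^ (n - (i + 1))) (Finset.range n)
      change AddMonoidAlgebra.single (n • γ) _ = ∑ i ∈ _, AddMonoidAlgebra.single (n • γ) _ at h3
      rw [← h3, ← AddMonoidAlgebra.single_add, he, AddMonoidAlgebra.single_zero]

end Integral

/-! ### Components of the normal Rees rings -/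

section Concrete

variable {R : Type u} [CommRing R] (I J : Ideal R)

lemma mem_rees1 (f : Amb1 R) : f ∈ rees1 I ↔ ∀ n : ℕ, f.coeff n ∈ I ^ n := by
  classical
  constructor
  · intro hf
    have : rees1 I ≤ filtAlg (fun n : ℕ => I ^ n) (by simp) (fun m n => by
        rw [pow_add]) := by
      refine Algebra.adjoin_le ?_
      rintro _ ⟨a, ha, rfl⟩ n
      rw [AddMonoidAlgebra.coeff_single, Finsupp.single_apply]
      split_ifs with h
      · subst h; simpa using ha
      · exact Ideal.zero_mem _
    exact this hf
  · intro hf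
    refine mem_of_forall_single _ _ fun n => ?_
    have h1 : I ≤ compIdeal (rees1 I) 1 := fun a ha => Algebra.subset_adjoin ⟨a, ha, rfl⟩
    have h2 := (Ideal.pow_right_mono h1 n).trans (compIdeal_pow_le _ _ _) (hf n)
    rwa [smul_eq_mul, mul_one] at h2

lemma mem_rees2 (f : Amb2 R) : f ∈ rees2 I J ↔ ∀ γ : ℕ × ℕ, f.coeff γ ∈ I ^ γ.1 * J ^ γ.2 := by
  classical
  constructor
  · intro hf
    have : rees2 I J ≤ filtAlg (fun γ : ℕ × ℕ => I ^ γ.1 * J ^ γ.2) (by simp) (fun m n => by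
        apply le_of_eq
        simp only [Prod.fst_add, Prod.snd_add, pow_add]
        ring) := by
      refine Algebra.adjoin_le ?_
      rintro _ (⟨a, ha, rfl⟩ | ⟨a, ha, rfl⟩) n
      all_goals
        rw [AddMonoidAlgebra.coeff_single, Finsupp.single_apply]
        split_ifs with h
        · subst h; simpa using ha
        · exact Ideal.zero_mem _
    exact this hf
  · intro hf
    refine mem_of_forall_single _ _ fun n => ?_
    have h1 : I ≤ compIdeal (rees2 I J) (1, 0) :=
      fun a ha => Algebra.subset_adjoin (Or.inl ⟨a, ha, rfl⟩)
    have h2 : J ≤ compIdeal (rees2 I J) (0, 1) :=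
      fun a ha => Algebra.subset_adjoin (Or.inr ⟨a, ha, rfl⟩)
    have h3 := (Ideal.pow_right_mono h1 n.1).trans (compIdeal_pow_le _ _ _)
    have h4 := (Ideal.pow_right_mono h2 n.2).trans (compIdeal_pow_le _ _ _)
    have h5 := ((Ideal.mul_mono h3 h4).trans (compIdeal_mul_le _ _ _)) (hf n)
    simpa [mem_compIdeal] using h5

lemma mem_reesBar1_iff (f : Amb1 R) : f ∈ reesBar1 I ↔ IsIntegral (rees1 I) f := Iff.rfl

lemma mem_reesBar2_iff (f : Amb2 R) : f ∈ reesBar2 I J ↔ IsIntegral (rees2 I J) f := Iff.rfl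

lemma single_mem_reesBar1 (n : ℕ) (c : R) :
    AddMonoidAlgebra.single n c ∈ reesBar1 I ↔ IsIntegralOverIdeal (I ^ n) c :=
  isIntegral_single_iff _ (fun n => I ^ n) (mem_rees1 I)
    (fun m n => by rw [smul_eq_mul, mul_comm, pow_mul]) n c

lemma single_mem_reesBar2 (γ : ℕ × ℕ) (c : R) :
    AddMonoidAlgebra.single γ c ∈ reesBar2 I J ↔ IsIntegralOverIdeal (I ^ γ.1 * J ^ γ.2) c :=
  isIntegral_single_iff _ (fun γ : ℕ × ℕ => I ^ γ.1 * J ^ γ.2) (mem_rees2 I J)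
    (fun m n => by
      simp only [Prod.smul_fst, Prod.smul_snd, smul_eq_mul, mul_pow, ← pow_mul]
      rw [mul_comm m, mul_comm m]) γ c

lemma mem_IJbar (r s : ℤ) (c : R) :
    c ∈ IJbar I J r s ↔ IsIntegralOverIdeal (I ^ r.toNat * J ^ s.toNat) c := by
  constructor
  · intro h
    have : IJbar I J r s ≤ compIdeal (reesBar2 I J) (r.toNat, s.toNat) :=
      Ideal.span_le.2 fun x hx => (single_mem_reesBar2 I J (r.toNat, s.toNat) x).2 hx
    exact (single_mem_reesBar2 I J (r.toNat, s.toNat) c).1 (this h)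
  · exact fun h => Ideal.subset_span h

lemma single_mem_reesBar2' (r s : ℕ) (c : R) :
    AddMonoidAlgebra.single (r, s) c ∈ reesBar2 I J ↔ c ∈ IJbar I J r s := by
  rw [single_mem_reesBar2, mem_IJbar]; simp

lemma single_mem_reesBar1' (n : ℕ) (c : R) :
    AddMonoidAlgebra.single n c ∈ reesBar1 I ↔ c ∈ IJbar I J n 0 := by
  rw [single_mem_reesBar1, mem_IJbar]; simp

lemma IJbar_swap (r s : ℤ) : IJbar I J r s = IJbar J I s r := by
  rw [IJbar, IJbar, IJ, IJ, mul_comm]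

lemma mem_reesBar2 (f : Amb2 R) :
    f ∈ reesBar2 I J ↔ ∀ γ : ℕ × ℕ, f.coeff γ ∈ IJbar I J γ.1 γ.2 := by
  classical
  constructor
  · intro hf γ
    have hG : ∀ g ∈ ({x | ∃ a ∈ I, x = AddMonoidAlgebra.single (1, 0) a} ∪
      {x | ∃ b ∈ J, x = AddMonoidAlgebra.single (0, 1) b} : Set (Amb2 R)),
        ∃ γ a, g = AddMonoidAlgebra.single γ a := by
      rintro _ (⟨a, ha, rfl⟩ | ⟨a, ha, rfl⟩)
      · exact ⟨_, _, rfl⟩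
      · exact ⟨_, _, rfl⟩
    have h1 := isIntegral_weight_component (AddMonoidHom.fst ℕ ℕ) _ hG f hf γ.1
    have h2 := isIntegral_weight_component (AddMonoidHom.snd ℕ ℕ) _ hG _ h1 γ.2
    rw [← single_mem_reesBar2']
    refine (congrArg (fun g => g ∈ reesBar2 I J) ?_).mpr h2
    ext δ
    rw [weightHom_coeff, weightHom_coeff, AddMonoidAlgebra.coeff_single, Finsupp.single_apply]
    simp only [AddMonoidHom.coe_fst, AddMonoidHom.coe_snd]
    by_cases h : γ = δ
    · subst h; simp
    · rw [if_neg h]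
      by_cases h3 : δ.2 = γ.2
      · by_cases h4 : δ.1 = γ.1
        · exact absurd (Prod.ext h4.symm h3.symm) h
        · simp [h3, h4]
      · simp [h3]
  · intro h
    exact mem_of_forall_single _ _ fun γ => (single_mem_reesBar2' I J γ.1 γ.2 _).2 (h γ)

lemma mem_reesBar1 (f : Amb1 R) : f ∈ reesBar1 I ↔ ∀ n : ℕ, f.coeff n ∈ IJbar I J n 0 := by
  classical
  constructor
  · intro hf γ
    have hG : ∀ g ∈ ({x | ∃ a ∈ I, x = AddMonoidAlgebra.single 1 a} : Set (Amb1 R)),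
        ∃ γ a, g = AddMonoidAlgebra.single γ a := by
      rintro _ ⟨a, ha, rfl⟩
      exact ⟨_, _, rfl⟩
    have h1 := isIntegral_weight_component (AddMonoidHom.id ℕ) _ hG f hf γ
    rw [← single_mem_reesBar1']
    refine (congrArg (fun g => g ∈ reesBar1 I) ?_).mpr h1
    ext δ
    rw [weightHom_coeff, AddMonoidAlgebra.coeff_single, Finsupp.single_apply]
    simp only [AddMonoidHom.id_apply]
    by_cases h : γ = δ
    · subst h; simp
    · rw [if_neg h, if_neg (Ne.symm h)]
  · intro h
    exact mem_of_forall_single _ _ fun γ => (single_mem_reesBar1' I J γ _).2 (h γ)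

lemma IJbar_mul_le (r s r' s' : ℕ) :
    IJbar I J r s * IJbar I J r' s' ≤ IJbar I J ((r + r' : ℕ)) ((s + s' : ℕ)) := by
  intro x hx
  rw [← single_mem_reesBar2']
  have h : ∀ r s : ℕ, IJbar I J r s = compIdeal (reesBar2 I J) (r, s) := fun r s => by
    ext c; rw [← single_mem_reesBar2']; rfl
  rw [h, h] at hx
  exact compIdeal_mul_le _ _ _ hx

lemma le_IJbar (r s : ℤ) : I ^ r.toNat * J ^ s.toNat ≤ IJbar I J r s := by
  intro x hx
  rw [mem_IJbar]
  refine ⟨1, one_pos, fun i => if i = 1 then -x else 0, ?_, by simp⟩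
  intro i
  dsimp only
  split_ifs with h
  · subst h; rw [pow_one]; exact neg_mem hx
  · exact Ideal.zero_mem _

lemma IsIntegralOverIdeal.mono {K L : Ideal R} (h : K ≤ L) {x : R} (hx : IsIntegralOverIdeal K x) :
    IsIntegralOverIdeal L x := by
  obtain ⟨n, hn, c, hc, he⟩ := hx
  exact ⟨n, hn, c, fun i => Ideal.pow_right_mono h i (hc i), he⟩

lemma IJbar_anti {r s r' s' : ℤ} (hr : r ≤ r') (hs : s ≤ s') : IJbar I J r' s' ≤ IJbar I J r s := by
  intro x hx
  rw [mem_IJbar] at hx ⊢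
  refine hx.mono (Ideal.mul_mono (Ideal.pow_le_pow_right ?_) (Ideal.pow_le_pow_right ?_)) <;> omega

lemma IJbar_zero : IJbar I J 0 0 = ⊤ := by
  rw [eq_top_iff]
  refine le_trans ?_ (le_IJbar I J 0 0)
  simp

lemma IJbar_le_radical (r s : ℤ) : IJbar I J r s ≤ (I ^ r.toNat * J ^ s.toNat).radical := by
  intro x hx
  rw [mem_IJbar] at hx
  obtain ⟨n, hn, c, hc, he⟩ := hx
  refine ⟨n, ?_⟩
  rw [eq_neg_of_add_eq_zero_left he]
  refine neg_mem (Ideal.sum_mem _ fun i hi => Ideal.mul_mem_right _ _ ?_)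
  exact Ideal.pow_le_self (by omega) (hc _)

end Concrete

/-! ### Reduction to the homogeneous maximal ideal -/

section Torus

variable {R : Type u} [CommRing R] {Γ : Type v} [AddCommMonoid Γ]

/-- The shear `(n, γ) ↦ (n + w γ, γ)`. -/
def shear (w : Γ →+ ℤ) : ℤ × Γ ≃+ ℤ × Γ where
  toFun x := (x.1 + w x.2, x.2)
  invFun x := (x.1 - w x.2, x.2)
  left_inv x := by simp
  right_inv x := by simp
  map_add' x y := by
    refine Prod.ext ?_ rfl
    simp only [Prod.fst_add, Prod.snd_add, map_add]
    ring

/-- `S[ℤ] → R[ℤ × Γ]` for a subalgebra `S` of `R[Γ]`. -/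
noncomputable def uncurryHom (S : Subalgebra R (AddMonoidAlgebra R Γ)) :
    AddMonoidAlgebra S ℤ →+* AddMonoidAlgebra R (ℤ × Γ) :=
  ((AddMonoidAlgebra.curryRingEquiv (R := R) (M := ℤ) (N := Γ)).symm : _ →+* _).comp
    (AddMonoidAlgebra.mapRingHom ℤ (S.val : S →+* AddMonoidAlgebra R Γ))

lemma curry_symm_coeff (G : AddMonoidAlgebra (AddMonoidAlgebra R Γ) ℤ) (n : ℤ) (γ : Γ) :
    ((AddMonoidAlgebra.curryRingEquiv (R := R) (M := ℤ) (N := Γ)).symm G).coeff (n, γ) =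
      (G.coeff n).coeff γ := by
  classical
  induction G using AddMonoidAlgebra.induction_linear with
  | zero => simp
  | add f g hf hg => simp [hf, hg]
  | single m f =>
    induction f using AddMonoidAlgebra.induction_linear with
    | zero => simp
    | add f g hf hg =>
      rw [AddMonoidAlgebra.single_add]
      simp only [map_add, AddMonoidAlgebra.coeff_add, Finsupp.add_apply, hf, hg]
    | single δ c =>
      rw [AddMonoidAlgebra.curryRingEquiv_symm_single]
      simp only [AddMonoidAlgebra.coeff_single, Finsupp.single_apply, Prod.mk.injEq]
      by_cases h : m = n
      · simp [h, Finsupp.single_apply]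
      · simp [h]

lemma uncurryHom_coeff (S : Subalgebra R (AddMonoidAlgebra R Γ)) (G : AddMonoidAlgebra S ℤ)
    (n : ℤ) (γ : Γ) :
    (uncurryHom S G).coeff (n, γ) = ((G.coeff n : S) : AddMonoidAlgebra R Γ).coeff γ := by
  change ((AddMonoidAlgebra.curryRingEquiv (R := R) (M := ℤ) (N := Γ)).symm _).coeff (n, γ) = _
  rw [curry_symm_coeff, AddMonoidAlgebra.coeff_mapRingHom]
  rfl

lemma uncurryHom_injective (S : Subalgebra R (AddMonoidAlgebra R Γ)) :
    Function.Injective (uncurryHom S) := by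
  intro x y h
  ext n γ
  rw [← uncurryHom_coeff, ← uncurryHom_coeff, h]

variable {S : Subalgebra R (AddMonoidAlgebra R Γ)} {F : Γ → Ideal R}

lemma mem_range_uncurryHom (hS : ∀ f, f ∈ S ↔ ∀ γ, f.coeff γ ∈ F γ)
    (g : AddMonoidAlgebra R (ℤ × Γ)) :
    g ∈ (uncurryHom S).rangeS ↔ ∀ n γ, g.coeff (n, γ) ∈ F γ := by
  classical
  constructor
  · rintro ⟨G, rfl⟩ n γ
    rw [uncurryHom_coeff]
    exact (hS _).1 (G.coeff n).2 γ
  · intro h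
    rw [← AddMonoidAlgebra.sum_coeff_single g]
    refine Subsemiring.sum_mem _ fun x _ => ?_
    refine ⟨AddMonoidAlgebra.single x.1 ⟨AddMonoidAlgebra.single x.2 (g.coeff x), (hS _).2 ?_⟩, ?_⟩
    · intro γ
      rw [AddMonoidAlgebra.coeff_single, Finsupp.single_apply]
      split_ifs with h'
      · subst h'; exact h x.1 x.2
      · exact Ideal.zero_mem _
    · rw [uncurryHom, RingHom.comp_apply, AddMonoidAlgebra.mapRingHom_single]
      exact AddMonoidAlgebra.curryRingEquiv_symm_single _ _ _

lemma exists_shear_lift (hS : ∀ f, f ∈ S ↔ ∀ γ, f.coeff γ ∈ F γ) (w : Γ →+ ℤ) :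
    ∃ θ : AddMonoidAlgebra S ℤ →+* AddMonoidAlgebra S ℤ, ∀ x n γ,
      (((θ x).coeff n : S) : AddMonoidAlgebra R Γ).coeff γ =
        ((x.coeff (n - w γ) : S) : AddMonoidAlgebra R Γ).coeff γ := by
  have key : ∀ x n γ, (AddMonoidAlgebra.domCongr R R (shear w) (uncurryHom S x)).coeff (n, γ) =
        ((x.coeff (n - w γ) : S) : AddMonoidAlgebra R Γ).coeff γ := by
    intro x n γ
    rw [AddMonoidAlgebra.coeff_domCongr, ← uncurryHom_coeff]
    rfl
  let D : AddMonoidAlgebra S ℤ →+* AddMonoidAlgebra R (ℤ × Γ) :=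
    ((AddMonoidAlgebra.domCongr R R (shear w) : _ ≃ₐ[R] _) : _ →+* _).comp (uncurryHom S)
  have hD : ∀ x, D x ∈ (uncurryHom S).rangeS := fun x => by
    rw [mem_range_uncurryHom hS]
    intro n γ
    change (AddMonoidAlgebra.domCongr R R (shear w) (uncurryHom S x)).coeff (n, γ) ∈ _
    rw [key]
    exact (hS _).1 (x.coeff (n - w γ)).2 γ
  let e : AddMonoidAlgebra S ℤ ≃+* (uncurryHom S).rangeS :=
    RingEquiv.ofBijective (uncurryHom S).rangeSRestrict
      ⟨fun x y h => uncurryHom_injective S (congrArg Subtype.val h),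
        RingHom.rangeSRestrict_surjective _⟩
  refine ⟨(e.symm : _ →+* _).comp (D.codRestrict _ hD), fun x n γ => ?_⟩
  have h1 : uncurryHom S (e.symm (D.codRestrict _ hD x)) = D x :=
    congrArg Subtype.val (e.apply_symm_apply (D.codRestrict _ hD x))
  rw [← key, ← uncurryHom_coeff]
  exact congrArg (fun g => g.coeff (n, γ)) h1

/-- The automorphism `c t^γ ↦ c t^γ T^(w γ)` of `S[T, T⁻¹]` given by a grading `w`. -/
lemma exists_shear_equiv (hS : ∀ f, f ∈ S ↔ ∀ γ, f.coeff γ ∈ F γ) (w : Γ →+ ℤ) :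
    ∃ θ : AddMonoidAlgebra S ℤ ≃+* AddMonoidAlgebra S ℤ, ∀ x n γ,
      (((θ x).coeff n : S) : AddMonoidAlgebra R Γ).coeff γ =
        ((x.coeff (n - w γ) : S) : AddMonoidAlgebra R Γ).coeff γ := by
  obtain ⟨θ, hθ⟩ := exists_shear_lift hS w
  obtain ⟨θ', hθ'⟩ := exists_shear_lift hS (-w)
  refine ⟨RingEquiv.ofRingHom θ θ' ?_ ?_, hθ⟩
  · refine RingHom.ext fun x => ?_
    ext n γ
    simp only [RingHom.comp_apply, RingHom.id_apply, hθ, hθ']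
    simp
  · refine RingHom.ext fun x => ?_
    ext n γ
    simp only [RingHom.comp_apply, RingHom.id_apply, hθ, hθ']
    simp

/-- Cohen–Macaulayness at a prime `P` follows from that at a prime `P'` all of whose elements have
their `w`-homogeneous components in `P`. -/
lemma torus_step [IsNoetherianRing S] (hS : ∀ f, f ∈ S ↔ ∀ γ, f.coeff γ ∈ F γ) (w : Γ →+ ℤ)
    (P : Ideal S) [P.IsPrime] :
    ∃ P' : Ideal S, ∃ _ : P'.IsPrime,
      (∀ s ∈ P', ∀ (n : ℤ) (s' : S), (∀ γ, (s' : AddMonoidAlgebra R Γ).coeff γ =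
        if w γ = n then (s : AddMonoidAlgebra R Γ).coeff γ else 0) → s' ∈ P) ∧
      (IsCMLocalRing (Localization.AtPrime P') → IsCMLocalRing (Localization.AtPrime P)) := by
  classical
  obtain ⟨θ, hθ⟩ := exists_shear_equiv hS w
  let ι : S →+* AddMonoidAlgebra S ℤ := (θ : _ →+* _).comp LaurentPolynomial.C
  let P' := (laurentExt P).comap ι
  have hP' : ∀ s, s ∈ P' ↔ ∀ n, (θ (LaurentPolynomial.C s)).coeff n ∈ P := fun s => by
    rw [Ideal.mem_comap, mem_laurentExt]; rfl
  refine ⟨P', inferInstance, ?_, IsCMLocalRing.torus θ P P' hP'⟩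
  intro s hs n s' hs'
  have := (hP' s).1 hs n
  convert this using 1
  ext γ
  rw [hs', hθ]
  change _ = (((AddMonoidAlgebra.single (0:ℤ) s).coeff (n - w γ) : S) : AddMonoidAlgebra R Γ).coeff γ
  rw [AddMonoidAlgebra.coeff_single, Finsupp.single_apply]
  by_cases h : w γ = n
  · rw [if_pos h, if_pos (by omega)]
  · rw [if_neg h, if_neg (by omega)]; simp

lemma IsCMLocalRing.of_le {S : Type u} [CommRing S] [IsNoetherianRing S] (P M : Ideal S)
    [P.IsPrime] [M.IsPrime] (hPM : P ≤ M) (h : IsCMLocalRing (Localization.AtPrime M)) :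
    IsCMLocalRing (Localization.AtPrime P) := by
  let A := Localization.AtPrime M
  have disj : Disjoint (M.primeCompl : Set S) P :=
    Set.disjoint_left.mpr fun x hx hxP => hx (hPM hxP)
  let p := P.map (algebraMap S A)
  have hp : p.IsPrime := IsLocalization.isPrime_of_isPrime_disjoint M.primeCompl _ _ ‹_› disj
  have eq : p.comap (algebraMap S A) = P :=
    IsLocalization.under_map_of_isPrime_disjoint M.primeCompl A ‹_› disj
  have hB := IsCMLocalRing.localization h p (Localization.AtPrime p)
  have : IsLocalization.AtPrime (Localization.AtPrime p) (p.comap (algebraMap S A)) :=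
    IsLocalization.isLocalization_isLocalization_atPrime_isLocalization M.primeCompl _ p
  have : IsLocalization.AtPrime (Localization.AtPrime p) P := by
    simpa only [eq] using this
  exact IsCMLocalRing.of_ringEquiv
    (IsLocalization.algEquiv P.primeCompl (Localization.AtPrime p)
      (Localization.AtPrime P)).toRingEquiv hB

end Torus

section MaxIdeal

variable {R : Type u} [CommRing R] {Γ : Type v} [AddCommMonoid Γ]

/-- A sum in `Γ` vanishes only if both summands do; this makes the degree `0` part of `R[Γ]`
multiplicative. -/
def IsPositive (Γ : Type v) [AddCommMonoid Γ] : Prop := ∀ x y : Γ, x + y = 0 → x = 0 ∧ y = 0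

lemma coeff_zero_mul (hΓ : IsPositive Γ) (f g : AddMonoidAlgebra R Γ) :
    (f * g).coeff 0 = f.coeff 0 * g.coeff 0 := by
  classical
  rw [AddMonoidAlgebra.coeff_mul_antidiag f g 0 {(0, 0)}]
  · simp
  · rintro ⟨x, y⟩
    simp only [Finset.mem_singleton, Prod.mk.injEq]
    constructor
    · rintro ⟨rfl, rfl⟩; simp
    · exact hΓ x y

/-- The degree `0` part. -/
noncomputable def coeffZero (hΓ : IsPositive Γ) : AddMonoidAlgebra R Γ →+* R where
  toFun f := f.coeff 0
  map_one' := by simp [AddMonoidAlgebra.one_def]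
  map_mul' := coeff_zero_mul hΓ
  map_zero' := rfl
  map_add' _ _ := rfl

/-- The ideal of elements whose degree `0` part lies in `q`. For `q = 𝔪` this is the homogeneous
maximal ideal. -/
noncomputable def zeroPart (hΓ : IsPositive Γ) (S : Subalgebra R (AddMonoidAlgebra R Γ))
    (q : Ideal R) : Ideal S :=
  q.comap ((coeffZero hΓ).comp (S.val : S →+* AddMonoidAlgebra R Γ))

lemma mem_zeroPart (hΓ : IsPositive Γ) (S : Subalgebra R (AddMonoidAlgebra R Γ))
    (q : Ideal R) (f : S) : f ∈ zeroPart hΓ S q ↔ (f : AddMonoidAlgebra R Γ).coeff 0 ∈ q := Iff.rfl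

instance zeroPart_isPrime (hΓ : IsPositive Γ) (S : Subalgebra R (AddMonoidAlgebra R Γ))
    (q : Ideal R) [q.IsPrime] : (zeroPart hΓ S q).IsPrime := by
  unfold zeroPart; infer_instance

end MaxIdeal

lemma isPositive_nat : IsPositive ℕ := fun x y h => by omega
lemma isPositive_nat2 : IsPositive (ℕ × ℕ) := fun x y h => by
  simp only [Prod.ext_iff, Prod.fst_add, Prod.snd_add, Prod.fst_zero, Prod.snd_zero] at *
  omega

section Final

variable {R : Type u} [CommRing R] [IsLocalRing R]

lemma mem_max_of_algebraMap_mem {S : Type v} [CommRing S] [Algebra R S] (P : Ideal S) [hP : P.IsPrime] (c : R)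
    (h : algebraMap R S c ∈ P) : c ∈ maximalIdeal R := by
  rw [mem_maximalIdeal, mem_nonunits_iff]
  intro hc
  exact hP.ne_top (P.eq_top_of_isUnit_mem h (hc.map _))

/-- A graded ring is Cohen–Macaulay once it is so at the homogeneous maximal ideal. -/
lemma isCMRing_of_zeroPart1 {S : Subalgebra R (AddMonoidAlgebra R ℕ)} {F : ℕ → Ideal R}
    [IsNoetherianRing S] (hS : ∀ f, f ∈ S ↔ ∀ γ, f.coeff γ ∈ F γ)
    (h : IsCMLocalRing (Localization.AtPrime (zeroPart isPositive_nat S (maximalIdeal R)))) :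
    IsCMRing S := by
  classical
  intro P hP
  obtain ⟨P', hP', h1, h2⟩ := torus_step hS (Nat.castAddMonoidHom ℤ) P
  refine h2 (IsCMLocalRing.of_le P' _ (fun s hs => ?_) h)
  rw [mem_zeroPart]
  refine mem_max_of_algebraMap_mem P _ (h1 s hs 0 _ fun γ => ?_)
  change (AddMonoidAlgebra.single 0 _).coeff γ = _
  rw [AddMonoidAlgebra.coeff_single, Finsupp.single_apply]
  by_cases h0 : γ = 0
  · subst h0; simp
  · rw [if_neg (Ne.symm h0), if_neg]; simpa using h0

/-- The bigraded version: the torus step is applied to the two gradings in turn. -/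
lemma isCMRing_of_zeroPart2 {S : Subalgebra R (AddMonoidAlgebra R (ℕ × ℕ))} {F : ℕ × ℕ → Ideal R}
    [IsNoetherianRing S] (hS : ∀ f, f ∈ S ↔ ∀ γ, f.coeff γ ∈ F γ)
    (h : IsCMLocalRing (Localization.AtPrime (zeroPart isPositive_nat2 S (maximalIdeal R)))) :
    IsCMRing S := by
  classical
  intro P hP
  obtain ⟨P', hP', h1, h2⟩ := torus_step hS ((Nat.castAddMonoidHom ℤ).comp (AddMonoidHom.fst ℕ ℕ)) P
  obtain ⟨P'', hP'', h3, h4⟩ :=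
    torus_step hS ((Nat.castAddMonoidHom ℤ).comp (AddMonoidHom.snd ℕ ℕ)) P'
  refine h2 (h4 (IsCMLocalRing.of_le P'' _ (fun s hs => ?_) h))
  rw [mem_zeroPart]
  let g : AddMonoidAlgebra R (ℕ × ℕ) := ∑ γ ∈ (s : AddMonoidAlgebra R (ℕ × ℕ)).coeff.support,
    if γ.2 = 0 then AddMonoidAlgebra.single γ ((s : AddMonoidAlgebra R (ℕ × ℕ)).coeff γ) else 0
  have hg : ∀ γ, g.coeff γ = if γ.2 = 0 then (s : AddMonoidAlgebra R (ℕ × ℕ)).coeff γ else 0 := by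
    intro γ
    simp only [g, AddMonoidAlgebra.coeff_sum, Finsupp.finsetSum_apply]
    rw [Finset.sum_eq_single γ]
    · split_ifs <;> simp
    · intro b _ hb
      split_ifs
      · simp [hb]
      · simp
    · intro hγ
      split_ifs
      · simpa using hγ
      · simp
  have hgS : g ∈ S := (hS _).2 fun γ => by
    rw [hg]; split_ifs
    · exact (hS _).1 s.2 γ
    · exact Ideal.zero_mem _
  have hgP : (⟨g, hgS⟩ : S) ∈ P' := h3 s hs 0 _ fun γ => by simp [hg]
  refine mem_max_of_algebraMap_mem P _ (h1 _ hgP 0 _ fun γ => ?_)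
  change (AddMonoidAlgebra.single 0 _).coeff γ = if _ then g.coeff γ else 0
  rw [AddMonoidAlgebra.coeff_single, Finsupp.single_apply, hg]
  by_cases h0 : γ = 0
  · subst h0; simp
  · rw [if_neg (Ne.symm h0)]
    by_cases ha : γ.1 = 0
    · have : γ.2 ≠ 0 := fun hb => h0 (Prod.ext ha hb)
      simp [this]
    · simp [ha]

end Final

/-! ### Principal reductions in dimension one -/

section Reduction

variable {R : Type u} [CommRing R]

theorem length_range_le_of_ker_le {M X Y : Type*} [AddCommGroup M] [AddCommGroup X]
    [AddCommGroup Y] [Module R M] [Module R X] [Module R Y] (g : M →ₗ[R] X) (h : M →ₗ[R] Y)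
    (hk : LinearMap.ker g ≤ LinearMap.ker h) :
    Module.length R (LinearMap.range h) ≤ Module.length R (LinearMap.range g) := by
  rw [← g.quotKerEquivRange.length_eq, ← h.quotKerEquivRange.length_eq]
  exact Module.length_le_of_surjective (Submodule.factor hk) (Submodule.factor_surjective hk)

theorem length_quot_add (M N : Ideal R) (h : N ≤ M) :
    Module.length R (R ⧸ N) =
      Module.length R (LinearMap.range (N.mkQ ∘ₗ M.subtype)) + Module.length R (R ⧸ M) := by
  refine Module.length_eq_add_of_exact (LinearMap.range (N.mkQ ∘ₗ M.subtype)).subtype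
    (Submodule.factor h) (Submodule.subtype_injective _) (Submodule.factor_surjective h) ?_
  intro x
  obtain ⟨x, rfl⟩ := Submodule.mkQ_surjective _ x
  simp only [Submodule.coe_subtype, Subtype.range_coe_subtype, Set.mem_ofPred_eq,
    LinearMap.mem_range, LinearMap.comp_apply, Submodule.subtype_apply]
  rw [Submodule.factor_mk, Submodule.mkQ_apply, Submodule.Quotient.mk_eq_zero]
  constructor
  · intro hx
    exact ⟨⟨x, hx⟩, rfl⟩
  · rintro ⟨⟨y, hy⟩, e⟩
    rw [Submodule.mkQ_apply, Submodule.mkQ_apply, Submodule.Quotient.eq] at e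
    have := M.sub_mem hy (h e)
    simpa using this

/-- If `R / K` has finite length, then the length of `K / bK` is at most that of `R / bR`: compare
the two filtrations `bK ≤ K ≤ R` and `bK ≤ bR ≤ R`, and note that `R / K` surjects onto `bR / bK`. -/
theorem length_mul_le (b : R) (K : Ideal R)
    (hK : Module.length R (R ⧸ K) ≠ ⊤) :
    Module.length R (LinearMap.range ((Ideal.span {b} * K).mkQ ∘ₗ K.subtype)) ≤
      Module.length R (R ⧸ Ideal.span {b}) := by
  have h1 := length_quot_add K (Ideal.span {b} * K) Ideal.mul_le_right
  have h2 := length_quot_add (Ideal.span {b}) (Ideal.span {b} * K) Ideal.mul_le_left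
  have h3 : Module.length R (LinearMap.range
      ((Ideal.span {b} * K).mkQ ∘ₗ (Ideal.span {b}).subtype)) ≤ Module.length R (R ⧸ K) := by
    have e : LinearMap.range ((Ideal.span {b} * K).mkQ ∘ₗ (Ideal.span {b}).subtype) =
        LinearMap.range ((Ideal.span {b} * K).mkQ ∘ₗ LinearMap.mulLeft R b) := by
      rw [LinearMap.range_comp, LinearMap.range_comp]
      congr 1
      ext x
      simp [Ideal.mem_span_singleton', mul_comm b]
    rw [e]
    have := length_range_le_of_ker_le K.mkQ ((Ideal.span {b} * K).mkQ ∘ₗ LinearMap.mulLeft R b) ?_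
    · refine this.trans ?_
      exact Module.length_le_of_injective _ (Submodule.subtype_injective _)
    · intro x hx
      have hx : x ∈ K := by simpa using hx
      rw [LinearMap.mem_ker, LinearMap.comp_apply, Submodule.mkQ_apply,
        Submodule.Quotient.mk_eq_zero]
      exact Ideal.mul_mem_mul (Ideal.mem_span_singleton_self b) hx
  rw [h1, add_comm] at h2
  have h4 : Module.length R (R ⧸ K) + Module.length R (LinearMap.range
      ((Ideal.span {b} * K).mkQ ∘ₗ K.subtype)) ≤
      Module.length R (R ⧸ K) + Module.length R (R ⧸ Ideal.span {b}) :=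
    h2.trans_le (add_le_add_left h3 _)
  exact (ENat.add_le_add_iff_left hK).1 h4

/-- The elements of `I ^ n` which are carried into `b I ^ (n + j d)` by some power `f ^ j`. -/
def satIdeal (I : Ideal R) (d : ℕ) (f : R) (hf : f ∈ I ^ d) (b : R) (n : ℕ) : Ideal R where
  carrier := {x | x ∈ I ^ n ∧ ∃ j, f ^ j * x ∈ Ideal.span {b} * I ^ (n + j * d)}
  zero_mem' := ⟨zero_mem _, 0, by simp⟩
  add_mem' := by
    have key : ∀ {x : R} {j : ℕ} (i : ℕ), f ^ j * x ∈ Ideal.span {b} * I ^ (n + j * d) →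
        f ^ (i + j) * x ∈ Ideal.span {b} * I ^ (n + (i + j) * d) := by
      intro x j i h
      have e : Ideal.span {b} * I ^ (n + (i + j) * d) =
          (I ^ d) ^ i * (Ideal.span {b} * I ^ (n + j * d)) := by
        rw [← pow_mul, mul_left_comm, ← pow_add]; congr 2; ring
      rw [e, pow_add f, mul_assoc]
      exact Ideal.mul_mem_mul (Ideal.pow_mem_pow hf i) h
    rintro x y ⟨hx, j, hj⟩ ⟨hy, i, hi⟩
    refine ⟨add_mem hx hy, i + j, ?_⟩
    rw [mul_add]
    refine add_mem (key i hj) ?_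
    rw [add_comm i j]
    exact key j hi
  smul_mem' := by
    rintro c x ⟨hx, j, hj⟩
    refine ⟨Ideal.mul_mem_left _ _ hx, j, ?_⟩
    rw [smul_eq_mul, mul_left_comm]
    exact Ideal.mul_mem_left _ _ hj

theorem exists_stable (q : ℕ → ℕ∞) (L : ℕ∞) (hL : L ≠ ⊤) (hq : ∀ k, q k ≤ L) (hm : Monotone q) :
    ∃ k₀, ∀ k, k₀ ≤ k → q (k + 1) ≤ q k := by
  have hne : ∀ k, q k ≠ ⊤ := fun k h => hL (top_le_iff.1 (h ▸ hq k))
  let w : ℕ → ℕ := fun k => L.toNat - (q k).toNat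
  refine ⟨Function.argmin w, fun k hk => ?_⟩
  have h1 : w (Function.argmin w) ≤ w (k + 1) := Function.argmin_le w _
  have h2 : (q (k+1)).toNat ≤ L.toNat := ENat.toNat_le_toNat (hq _) hL
  have h3 : (q (Function.argmin w)).toNat ≤ (q k).toNat := ENat.toNat_le_toNat (hm hk) (hne _)
  have h4 : (q (k+1)).toNat ≤ (q k).toNat := by
    simp only [w] at h1
    have h5 : (q (Function.argmin w)).toNat ≤ L.toNat := ENat.toNat_le_toNat (hq _) hL
    simp only [w] at h3 h5
    omega
  rw [← ENat.natCast_toNat (hne k), ← ENat.natCast_toNat (hne (k+1))]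
  exact_mod_cast h4

/-- In high degrees multiplication by `f` is onto modulo `satIdeal`: the quotients
`I ^ n / satIdeal` have length at most that of `R / b`, and `f` maps them injectively. -/
theorem exists_stable_mul (I : Ideal R) (d : ℕ) (f : R) (hf : f ∈ I ^ d) (b : R)
    (hI : ∀ n, Module.length R (R ⧸ I ^ n) ≠ ⊤)
    (hbl : Module.length R (R ⧸ Ideal.span {b}) ≠ ⊤) :
    ∃ k₀, ∀ k, k₀ ≤ k → ∀ x ∈ I ^ (k * d + d), ∃ u ∈ I ^ (k * d),
      x - f * u ∈ satIdeal I d f hf b (k * d + d) := by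
  let φ : ∀ n, (I ^ n : Ideal R) →ₗ[R] R ⧸ satIdeal I d f hf b n := fun n =>
    (satIdeal I d f hf b n).mkQ ∘ₗ (I ^ n).subtype
  let ψ : ∀ n, (I ^ n : Ideal R) →ₗ[R] R ⧸ satIdeal I d f hf b (n + d) := fun n =>
    (satIdeal I d f hf b (n + d)).mkQ ∘ₗ LinearMap.mulLeft R f ∘ₗ (I ^ n).subtype
  have hfx : ∀ n, ∀ x ∈ I ^ n, f * x ∈ I ^ (n + d) := fun n x hx => by
    rw [pow_add, mul_comm f]; exact Ideal.mul_mem_mul hx hf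
  have hker : ∀ n, LinearMap.ker (ψ n) ≤ LinearMap.ker (φ n) := by
    rintro n ⟨x, hx⟩ h
    simp only [ψ, φ, LinearMap.mem_ker, LinearMap.comp_apply, Submodule.mkQ_apply,
      Submodule.Quotient.mk_eq_zero, Submodule.subtype_apply, LinearMap.mulLeft_apply] at h ⊢
    obtain ⟨-, j, hj⟩ := h
    refine ⟨hx, j + 1, ?_⟩
    rw [pow_succ, mul_assoc]
    convert hj using 3
    ring
  have hle : ∀ n, LinearMap.range (ψ n) ≤ LinearMap.range (φ (n + d)) := by
    rintro n _ ⟨⟨x, hx⟩, rfl⟩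
    exact ⟨⟨f * x, hfx n x hx⟩, rfl⟩
  have hφ : ∀ n, Module.length R (LinearMap.range (φ n)) ≤
      Module.length R (R ⧸ Ideal.span {b}) := fun n => by
    refine le_trans ?_ (length_mul_le b (I ^ n) (hI n))
    apply length_range_le_of_ker_le
    rintro ⟨x, hx⟩ h
    simp only [φ, LinearMap.mem_ker, LinearMap.comp_apply, Submodule.mkQ_apply,
      Submodule.Quotient.mk_eq_zero, Submodule.subtype_apply] at h ⊢
    exact ⟨hx, 0, by simpa using h⟩
  have hmono : ∀ n, Module.length R (LinearMap.range (φ n)) ≤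
      Module.length R (LinearMap.range (ψ n)) := fun n => length_range_le_of_ker_le _ _ (hker n)
  have hψφ : ∀ n, Module.length R (LinearMap.range (ψ n)) ≤
      Module.length R (LinearMap.range (φ (n + d))) := fun n =>
    Module.length_le_of_injective (Submodule.inclusion (hle n)) (Submodule.inclusion_injective _)
  have hmq : Monotone fun k => Module.length R (LinearMap.range (φ (k * d))) := by
    refine monotone_nat_of_le_succ fun k => ?_
    have := (hmono (k * d)).trans (hψφ (k * d))
    rwa [← Nat.succ_mul] at this
  obtain ⟨k₀, hk₀⟩ := exists_stable _ _ hbl (fun k => hφ (k * d)) hmq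
  refine ⟨k₀, fun k hk x hx => ?_⟩
  have h1 := (hk₀ k hk).trans (hmono (k * d))
  have e1 : (k + 1) * d = k * d + d := Nat.succ_mul k d
  rw [e1] at h1
  have hfin : IsFiniteLength R (LinearMap.range (φ (k * d + d))) := by
    rw [← Module.length_ne_top_iff]
    exact fun h => hbl (top_le_iff.1 (h ▸ hφ (k * d + d)))
  obtain ⟨_, _⟩ := isFiniteLength_iff_isNoetherian_isArtinian.1 hfin
  have htop : (LinearMap.range (ψ (k * d))).submoduleOf (LinearMap.range (φ (k * d + d))) = ⊤ := by
    by_contra hne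
    have := Submodule.length_lt hne
    rw [(Submodule.submoduleOfEquivOfLe (hle (k * d))).length_eq] at this
    exact absurd h1 (not_le.2 this)
  have hmem : φ (k * d + d) ⟨x, hx⟩ ∈ LinearMap.range (ψ (k * d)) := by
    have h2 : (⟨φ (k * d + d) ⟨x, hx⟩, LinearMap.mem_range_self _ _⟩ :
        LinearMap.range (φ (k * d + d))) ∈
        (LinearMap.range (ψ (k * d))).submoduleOf (LinearMap.range (φ (k * d + d))) := by
      rw [htop]; trivial
    exact h2
  obtain ⟨⟨u, hu⟩, e⟩ := hmem
  refine ⟨u, hu, ?_⟩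
  have e' : (satIdeal I d f hf b (k * d + d)).mkQ x = (satIdeal I d f hf b (k * d + d)).mkQ (f * u) :=
    e.symm
  rwa [Submodule.mkQ_apply, Submodule.mkQ_apply, Submodule.Quotient.eq] at e'


theorem mono_mem_pow (I : Ideal R) (l : ℕ) : ∀ x (hx : x ∈ I ^ l),
    (⟨monomial l x, reesAlgebra.monomial_mem.2 hx⟩ : reesAlgebra I) ∈
      (Ideal.span {z : reesAlgebra I | ∃ y ∈ I, (z : R[X]) = monomial 1 y}) ^ l := by
  induction l with
  | zero => intro x hx; simp
  | succ l ih =>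
    intro x hx
    suffices h : ∀ x ∈ I ^ l * I, ∃ h' : x ∈ I ^ (l + 1),
        (⟨monomial (l + 1) x, reesAlgebra.monomial_mem.2 h'⟩ : reesAlgebra I) ∈
      (Ideal.span {z : reesAlgebra I | ∃ y ∈ I, (z : R[X]) = monomial 1 y}) ^ (l + 1) from
      (h x (by rwa [← pow_succ])).2
    intro x hx
    refine Submodule.mul_induction_on hx ?_ ?_
    · intro p hp q hq
      have h' : p * q ∈ I ^ (l + 1) := by rw [pow_succ]; exact Ideal.mul_mem_mul hp hq
      refine ⟨h', ?_⟩
      rw [pow_succ]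
      have e : (⟨monomial (l + 1) (p * q), reesAlgebra.monomial_mem.2 h'⟩ : reesAlgebra I) =
          ⟨monomial l p, reesAlgebra.monomial_mem.2 hp⟩ *
          ⟨monomial 1 q, reesAlgebra.monomial_mem.2 (by simpa using hq)⟩ := by
        apply Subtype.ext
        simp [monomial_mul_monomial]
      rw [e]
      exact Ideal.mul_mem_mul (ih p hp) (Ideal.subset_span ⟨q, hq, rfl⟩)
    · rintro p q ⟨hp, hp'⟩ ⟨hq, hq'⟩
      refine ⟨add_mem hp hq, ?_⟩
      convert add_mem hp' hq' using 1
      apply Subtype.ext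
      simp

theorem mem_of_mono_mem (I : Ideal R) (b f : R) (l d : ℕ) (hf : f ∈ I ^ d) (x : R)
    (hx : x ∈ I ^ (l + d))
    (h : (⟨monomial (l + d) x, reesAlgebra.monomial_mem.2 hx⟩ : reesAlgebra I) ∈
      Ideal.span {(⟨monomial d f, reesAlgebra.monomial_mem.2 hf⟩ : reesAlgebra I),
        algebraMap R (reesAlgebra I) b}) :
    x ∈ Ideal.span {f} * I ^ l ⊔ Ideal.span {b} * I ^ (l + d) := by
  obtain ⟨p, q, e⟩ := Ideal.mem_span_pair.1 h
  have e' : (p : R[X]) * monomial d f + (q : R[X]) * C b = monomial (l + d) x :=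
    congrArg Subtype.val e
  have e2 := congrArg (fun z => z.coeff (l + d)) e'
  simp only [coeff_add, coeff_mul_monomial, coeff_mul_C, coeff_monomial, if_true] at e2
  rw [← e2]
  refine Submodule.add_mem_sup ?_ ?_
  · rw [mul_comm _ f]
    exact Ideal.mul_mem_mul (Ideal.mem_span_singleton_self f) ((mem_reesAlgebra_iff I _).1 p.2 l)
  · rw [mul_comm _ b]
    exact Ideal.mul_mem_mul (Ideal.mem_span_singleton_self b) ((mem_reesAlgebra_iff I _).1 q.2 _)

/-- An ideal `I` of a local ring with `R / I ^ n` of finite length, in a ring with a parameter `b`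
(so that `R / b` has finite length), has a power with a principal reduction. The generator `f`
is chosen with the radical of `(f t ^ d, b)` maximal in the Rees algebra. -/
theorem exists_reduction [IsNoetherianRing R] [IsLocalRing R] (I : Ideal R) (b : R)
    (hbm : b ∈ maximalIdeal R) (hI : ∀ n, Module.length R (R ⧸ I ^ n) ≠ ⊤)
    (hbl : Module.length R (R ⧸ Ideal.span {b}) ≠ ⊤) :
    ∃ d, 1 ≤ d ∧ ∃ f ∈ I ^ d, ∃ l, I ^ (l + d) ≤ Ideal.span {f} * I ^ l := by
  let A := reesAlgebra I
  let B : A := algebraMap R A b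
  let mo : ∀ n x, x ∈ I ^ n → A := fun n x hx => ⟨monomial n x, reesAlgebra.monomial_mem.2 hx⟩
  let 𝒮 : Set (Ideal A) := {K | ∃ d, 1 ≤ d ∧ ∃ f, ∃ hf : f ∈ I ^ d,
    K = (Ideal.span {mo d f hf, B}).radical}
  have hne : 𝒮.Nonempty := ⟨_, 1, le_rfl, 0, zero_mem _, rfl⟩
  obtain ⟨K, ⟨d, hd, f, hf, rfl⟩, hmax⟩ := set_has_maximal_iff_noetherian.2
    (inferInstanceAs (IsNoetherian A A)) 𝒮 hne
  set F := mo d f hf with hF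
  have hgen : ∀ g (hg : g ∈ I), mo 1 g (by simpa using hg) ∈ (Ideal.span {F, B}).radical := by
    intro g hg
    have hg1 : g ∈ I ^ 1 := by simpa using hg
    set G := mo 1 g hg1 with hG
    obtain ⟨k₀, hk₀⟩ := exists_stable_mul I d f hf b hI hbl
    obtain ⟨u, hu, hmem, j, hj⟩ := hk₀ k₀ le_rfl (g ^ (k₀ * d + d)) (Ideal.pow_mem_pow hg _)
    set g' := g ^ (k₀ * d + d) - f * u with hg'
    let U := mo _ u hu
    let G' := mo _ g' hmem
    have e1 : G ^ (k₀ * d + d) = F * U + G' := by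
      apply Subtype.ext
      simp only [G, F, U, G', mo, hg', Subalgebra.coe_pow, Subalgebra.coe_add, Subalgebra.coe_mul,
        monomial_pow, monomial_mul_monomial, one_mul]
      rw [add_comm d, ← map_add]
      congr 1; ring
    have e2 : B ∣ F ^ j * G' := by
      rw [Ideal.mem_span_singleton_mul] at hj
      obtain ⟨z, hz, e⟩ := hj
      refine ⟨mo _ z hz, ?_⟩
      apply Subtype.ext
      simp only [G', F, mo, B, Subalgebra.coe_pow, Subalgebra.coe_mul, monomial_pow,
        monomial_mul_monomial, Subalgebra.coe_algebraMap, ← e]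
      rw [Polynomial.algebraMap_apply, C_mul_monomial]
      rw [add_comm (d * j), mul_comm d j]
      rfl
    have hh : f ^ (k₀ + 1) + g' ∈ I ^ (k₀ * d + d) := by
      refine add_mem ?_ hmem
      have := Ideal.pow_mem_pow hf (k₀ + 1)
      rwa [← pow_mul, mul_comm, Nat.succ_mul] at this
    let H := mo _ _ hh
    have e3 : H = F ^ (k₀ + 1) + G' := by
      apply Subtype.ext
      simp only [H, F, G', mo, Subalgebra.coe_pow, Subalgebra.coe_add, monomial_pow]
      rw [← Nat.succ_mul, mul_comm d, ← map_add]
    have hprime : ∀ P : Ideal A, P.IsPrime → H ∈ P → B ∈ P → F ∈ P ∧ G ∈ P := by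
      intro P hP hHP hBP
      have hFP : F ∈ P := by
        rcases hP.mem_or_mem (P.mem_of_dvd e2 hBP) with h | h
        · exact hP.mem_of_pow_mem _ h
        · refine hP.mem_of_pow_mem (k₀ + 1) ?_
          rw [e3] at hHP
          exact (P.add_mem_iff_left h).1 hHP
      refine ⟨hFP, hP.mem_of_pow_mem (k₀ * d + d) ?_⟩
      rw [e3] at hHP
      have hG'P : G' ∈ P := (P.add_mem_iff_right (P.pow_mem_of_mem hFP _ (by omega))).1 hHP
      rw [e1]
      exact add_mem (P.mul_mem_right _ hFP) hG'P
    have hrad : ∀ x, (∀ P : Ideal A, P.IsPrime → H ∈ P → B ∈ P → x ∈ P) →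
        x ∈ (Ideal.span {H, B}).radical := by
      intro x hx
      rw [Ideal.radical_eq_sInf, Ideal.mem_sInf]
      rintro P ⟨hP1, hP2⟩
      exact hx P hP2 (hP1 (Ideal.subset_span (by simp))) (hP1 (Ideal.subset_span (by simp)))
    have hle : (Ideal.span {F, B}).radical ≤ (Ideal.span {H, B}).radical := by
      rw [Ideal.radical_le_radical_iff, Ideal.span_le]
      rintro x (rfl | rfl)
      · exact hrad _ fun P h1 h2 h3 => (hprime P h1 h2 h3).1
      · exact Ideal.le_radical (Ideal.subset_span (by simp))
    have heq := eq_of_le_of_not_lt hle (hmax _ ⟨_, by omega, _, hh, rfl⟩)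
    rw [heq]
    exact hrad _ fun P h1 h2 h3 => (hprime P h1 h2 h3).2
  let T : Ideal A := Ideal.span {z : reesAlgebra I | ∃ y ∈ I, (z : R[X]) = monomial 1 y}
  have hT : T ≤ (Ideal.span {F, B}).radical := by
    rw [Ideal.span_le]
    rintro z ⟨y, hy, e⟩
    have : z = mo 1 y (by simpa using hy) := Subtype.ext e
    rw [this]
    exact hgen y hy
  obtain ⟨l, hl⟩ := Ideal.exists_pow_le_of_le_radical_of_fg hT (IsNoetherian.noetherian T)
  refine ⟨d, hd, f, hf, l, ?_⟩
  have hnak : I ^ (l + d) ≤ Ideal.span {f} * I ^ l ⊔ Ideal.span {b} • I ^ (l + d) := by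
    intro x hx
    have h1 := hl (Ideal.pow_le_pow_right (Nat.le_add_right l d) (mono_mem_pow I (l + d) x hx))
    exact mem_of_mono_mem I b f l d hf x hx h1
  refine Submodule.le_of_le_smul_of_le_jacobson_bot (IsNoetherian.noetherian _) ?_ hnak
  rw [Ideal.span_singleton_le_iff_mem, jacobson_eq_maximalIdeal _ bot_ne_top]
  exact hbm

theorem length_quot_ne_top [IsNoetherianRing R] [IsLocalRing R] (K : Ideal R)
    (hK : maximalIdeal R ≤ K.radical) : Module.length R (R ⧸ K) ≠ ⊤ := by
  have h0 : Ring.KrullDimLE 0 (R ⧸ K) := by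
    refine Ring.KrullDimLE.mk₀ fun P hP => ?_
    have h1 : K ≤ P.comap (Ideal.Quotient.mk K) := by
      intro x hx
      rw [Ideal.mem_comap, Ideal.Quotient.eq_zero_iff_mem.2 hx]
      exact zero_mem _
    have hPc : (P.comap (Ideal.Quotient.mk K)).IsPrime := Ideal.IsPrime.comap _
    have h2 : maximalIdeal R ≤ P.comap (Ideal.Quotient.mk K) :=
      hK.trans (hPc.radical_le_iff.2 h1)
    have h3 : P.comap (Ideal.Quotient.mk K) = maximalIdeal R :=
      ((maximalIdeal.isMaximal R).eq_of_le hPc.ne_top h2).symm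
    have hmax : (P.comap (Ideal.Quotient.mk K)).IsMaximal := by
      rw [h3]; exact maximalIdeal.isMaximal R
    have := Ideal.map_eq_top_or_isMaximal_of_surjective (Ideal.Quotient.mk K)
      Ideal.Quotient.mk_surjective hmax
    rw [Ideal.map_comap_of_surjective _ Ideal.Quotient.mk_surjective] at this
    exact this.resolve_left hP.ne_top
  have h1 : IsArtinianRing (R ⧸ K) := IsNoetherianRing.isArtinianRing_of_krullDimLE_zero
  have h2 : IsArtinian R (R ⧸ K) :=
    isArtinian_of_surjective_algebraMap (R := R ⧸ K) Ideal.Quotient.mk_surjective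
  exact Module.length_ne_top

/-- The one-dimensional statement applied to `R / a` and lifted to `R`. -/
theorem exists_reduction_mod [IsNoetherianRing R] [IsLocalRing R] (I : Ideal R) (a b : R)
    (hI : I.radical = maximalIdeal R) (ha : a ∈ maximalIdeal R) (hb : b ∈ maximalIdeal R)
    (hab : maximalIdeal R ≤ (Ideal.span {a, b}).radical) :
    ∃ e, 1 ≤ e ∧ ∃ a' ∈ I ^ e, ∃ l, I ^ (l + e) ≤ Ideal.span {a'} * I ^ l ⊔ Ideal.span {a} := by
  let π := Ideal.Quotient.mk (Ideal.span {a})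
  have hπ : Function.Surjective π := Ideal.Quotient.mk_surjective
  have hne : Ideal.span {a} ≠ ⊤ := by
    rw [Ne, Ideal.span_singleton_eq_top]
    exact ha
  have hnt : Nontrivial (R ⧸ Ideal.span {a}) := Ideal.Quotient.nontrivial_iff.2 hne
  have hloc : IsLocalRing (R ⧸ Ideal.span {a}) := IsLocalRing.of_surjective' π hπ
  have hlh : IsLocalHom π := IsLocalHom.of_surjective π hπ
  have hker : RingHom.ker π = Ideal.span {a} := Ideal.mk_ker
  have hmax : ∀ K : Ideal R, maximalIdeal R ≤ K.radical →
      maximalIdeal (R ⧸ Ideal.span {a}) ≤ (K.map π).radical := by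
    intro K hK x hx
    obtain ⟨x, rfl⟩ := hπ x
    have hxm : x ∈ maximalIdeal R := by
      by_contra h
      have := (not_not.1 h : IsUnit x).map π
      exact hx this
    exact Ideal.map_radical_le π (Ideal.mem_map_of_mem π (hK hxm))
  have hbm : π b ∈ maximalIdeal (R ⧸ Ideal.span {a}) := fun h => hb (isUnit_of_map_unit π b h)
  obtain ⟨e, he, f, hf, l, hl⟩ := exists_reduction (I.map π) (π b) hbm
    (fun n => by
      rw [← Ideal.map_pow]
      refine length_quot_ne_top _ (hmax _ ?_)
      rcases Nat.eq_zero_or_pos n with rfl | hn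
      · rw [pow_zero, Ideal.one_eq_top]; exact le_top.trans Ideal.le_radical
      · rw [Ideal.radical_pow _ hn.ne', hI])
    (by
      refine length_quot_ne_top _ ((hmax _ hab).trans (Ideal.radical_mono ?_))
      rw [Ideal.map_span, Ideal.span_le]
      rintro _ ⟨x, rfl | rfl, rfl⟩
      · have : π x = 0 := Ideal.Quotient.eq_zero_iff_mem.2 (Ideal.mem_span_singleton_self x)
        rw [this]; exact zero_mem _
      · exact Ideal.mem_span_singleton_self _)
  rw [← Ideal.map_pow, Ideal.mem_map_iff_of_surjective π hπ] at hf
  obtain ⟨a', ha', rfl⟩ := hf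
  refine ⟨e, he, a', ha', l, ?_⟩
  intro x hx
  have h1 := hl (by rw [← Ideal.map_pow]; exact Ideal.mem_map_of_mem π hx)
  have h2 : Ideal.span {π a'} * I.map π ^ l = (Ideal.span {a'} * I ^ l).map π := by
    rw [Ideal.map_mul, Ideal.map_pow, Ideal.map_span, Set.image_singleton]
  rw [h2] at h1
  have h3 : x ∈ ((Ideal.span {a'} * I ^ l).map π).comap π := h1
  rw [Ideal.comap_map_of_surjective π hπ] at h3
  have h4 : Ideal.comap π ⊥ = Ideal.span {a} := hker
  rwa [h4] at h3

end Reduction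

/-! ### Ideals generated by homogeneous elements -/

theorem isWeaklyRegular_append_singleton {A : Type u} [CommRing A] (rs : List A) (r : A)
    (h : IsWeaklyRegular A rs)
    (hr : ∀ z, r * z ∈ Ideal.ofList rs → z ∈ Ideal.ofList rs) :
    IsWeaklyRegular A (rs ++ [r]) := by
  rw [isWeaklyRegular_iff_mem] at h ⊢
  intro i hi z hz
  rw [List.length_append, List.length_singleton] at hi
  rcases Nat.lt_succ_iff_lt_or_eq.1 hi with hlt | rfl
  · rw [List.take_append_of_le_length hlt.le] at hz ⊢
    rw [List.getElem_append_left hlt] at hz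
    exact h i hlt z hz
  · rw [List.take_append_of_le_length le_rfl, List.take_length] at hz ⊢
    rw [List.getElem_append_right le_rfl] at hz
    exact hr z (by simpa using hz)

section Graded

variable {R : Type u} [CommRing R] {Γ : Type v} [AddCommMonoid Γ]
  {S : Subalgebra R (AddMonoidAlgebra R Γ)} {F : Γ → Ideal R}

/-- The homogeneous element `c t ^ γ` of the graded ring `S = ⨁ F γ t ^ γ`. -/
noncomputable def homEl (hS : ∀ f, f ∈ S ↔ ∀ γ, f.coeff γ ∈ F γ) (y : Σ γ, F γ) : S :=
  ⟨AddMonoidAlgebra.single y.1 (y.2 : R), (hS _).2 fun γ => by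
    classical
    rw [AddMonoidAlgebra.coeff_single, Finsupp.single_apply]
    split_ifs with h
    · exact h ▸ y.2.2
    · exact zero_mem _⟩

lemma homEl_val (hS : ∀ f, f ∈ S ↔ ∀ γ, f.coeff γ ∈ F γ) (y : Σ γ, F γ) :
    (homEl hS y : AddMonoidAlgebra R Γ) = AddMonoidAlgebra.single y.1 (y.2 : R) := rfl

lemma F_mul (hS : ∀ f, f ∈ S ↔ ∀ γ, f.coeff γ ∈ F γ) {γ δ : Γ} {x y : R} (hx : x ∈ F γ)
    (hy : y ∈ F δ) : x * y ∈ F (γ + δ) := by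
  have h := (homEl hS ⟨γ, x, hx⟩ * homEl hS ⟨δ, y, hy⟩).2
  have h' := (hS _).1 h (γ + δ)
  simpa [homEl_val, AddMonoidAlgebra.single_mul_single] using h'

lemma homEl_mul (hS : ∀ f, f ∈ S ↔ ∀ γ, f.coeff γ ∈ F γ) {γ δ : Γ} {x y : R} (hx : x ∈ F γ)
    (hy : y ∈ F δ) : homEl hS ⟨γ, x, hx⟩ * homEl hS ⟨δ, y, hy⟩ =
      homEl hS ⟨γ + δ, x * y, F_mul hS hx hy⟩ := by
  apply Subtype.ext
  simp [homEl_val, AddMonoidAlgebra.single_mul_single]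

lemma eq_sum_homEl (hS : ∀ f, f ∈ S ↔ ∀ γ, f.coeff γ ∈ F γ) (f : S) :
    f = ∑ γ ∈ (f : AddMonoidAlgebra R Γ).coeff.support,
      homEl hS ⟨γ, (f : AddMonoidAlgebra R Γ).coeff γ, (hS _).1 f.2 γ⟩ := by
  apply Subtype.ext
  rw [AddSubmonoidClass.coe_finsetSum]
  exact (AddMonoidAlgebra.sum_coeff_single (f : AddMonoidAlgebra R Γ)).symm

/-- The degree `γ` component of the ideal of `S` generated by the homogeneous elements `ys`. -/
noncomputable def compSpan : List (Σ γ, F γ) → Γ → Ideal R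
  | [], _ => ⊥
  | y :: ys, γ =>
    (⨆ γ' : {γ' // γ' + y.1 = γ}, Ideal.span {(y.2 : R)} * F γ'.1) ⊔ compSpan ys γ

lemma coeff_mul_homEl [IsCancelAdd Γ] (hS : ∀ f, f ∈ S ↔ ∀ γ, f.coeff γ ∈ F γ) (y : Σ γ, F γ)
    (g : S) (γ : Γ) :
    ((homEl hS y * g : S) : AddMonoidAlgebra R Γ).coeff (γ + y.1) =
      (y.2 : R) * (g : AddMonoidAlgebra R Γ).coeff γ := by
  rw [MulMemClass.coe_mul, homEl_val, add_comm]
  exact AddMonoidAlgebra.coeff_single_mul_eq_mul_coeff _ (by simp)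

lemma coeff_mul_homEl_mem [IsCancelAdd Γ] (hS : ∀ f, f ∈ S ↔ ∀ γ, f.coeff γ ∈ F γ)
    (y : Σ γ, F γ) (g : S) (γ : Γ) :
    ((homEl hS y * g : S) : AddMonoidAlgebra R Γ).coeff γ ∈
      (⨆ γ' : {γ' // γ' + y.1 = γ}, Ideal.span {(y.2 : R)} * F γ'.1) := by
  by_cases h : ∃ γ', γ' + y.1 = γ
  · obtain ⟨γ', rfl⟩ := h
    rw [coeff_mul_homEl]
    refine Ideal.mem_iSup_of_mem ⟨γ', rfl⟩ ?_
    exact Ideal.mul_mem_mul (Ideal.mem_span_singleton_self _) ((hS _).1 g.2 _)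
  · have : ((homEl hS y * g : S) : AddMonoidAlgebra R Γ).coeff γ = 0 := by
      rw [MulMemClass.coe_mul, homEl_val]
      refine AddMonoidAlgebra.coeff_single_mul_of_forall_add_ne _ _ fun d hd => h ⟨d, ?_⟩
      rw [add_comm]; exact hd
    rw [this]
    exact zero_mem _

lemma mem_ofList_homEl [IsCancelAdd Γ] (hS : ∀ f, f ∈ S ↔ ∀ γ, f.coeff γ ∈ F γ)
    (ys : List (Σ γ, F γ)) (h : S) :
    h ∈ Ideal.ofList (ys.map (homEl hS)) ↔
      ∀ γ, (h : AddMonoidAlgebra R Γ).coeff γ ∈ compSpan ys γ := by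
  constructor
  · induction ys generalizing h with
    | nil => intro hh γ; simp at hh; simp [hh]
    | cons y ys ih =>
      intro hh γ
      rw [List.map_cons, Ideal.ofList_cons] at hh
      obtain ⟨p, hp, q, hq, rfl⟩ := Submodule.mem_sup.1 hh
      obtain ⟨g, rfl⟩ := Ideal.mem_span_singleton'.1 hp
      rw [compSpan, mul_comm g]
      exact Submodule.add_mem_sup (coeff_mul_homEl_mem hS y g γ) (ih q hq γ)
  · intro hh
    have key : ∀ γ (x : R), x ∈ compSpan ys γ → ∃ hx : x ∈ F γ,
        homEl hS ⟨γ, x, hx⟩ ∈ Ideal.ofList (ys.map (homEl hS)) := by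
      intro γ
      let K : Ideal R :=
        { carrier := {x | ∃ hx : x ∈ F γ,
            homEl hS ⟨γ, x, hx⟩ ∈ Ideal.ofList (ys.map (homEl hS))}
          zero_mem' := ⟨zero_mem _, by
            convert zero_mem (Ideal.ofList (ys.map (homEl hS)))
            apply Subtype.ext; simp [homEl_val]⟩
          add_mem' := by
            rintro x x' ⟨hx, h1⟩ ⟨hx', h1'⟩
            refine ⟨add_mem hx hx', ?_⟩
            convert add_mem h1 h1'
            apply Subtype.ext; simp [homEl_val]
          smul_mem' := by
            rintro c x ⟨hx, h1⟩
            refine ⟨Ideal.mul_mem_left _ _ hx, ?_⟩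
            convert Submodule.smul_of_tower_mem _ c h1
            apply Subtype.ext; simp [homEl_val] }
      suffices hK : ∀ zs : List (Σ γ, F γ), (∀ z ∈ zs, z ∈ ys) → compSpan zs γ ≤ K from
        fun x hx => hK ys (fun _ h => h) hx
      intro zs
      induction zs with
      | nil => intro _; exact bot_le
      | cons z zs ih =>
        intro hz
        rw [compSpan]
        refine sup_le (iSup_le ?_) (ih fun w hw => hz w (List.mem_cons_of_mem _ hw))
        rintro ⟨γ', rfl⟩
        intro x hx
        obtain ⟨w, hw, rfl⟩ := Ideal.mem_span_singleton_mul.1 hx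
        have hm : (z.2 : R) * w ∈ F (γ' + z.1) := by
          rw [add_comm]; exact F_mul hS z.2.2 hw
        refine ⟨hm, ?_⟩
        have e : homEl hS ⟨γ' + z.1, _, hm⟩ = homEl hS ⟨γ', w, hw⟩ * homEl hS z := by
          apply Subtype.ext
          simp [homEl_val, AddMonoidAlgebra.single_mul_single, mul_comm]
        rw [e]
        refine Ideal.mul_mem_left _ _ (Ideal.subset_span ?_)
        exact List.mem_map_of_mem (hz z List.mem_cons_self)
    rw [eq_sum_homEl hS h]
    exact sum_mem fun γ _ => (key γ _ (hh γ)).2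

lemma isWeaklyRegular_homEl_append [IsCancelAdd Γ] (hS : ∀ f, f ∈ S ↔ ∀ γ, f.coeff γ ∈ F γ)
    (ys : List (Σ γ, F γ)) (y : Σ γ, F γ) (h : IsWeaklyRegular S (ys.map (homEl hS)))
    (hy : ∀ γ, ∀ z ∈ F γ, (y.2 : R) * z ∈ compSpan ys (γ + y.1) → z ∈ compSpan ys γ) :
    IsWeaklyRegular S ((ys ++ [y]).map (homEl hS)) := by
  rw [List.map_append]
  refine isWeaklyRegular_append_singleton _ _ h fun z hz => ?_
  rw [mem_ofList_homEl] at hz ⊢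
  intro γ
  refine hy γ _ ((hS _).1 z.2 γ) ?_
  rw [← coeff_mul_homEl hS y z γ]
  exact hz _

/-- A homogeneous element annihilated modulo a homogeneous regular sequence by powers of all
homogeneous elements of the maximal homogeneous ideal `𝔐` already lies in the ideal generated by
the sequence, provided `S` localized at `𝔐` is Cohen–Macaulay of dimension exceeding the length of
the sequence. -/
lemma mem_of_CM [IsCancelAdd Γ] [IsLocalRing R] (hΓ : IsPositive Γ)
    (hS : ∀ f, f ∈ S ↔ ∀ γ, f.coeff γ ∈ F γ)
    (hCM : IsCMLocalRing (Localization.AtPrime (zeroPart hΓ S (maximalIdeal R))))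
    (ys : List (Σ γ, F γ)) (hys : IsWeaklyRegular S (ys.map (homEl hS)))
    (hdim : ((ys.length + 1 : ℕ) : WithBot ℕ∞) ≤
      ringKrullDim (Localization.AtPrime (zeroPart hΓ S (maximalIdeal R))))
    (δ : Γ) (c : R) (hc : c ∈ F δ)
    (hp : ∀ γ x (hx : x ∈ F γ), (γ = 0 → x ∈ maximalIdeal R) → ∃ N : ℕ,
      homEl hS ⟨γ, x, hx⟩ ^ N * homEl hS ⟨δ, c, hc⟩ ∈ Ideal.ofList (ys.map (homEl hS))) :
    c ∈ compSpan ys δ := by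
  let 𝔐 := zeroPart hΓ S (maximalIdeal R)
  let Λ := Localization.AtPrime 𝔐
  let Y := Ideal.ofList (ys.map (homEl hS))
  let p := homEl hS ⟨δ, c, hc⟩
  have hann : 𝔐 ≤ (Y.colon {p}).radical := by
    intro s hs
    rw [eq_sum_homEl hS s]
    refine sum_mem fun γ _ => ?_
    obtain ⟨N, hN⟩ := hp γ _ ((hS _).1 s.2 γ) (by rintro rfl; exact hs)
    exact ⟨N, by rw [Submodule.mem_colon_singleton]; exact hN⟩
  obtain ⟨xs, hxm, hxreg, hxl⟩ := isCMLocalRing_iff_list.1 hCM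
  have hyΛ : IsWeaklyRegular Λ ((ys.map (homEl hS)).map (algebraMap S Λ)) :=
    hys.of_isLocalization Λ 𝔐.primeCompl
  have hmem := mem_ofList_of_pow_mul_mem xs _ hxreg hyΛ
    (by
      rw [← hxl] at hdim
      have : ys.length + 1 ≤ xs.length := by exact_mod_cast hdim
      simpa using this) (algebraMap S Λ p) (by
      intro x hx
      obtain ⟨s, u, rfl⟩ := IsLocalization.exists_mk'_eq 𝔐.primeCompl x
      have hs : s ∈ 𝔐 := by
        have := hxm _ hx
        rwa [IsLocalization.AtPrime.mk'_mem_maximal_iff Λ 𝔐] at this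
      obtain ⟨N, hN⟩ := hann hs
      rw [Submodule.mem_colon_singleton] at hN
      refine ⟨N, ?_⟩
      rw [← IsLocalization.mk'_pow, IsLocalization.mk'_eq_mul_mk'_one, mul_right_comm, ← map_mul,
        ← Ideal.map_ofList]
      exact Ideal.mul_mem_right _ _ (Ideal.mem_map_of_mem _ hN))
  rw [← Ideal.map_ofList, IsLocalization.algebraMap_mem_map_algebraMap_iff 𝔐.primeCompl] at hmem
  obtain ⟨u, hu, hup⟩ := hmem
  have h1 := (mem_ofList_homEl hS ys _).1 hup δ
  have h2 : ((u * p : S) : AddMonoidAlgebra R Γ).coeff δ =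
      (u : AddMonoidAlgebra R Γ).coeff 0 * c := by
    have := coeff_mul_homEl hS ⟨δ, c, hc⟩ u 0
    rw [zero_add] at this
    rw [mul_comm u, mul_comm _ c]
    exact this
  rw [h2] at h1
  have hunit : IsUnit ((u : AddMonoidAlgebra R Γ).coeff 0) := by
    by_contra h
    exact hu h
  exact (Ideal.unit_mul_mem_iff_mem _ hunit).1 h1

end Graded

/-! ### Lower bounds for the dimension of the Rees rings -/

section Face

variable {R : Type u} [CommRing R] {Γ : Type v} [AddCommMonoid Γ]
  {S : Subalgebra R (AddMonoidAlgebra R Γ)} {F : Γ → Ideal R}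

open Classical in
/-- The ring endomorphism of `R[Γ]` killing all monomials outside a face `T` of `Γ`. -/
noncomputable def faceHom (T : Γ → Prop) (h0 : T 0) (hT : ∀ x y, T (x + y) ↔ T x ∧ T y) :
    AddMonoidAlgebra R Γ →ₐ[R] AddMonoidAlgebra R Γ :=
  AddMonoidAlgebra.lift R _ Γ
    { toFun := fun γ => if T γ.toAdd then AddMonoidAlgebra.single γ.toAdd (1 : R) else 0
      map_one' := by simp [h0, AddMonoidAlgebra.one_def]
      map_mul' := fun x y => by
        by_cases hx : T x.toAdd <;> by_cases hy : T y.toAdd <;>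
          simp [hT, hx, hy, AddMonoidAlgebra.single_mul_single] }

open Classical in
lemma faceHom_coeff (T : Γ → Prop) (h0 : T 0) (hT : ∀ x y, T (x + y) ↔ T x ∧ T y)
    (f : AddMonoidAlgebra R Γ) (γ : Γ) :
    (faceHom T h0 hT f).coeff γ = if T γ then f.coeff γ else 0 := by
  induction f using AddMonoidAlgebra.induction_linear with
  | zero => simp
  | add f g hf hg =>
    rw [map_add, AddMonoidAlgebra.coeff_add, Finsupp.add_apply, hf, hg]
    split_ifs <;> simp
  | single δ c =>
    rw [faceHom, AddMonoidAlgebra.lift_single]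
    change (c • (if T δ then AddMonoidAlgebra.single δ (1 : R) else 0)).coeff γ = _
    by_cases hδ : T δ
    · rw [if_pos hδ, AddMonoidAlgebra.smul_single, smul_eq_mul, mul_one]
      split_ifs with h
      · rfl
      · rw [AddMonoidAlgebra.coeff_single, Finsupp.single_apply, if_neg]
        rintro rfl; exact h hδ
    · rw [if_neg hδ, smul_zero]
      split_ifs with h
      · rw [AddMonoidAlgebra.coeff_single, Finsupp.single_apply, if_neg]
        · simp
        · rintro rfl; exact hδ h
      · simp

/-- The elements of `S` whose coefficients on the face `T` lie in `q`. -/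
noncomputable def faceIdeal (S : Subalgebra R (AddMonoidAlgebra R Γ)) (T : Γ → Prop) (h0 : T 0)
    (hT : ∀ x y, T (x + y) ↔ T x ∧ T y) (q : Ideal R) : Ideal S :=
  RingHom.ker ((AddMonoidAlgebra.mapRingHom Γ (Ideal.Quotient.mk q)).comp
    ((faceHom (R := R) T h0 hT).toRingHom.comp
      (S.val : S →+* AddMonoidAlgebra R Γ)))

lemma mem_faceIdeal (T : Γ → Prop) (h0 : T 0)
    (hT : ∀ x y, T (x + y) ↔ T x ∧ T y) (q : Ideal R) (f : S) :
    f ∈ faceIdeal S T h0 hT q ↔ ∀ γ, T γ → (f : AddMonoidAlgebra R Γ).coeff γ ∈ q := by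
  classical
  rw [faceIdeal, RingHom.mem_ker]
  have : ∀ γ, (((AddMonoidAlgebra.mapRingHom Γ (Ideal.Quotient.mk q)).comp
    ((faceHom (R := R) T h0 hT).toRingHom.comp
      (S.val : S →+* AddMonoidAlgebra R Γ))) f).coeff γ = Ideal.Quotient.mk q
        (if T γ then (f : AddMonoidAlgebra R Γ).coeff γ else 0) := by
    intro γ
    rw [← faceHom_coeff T h0 hT]
    simp
  constructor
  · intro h γ hγ
    have h2 := this γ
    rw [h, if_pos hγ] at h2
    exact Ideal.Quotient.eq_zero_iff_mem.1 h2.symm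
  · intro h
    apply AddMonoidAlgebra.ext
    ext γ
    rw [this]
    split_ifs with hγ
    · exact Ideal.Quotient.eq_zero_iff_mem.2 (h γ hγ)
    · simp

instance faceIdeal_isPrime [UniqueSums Γ] (T : Γ → Prop) (h0 : T 0)
    (hT : ∀ x y, T (x + y) ↔ T x ∧ T y) (q : Ideal R) [q.IsPrime] :
    (faceIdeal S T h0 hT q).IsPrime := by
  have : NoZeroDivisors (AddMonoidAlgebra (R ⧸ q) Γ) := inferInstance
  have : IsDomain (AddMonoidAlgebra (R ⧸ q) Γ) := NoZeroDivisors.to_isDomain _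
  exact RingHom.ker_isPrime _

lemma faceIdeal_lt (hS : ∀ f, f ∈ S ↔ ∀ γ, f.coeff γ ∈ F γ) (T T' : Γ → Prop) (h0 : T 0)
    (hT : ∀ x y, T (x + y) ↔ T x ∧ T y) (h0' : T' 0)
    (hT' : ∀ x y, T' (x + y) ↔ T' x ∧ T' y) (q q' : Ideal R) (hq : q ≤ q')
    (hTT' : ∀ γ, T' γ → T γ) (γ : Γ) (c : R) (hc : c ∈ F γ) (h1 : T γ) (hcq : c ∉ q)
    (h2 : T' γ → c ∈ q') : faceIdeal S T h0 hT q < faceIdeal S T' h0' hT' q' := by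
  classical
  refine lt_of_le_not_ge (fun f hf => ?_) fun h => ?_
  · rw [mem_faceIdeal] at hf ⊢
    exact fun δ hδ => hq (hf δ (hTT' δ hδ))
  · have hm : homEl hS ⟨γ, c, hc⟩ ∈ faceIdeal S T' h0' hT' q' := by
      rw [mem_faceIdeal]
      intro δ hδ
      rw [homEl_val, AddMonoidAlgebra.coeff_single, Finsupp.single_apply]
      split_ifs with e
      · exact h2 (by rw [show γ = δ from e]; exact hδ)
      · exact zero_mem _
    have := (mem_faceIdeal T h0 hT q _).1 (h hm) γ h1
    simp [homEl_val] at this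
    exact hcq this

lemma faceIdeal_zero (hΓ : IsPositive Γ) (h0 : (fun γ : Γ => γ = 0) 0)
    (hT : ∀ x y, (fun γ : Γ => γ = 0) (x + y) ↔ (fun γ : Γ => γ = 0) x ∧ (fun γ : Γ => γ = 0) y)
    (q : Ideal R) [q.IsPrime] : faceIdeal S (fun γ => γ = 0) h0 hT q = zeroPart hΓ S q := by
  ext f
  rw [mem_faceIdeal, mem_zeroPart]
  simp

lemma exists_primes_of_dim_two [IsLocalRing R] (hdim : ringKrullDim R = 2) :
    ∃ q₀ q₁ : Ideal R, q₀.IsPrime ∧ q₁.IsPrime ∧ q₀ < q₁ ∧ q₁ < maximalIdeal R := by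
  have h2 : ((2 : ℕ) : WithBot ℕ∞) ≤ Order.krullDim (PrimeSpectrum R) := hdim.ge
  obtain ⟨l, hl⟩ := Order.le_krullDim_iff.1 h2
  have h01 : l.toFun ⟨0, by omega⟩ < l.toFun ⟨1, by omega⟩ := l.strictMono (Fin.mk_lt_mk.2 zero_lt_one)
  have h12 : l.toFun ⟨1, by omega⟩ < l.toFun ⟨2, by omega⟩ := l.strictMono (by simp)
  exact ⟨_, _, (l.toFun ⟨0, by omega⟩).2, (l.toFun ⟨1, by omega⟩).2, h01,
    lt_of_lt_of_le ((PrimeSpectrum.asIdeal_lt_asIdeal _ _).2 h12)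
      (le_maximalIdeal (l.toFun ⟨2, by omega⟩).2.ne_top)⟩

end Face

section Dim

variable {R : Type u} [CommRing R] [IsLocalRing R]

lemma exists_notMem_of_mPrimary (I q : Ideal R) (hI : I.radical = maximalIdeal R) (hq : q.IsPrime)
    (hlt : q < maximalIdeal R) : ∃ x ∈ I, x ∉ q := by
  by_contra! h
  have : maximalIdeal R ≤ q := hI ▸ hq.radical_le_iff.2 h
  exact absurd hlt (not_lt_of_ge this)

/-- A chain of four primes: those pulled back from a chain `q₀ < q₁ < 𝔪` of `R` along the whole
grading monoid and along degree `0`. -/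
lemma three_le_dim {S : Subalgebra R (AddMonoidAlgebra R ℕ)} {F : ℕ → Ideal R}
    (hS : ∀ f, f ∈ S ↔ ∀ γ, f.coeff γ ∈ F γ) (hdim : ringKrullDim R = 2)
    (I : Ideal R) (hI : I.radical = maximalIdeal R) (hF : I ≤ F 1) (h0 : F 0 = ⊤) :
    ((3 : ℕ) : WithBot ℕ∞) ≤
      ringKrullDim (Localization.AtPrime (zeroPart isPositive_nat S (maximalIdeal R))) := by
  obtain ⟨q₀, q₁, hq₀, hq₁, h01, h1m⟩ := exists_primes_of_dim_two hdim
  obtain ⟨x, hx, hxq⟩ := exists_notMem_of_mPrimary I q₁ hI hq₁ h1m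
  obtain ⟨y, hy, hyq⟩ := SetLike.exists_of_lt h01
  obtain ⟨z, hz, hzq⟩ := SetLike.exists_of_lt h1m
  have hZ : ∀ x y : ℕ, (fun γ : ℕ => γ = 0) (x + y) ↔
      (fun γ : ℕ => γ = 0) x ∧ (fun γ : ℕ => γ = 0) y := by
    intro x y; simp
  have e := faceIdeal_zero (S := S) isPositive_nat rfl hZ (maximalIdeal R)
  have l1 : faceIdeal S (fun _ => True) trivial (by simp) q₀ <
      faceIdeal S (fun _ => True) trivial (by simp) q₁ :=
    faceIdeal_lt hS _ _ _ _ _ _ q₀ q₁ h01.le (by simp) 0 y (h0 ▸ trivial) trivial hyq fun _ => hy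
  have l2 : faceIdeal S (fun _ => True) trivial (by simp) q₁ <
      faceIdeal S (fun γ => γ = 0) rfl hZ q₁ :=
    faceIdeal_lt hS _ _ _ _ _ _ q₁ q₁ le_rfl (by simp) 1 x (hF hx) trivial hxq (by simp)
  have l3 : faceIdeal S (fun γ => γ = 0) rfl hZ q₁ <
      faceIdeal S (fun γ => γ = 0) rfl hZ (maximalIdeal R) :=
    faceIdeal_lt hS _ _ _ _ _ _ q₁ _ h1m.le (by simp) 0 z (h0 ▸ trivial) rfl hzq fun _ => hz
  rw [e] at l3
  rw [IsLocalization.AtPrime.ringKrullDim_eq_height (zeroPart isPositive_nat S (maximalIdeal R))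
    (Localization.AtPrime (zeroPart isPositive_nat S (maximalIdeal R)))]
  have m1 := Ideal.height_add_one_le_of_lt_of_isPrime l1
  have m2 := Ideal.height_add_one_le_of_lt_of_isPrime l2
  have m3 := Ideal.height_add_one_le_of_lt_of_isPrime l3
  have : ((3 : ℕ) : ℕ∞) ≤ (zeroPart isPositive_nat S (maximalIdeal R)).height := by
    calc ((3 : ℕ) : ℕ∞) = 0 + 1 + 1 + 1 := by norm_num
      _ ≤ _ := by
        refine le_trans ?_ m3
        gcongr
        refine le_trans ?_ m2
        gcongr
        refine le_trans ?_ m1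
        gcongr
        exact zero_le
  exact WithBot.coe_le_coe.2 this

lemma four_le_dim {S : Subalgebra R (AddMonoidAlgebra R (ℕ × ℕ))} {F : ℕ × ℕ → Ideal R}
    (hS : ∀ f, f ∈ S ↔ ∀ γ, f.coeff γ ∈ F γ) (hdim : ringKrullDim R = 2)
    (I J : Ideal R) (hI : I.radical = maximalIdeal R) (hJ : J.radical = maximalIdeal R)
    (hF : I ≤ F (1, 0)) (hF' : J ≤ F (0, 1)) (h0 : F 0 = ⊤) :
    ((4 : ℕ) : WithBot ℕ∞) ≤
      ringKrullDim (Localization.AtPrime (zeroPart isPositive_nat2 S (maximalIdeal R))) := by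
  obtain ⟨q₀, q₁, hq₀, hq₁, h01, h1m⟩ := exists_primes_of_dim_two hdim
  obtain ⟨x, hx, hxq⟩ := exists_notMem_of_mPrimary I q₁ hI hq₁ h1m
  obtain ⟨x', hx', hxq'⟩ := exists_notMem_of_mPrimary J q₁ hJ hq₁ h1m
  obtain ⟨y, hy, hyq⟩ := SetLike.exists_of_lt h01
  obtain ⟨z, hz, hzq⟩ := SetLike.exists_of_lt h1m
  have hZ : ∀ x y : ℕ × ℕ, (fun γ : ℕ × ℕ => γ = 0) (x + y) ↔
      (fun γ : ℕ × ℕ => γ = 0) x ∧ (fun γ : ℕ × ℕ => γ = 0) y := by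
    intro x y; simp
  have hE : ∀ x y : ℕ × ℕ, (fun γ : ℕ × ℕ => γ.1 = 0) (x + y) ↔
      (fun γ : ℕ × ℕ => γ.1 = 0) x ∧ (fun γ : ℕ × ℕ => γ.1 = 0) y := by
    intro x y; simp
  have e := faceIdeal_zero (S := S) isPositive_nat2 rfl hZ (maximalIdeal R)
  have l1 : faceIdeal S (fun _ => True) trivial (by simp) q₀ <
      faceIdeal S (fun _ => True) trivial (by simp) q₁ :=
    faceIdeal_lt hS _ _ _ _ _ _ q₀ q₁ h01.le (by simp) 0 y (h0 ▸ trivial) trivial hyq fun _ => hy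
  have l2 : faceIdeal S (fun _ => True) trivial (by simp) q₁ <
      faceIdeal S (fun γ => γ.1 = 0) rfl hE q₁ :=
    faceIdeal_lt hS _ _ _ _ _ _ q₁ q₁ le_rfl (by simp) (1, 0) x (hF hx) trivial hxq (by simp)
  have l2' : faceIdeal S (fun γ => γ.1 = 0) rfl hE q₁ <
      faceIdeal S (fun γ => γ = 0) rfl hZ q₁ :=
    faceIdeal_lt hS _ _ _ _ _ _ q₁ q₁ le_rfl (by rintro _ rfl; rfl) (0, 1) x' (hF' hx') rfl hxq'
      (by simp)
  have l3 : faceIdeal S (fun γ => γ = 0) rfl hZ q₁ <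
      faceIdeal S (fun γ => γ = 0) rfl hZ (maximalIdeal R) :=
    faceIdeal_lt hS _ _ _ _ _ _ q₁ _ h1m.le (by simp) 0 z (h0 ▸ trivial) rfl hzq fun _ => hz
  rw [e] at l3
  rw [IsLocalization.AtPrime.ringKrullDim_eq_height (zeroPart isPositive_nat2 S (maximalIdeal R))
    (Localization.AtPrime (zeroPart isPositive_nat2 S (maximalIdeal R)))]
  have m1 := Ideal.height_add_one_le_of_lt_of_isPrime l1
  have m2 := Ideal.height_add_one_le_of_lt_of_isPrime l2
  have m2' := Ideal.height_add_one_le_of_lt_of_isPrime l2'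
  have m3 := Ideal.height_add_one_le_of_lt_of_isPrime l3
  have : ((4 : ℕ) : ℕ∞) ≤ (zeroPart isPositive_nat2 S (maximalIdeal R)).height := by
    calc ((4 : ℕ) : ℕ∞) = 0 + 1 + 1 + 1 + 1 := by norm_num
      _ ≤ _ := by
        refine le_trans ?_ m3
        gcongr
        refine le_trans ?_ m2'
        gcongr
        refine le_trans ?_ m2
        gcongr
        refine le_trans ?_ m1
        gcongr
        exact zero_le
  exact WithBot.coe_le_coe.2 this

end Dim

/-! ### The normal filtration indexed by natural numbers -/

section Graded

variable {R : Type u} [CommRing R] {Γ : Type v} [AddCommMonoid Γ] {F : Γ → Ideal R}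

lemma compSpan_cons_add [IsCancelAdd Γ] (y : Σ γ, F γ) (ys : List (Σ γ, F γ)) (γ δ : Γ)
    (h : γ + y.1 = δ) :
    compSpan (y :: ys) δ = Ideal.span {(y.2 : R)} * F γ ⊔ compSpan ys δ := by
  rw [compSpan]
  congr 1
  refine le_antisymm (iSup_le ?_) ?_
  · rintro ⟨γ', hγ'⟩
    obtain rfl : γ' = γ := add_right_cancel (hγ'.trans h.symm)
    exact le_rfl
  · exact le_iSup (fun γ' : {γ' // γ' + y.1 = δ} => Ideal.span {(y.2 : R)} * F γ'.1) ⟨γ, h⟩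

lemma compSpan_cons_of_not (y : Σ γ, F γ) (ys : List (Σ γ, F γ)) (δ : Γ)
    (h : ∀ γ, γ + y.1 ≠ δ) : compSpan (y :: ys) δ = compSpan ys δ := by
  rw [compSpan]
  have : IsEmpty {γ' // γ' + y.1 = δ} := ⟨fun x => h x.1 x.2⟩
  rw [iSup_of_empty, bot_sup_eq]

end Graded

section Concrete

variable {R : Type u} [CommRing R]

/-- `\overline{I^r J^s}` indexed by `ℕ × ℕ`. -/
noncomputable def nF (I J : Ideal R) (γ : ℕ × ℕ) : Ideal R := IJbar I J γ.1 γ.2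

variable (I J : Ideal R)

lemma mem_reesBar2_nF (f : AddMonoidAlgebra R (ℕ × ℕ)) :
    f ∈ reesBar2 I J ↔ ∀ γ, f.coeff γ ∈ nF I J γ := mem_reesBar2 I J f

lemma mem_reesBar1_nF (f : AddMonoidAlgebra R ℕ) :
    f ∈ reesBar1 I ↔ ∀ n, f.coeff n ∈ nF I J (n, 0) := mem_reesBar1 I J f

lemma nF_swap (r s : ℕ) : nF I J (r, s) = nF J I (s, r) := IJbar_swap I J _ _

lemma nF_mul {γ δ : ℕ × ℕ} {x y : R} (hx : x ∈ nF I J γ) (hy : y ∈ nF I J δ) :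
    x * y ∈ nF I J (γ + δ) := F_mul (mem_reesBar2_nF I J) hx hy

lemma nF_zero : nF I J 0 = ⊤ := IJbar_zero I J

lemma nF_anti {γ δ : ℕ × ℕ} (h : γ ≤ δ) : nF I J δ ≤ nF I J γ := by
  refine IJbar_anti I J ?_ ?_
  · exact_mod_cast h.1
  · exact_mod_cast h.2

lemma pow_le_nF (n : ℕ) : I ^ n ≤ nF I J (n, 0) := by
  have := le_IJbar I J n 0
  simpa [nF] using this

lemma nF_pow {j : ℕ} {c : R} (hc : c ∈ nF I J (j, 0)) (n : ℕ) : c ^ n ∈ nF I J (j * n, 0) := by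
  induction n with
  | zero => have := nF_zero I J; simp only [mul_zero]; exact this ▸ trivial
  | succ n ih =>
    have h := nF_mul I J ih hc
    rw [Prod.mk_add_mk, add_zero, ← Nat.mul_succ] at h
    rw [pow_succ]
    exact h

/-- Powers of an element integral over `I ^ j` lie deep in the `I`-adic filtration of the
`\overline{I^n}`; the exponent `j * N - k` is truncated at `0`. -/
lemma pow_mem_pow_mul {j : ℕ} {c : R} (hc : c ∈ nF I J (j, 0)) (hj : 1 ≤ j) (k : ℕ) :
    ∃ N, c ^ N ∈ I ^ k * nF I J (j * N - k, 0) := by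
  have h1 := (mem_IJbar I J j 0 c).1 hc
  simp only [Int.toNat_natCast, Int.toNat_zero, pow_zero, mul_one] at h1
  obtain ⟨M, hM, κ, hκ, e⟩ := h1
  obtain ⟨m, rfl⟩ : ∃ m, M = m + 1 := ⟨M - 1, by omega⟩
  have key : ∀ q, c ^ (m + q) ∈ (I ^ j) ^ q * nF I J (j * m, 0) := by
    intro q
    induction q using Nat.strong_induction_on with
    | _ q ih =>
      rcases Nat.eq_zero_or_pos q with rfl | hq
      · simpa using nF_pow I J hc m
      obtain ⟨q, rfl⟩ : ∃ p, q = p + 1 := ⟨q - 1, by omega⟩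
      have e' : c ^ (m + (q + 1)) =
          -∑ i ∈ Finset.range (m + 1), κ (i + 1) * c ^ (m + 1 - (i + 1)) * c ^ q := by
        rw [← Finset.sum_mul, ← neg_mul, ← eq_neg_of_add_eq_zero_left e, ← pow_add]
        congr 1; ring
      rw [e']
      refine neg_mem (sum_mem fun i hi => ?_)
      rw [Finset.mem_range] at hi
      rw [mul_assoc, ← pow_add]
      rcases le_or_gt i q with hiq | hiq
      · have h2 := ih (q - i) (by omega)
        have h3 : m + 1 - (i + 1) + q = m + (q - i) := by omega
        rw [h3]
        have h4 : (I ^ j) ^ (q + 1) * nF I J (j * m, 0) =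
            (I ^ j) ^ (i + 1) * ((I ^ j) ^ (q - i) * nF I J (j * m, 0)) := by
          rw [← mul_assoc, ← pow_add]; congr 2; omega
        rw [h4]
        exact Ideal.mul_mem_mul (hκ _) h2
      · have h2 : κ (i + 1) ∈ (I ^ j) ^ (q + 1) * (I ^ j) ^ (i - q) := by
          rw [← pow_add]; convert hκ (i + 1) using 2; omega
        have h3 : (I ^ j) ^ (q + 1) * (I ^ j) ^ (i - q) * nF I J (j * (m + 1 - (i + 1) + q), 0) ≤
            (I ^ j) ^ (q + 1) * nF I J (j * m, 0) := by
          rw [mul_assoc]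
          refine Ideal.mul_mono_right ?_
          rw [Ideal.mul_le]
          intro x hx y hy
          rw [← pow_mul] at hx
          have := nF_mul I J (pow_le_nF I J _ hx) hy
          convert this using 2
          simp only [Prod.mk_add_mk, add_zero, ← mul_add, Prod.mk.injEq, and_true]
          congr 1; omega
        exact h3 (Ideal.mul_mem_mul h2 (nF_pow I J hc _))
  refine ⟨m + k, ?_⟩
  have h3 : (I ^ j) ^ k * nF I J (j * m, 0) ≤ I ^ k * nF I J (j * (m + k) - k, 0) := by
    have hjk : k ≤ j * k := Nat.le_mul_of_pos_left k hj
    have : (I ^ j) ^ k = I ^ k * I ^ (j * k - k) := by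
      rw [← pow_mul, ← pow_add]; congr 1; omega
    rw [this, mul_assoc]
    refine Ideal.mul_mono_right ?_
    rw [Ideal.mul_le]
    intro x hx y hy
    have := nF_mul I J (pow_le_nF I J _ hx) hy
    convert this using 2
    simp only [Prod.mk_add_mk, add_zero, Prod.mk.injEq, and_true, mul_add]
    omega
  exact h3 (key k)

lemma pow_mem_pow_mul' [IsNoetherianRing R] [IsLocalRing R] (hI : I.radical = maximalIdeal R)
    {j : ℕ} {c : R} (hc : c ∈ nF I J (j, 0)) (hj : j = 0 → c ∈ maximalIdeal R) (k : ℕ) :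
    ∃ N, c ^ N ∈ I ^ k * nF I J (j * N - k, 0) := by
  rcases Nat.eq_zero_or_pos j with rfl | hj'
  · have h1 : c ∈ I.radical := hI ▸ hj rfl
    obtain ⟨n, hn⟩ := h1
    refine ⟨n * k, ?_⟩
    have h0 : nF I J (0 * (n * k) - k, 0) = ⊤ := by
      rw [zero_mul, Nat.zero_sub]; exact nF_zero I J
    rw [h0, Ideal.mul_top, pow_mul]
    exact Ideal.pow_mem_pow hn k
  · exact pow_mem_pow_mul I J hc hj' k

end Concrete

/-! ### The regular sequences `a t₁, b t₂, σ` and `a t, σ` -/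

section Graded

variable {R : Type u} [CommRing R] {Γ : Type v} [AddCommMonoid Γ]
  {S : Subalgebra R (AddMonoidAlgebra R Γ)} {F : Γ → Ideal R}

lemma homEl_congr (hS : ∀ f, f ∈ S ↔ ∀ γ, f.coeff γ ∈ F γ) {γ δ : Γ} {x y : R} (hx : x ∈ F γ)
    (hy : y ∈ F δ) (h : γ = δ) (h' : x = y) : homEl hS ⟨γ, x, hx⟩ = homEl hS ⟨δ, y, hy⟩ := by
  subst h h'; rfl

lemma F_one (hS : ∀ f, f ∈ S ↔ ∀ γ, f.coeff γ ∈ F γ) : (1 : R) ∈ F 0 := by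
  have := (hS _).1 (one_mem S) 0
  simpa [AddMonoidAlgebra.one_def] using this

lemma F_pow (hS : ∀ f, f ∈ S ↔ ∀ γ, f.coeff γ ∈ F γ) {γ : Γ} {x : R} (hx : x ∈ F γ) (n : ℕ) :
    x ^ n ∈ F (n • γ) := by
  induction n with
  | zero => simpa using F_one hS
  | succ n ih => rw [pow_succ, succ_nsmul]; exact F_mul hS ih hx

lemma homEl_pow (hS : ∀ f, f ∈ S ↔ ∀ γ, f.coeff γ ∈ F γ) {γ : Γ} {x : R} (hx : x ∈ F γ) (n : ℕ) :
    homEl hS ⟨γ, x, hx⟩ ^ n = homEl hS ⟨n • γ, x ^ n, F_pow hS hx n⟩ := by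
  apply Subtype.ext
  simp [homEl_val, AddMonoidAlgebra.single_pow]

lemma homEl_mem_ofList [IsCancelAdd Γ] (hS : ∀ f, f ∈ S ↔ ∀ γ, f.coeff γ ∈ F γ)
    (ys : List (Σ γ, F γ)) {γ : Γ} {x : R} (hx : x ∈ F γ) (h : x ∈ compSpan ys γ) :
    homEl hS ⟨γ, x, hx⟩ ∈ Ideal.ofList (ys.map (homEl hS)) := by
  classical
  rw [mem_ofList_homEl]
  intro δ
  rw [homEl_val, AddMonoidAlgebra.coeff_single, Finsupp.single_apply]
  split_ifs with e
  · exact e ▸ h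
  · exact zero_mem _

end Graded

section Setup

variable {R : Type u} [CommRing R]

/-- The consequences of the hypotheses on the good joint reduction `(a, b)` that the argument
uses, in elementwise form. -/
structure Setup (I J : Ideal R) (a b : R) : Prop where
  a_mem : a ∈ I
  b_mem : b ∈ J
  good_a : ∀ r s z, a * z ∈ nF I J (r + 1, s) → z ∈ nF I J (r, s)
  good_b : ∀ r s z, b * z ∈ nF I J (r, s + 1) → z ∈ nF I J (r, s)
  jr : ∀ r s, nF I J (r + 1, s + 1) ≤
    Ideal.span {a} * nF I J (r, s + 1) ⊔ Ideal.span {b} * nF I J (r + 1, s)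
  reg_a : ∀ z, a * z = 0 → z = 0
  reg_b : ∀ z, b * z = 0 → z = 0
  reg_ab : ∀ z, b * z ∈ Ideal.span {a} → z ∈ Ideal.span {a}
  reg_ba : ∀ z, a * z ∈ Ideal.span {b} → z ∈ Ideal.span {b}
  reg_add : ∀ z, (a + b) * z = 0 → z = 0
  reg_add_a : ∀ z, a * z ∈ Ideal.span {a + b} → z ∈ Ideal.span {a + b}

variable {I J : Ideal R} {a b : R}

lemma Setup.symm (h : Setup I J a b) : Setup J I b a where
  a_mem := h.b_mem
  b_mem := h.a_mem
  good_a r s z := by rw [nF_swap J I, nF_swap J I]; exact h.good_b s r z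
  good_b r s z := by rw [nF_swap J I, nF_swap J I]; exact h.good_a s r z
  jr r s := by rw [nF_swap J I, nF_swap J I, nF_swap J I, sup_comm]; exact h.jr s r
  reg_a := h.reg_b
  reg_b := h.reg_a
  reg_ab := h.reg_ba
  reg_ba := h.reg_ab
  reg_add := by rw [add_comm]; exact h.reg_add
  reg_add_a := by
    rw [add_comm]
    intro z hz
    refine h.reg_add_a z ?_
    have : a * z = z * (a + b) - b * z := by ring
    rw [this]
    exact sub_mem (Ideal.mul_mem_left _ _ (Ideal.mem_span_singleton_self _)) hz

lemma Setup.reg_pow (h : Setup I J a b) (N : ℕ) (z : R) (hz : (a + b) ^ N * z = 0) : z = 0 := by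
  induction N with
  | zero => simpa using hz
  | succ N ih =>
    refine ih (h.reg_add _ ?_)
    rw [← mul_assoc, ← pow_succ', hz]

lemma Setup.reg_pow_a (h : Setup I J a b) (N : ℕ) (z : R)
    (hz : (a + b) ^ N * z ∈ Ideal.span {a}) : z ∈ Ideal.span {a} := by
  induction N with
  | zero => simpa using hz
  | succ N ih =>
    refine ih (h.reg_ab _ ?_)
    have : b * ((a + b) ^ N * z) = (a + b) ^ (N + 1) * z - ((a + b) ^ N * z) * a := by ring
    rw [this]
    exact sub_mem hz (Ideal.mul_mem_left _ _ (Ideal.mem_span_singleton_self _))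

/-- An element of `(a)` in degree `(r + 1, s)` is `a` times an element of degree `(r, s)`. -/
lemma Setup.mem_a (h : Setup I J a b) {r s : ℕ} {z : R} (hz : z ∈ nF I J (r + 1, s))
    (hz' : z ∈ Ideal.span {a}) : z ∈ Ideal.span {a} * nF I J (r, s) := by
  obtain ⟨w, rfl⟩ := Ideal.mem_span_singleton.1 hz'
  exact Ideal.mul_mem_mul (Ideal.mem_span_singleton_self _) (h.good_a r s w hz)

lemma Setup.mem_b (h : Setup I J a b) {r s : ℕ} {z : R} (hz : z ∈ nF I J (r, s + 1))
    (hz' : z ∈ Ideal.span {b}) : z ∈ Ideal.span {b} * nF I J (r, s) := by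
  obtain ⟨w, rfl⟩ := Ideal.mem_span_singleton.1 hz'
  exact Ideal.mul_mem_mul (Ideal.mem_span_singleton_self _) (h.good_b r s w hz)

lemma Setup.a_mem_nF (h : Setup I J a b) : a ∈ nF I J (1, 0) :=
  pow_le_nF I J 1 (by simpa using h.a_mem)

lemma Setup.b_mem_nF (h : Setup I J a b) : b ∈ nF I J (0, 1) := by
  rw [nF_swap]; exact h.symm.a_mem_nF

lemma mem_nF_zero (I J : Ideal R) (x : R) : x ∈ nF I J 0 := by rw [nF_zero]; trivial

/-- The homogeneous elements `a t₁, b t₂, σ` of the bigraded Rees ring. -/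
noncomputable def seq2 (h : Setup I J a b) (σ : R) : List (Σ γ, nF I J γ) :=
  [⟨(1, 0), a, h.a_mem_nF⟩, ⟨(0, 1), b, h.b_mem_nF⟩, ⟨0, σ, mem_nF_zero I J σ⟩]

lemma compSpan_single_zero {Γ : Type v} [AddCommMonoid Γ] [IsCancelAdd Γ] {F : Γ → Ideal R}
    (σ : R) (hσ : σ ∈ F 0) (γ : Γ) :
    compSpan [(⟨0, σ, hσ⟩ : Σ γ, F γ)] γ = Ideal.span {σ} * F γ := by
  rw [compSpan_cons_add _ _ γ γ (add_zero γ), compSpan, sup_bot_eq]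

lemma compSpan_seq2_succ_succ (h : Setup I J a b) (σ : R) (r s : ℕ) :
    nF I J (r + 1, s + 1) ≤ compSpan (seq2 h σ) (r + 1, s + 1) := by
  rw [seq2, compSpan_cons_add _ _ (r, s + 1) _ (by simp),
    compSpan_cons_add _ _ (r + 1, s) _ (by simp), ← sup_assoc]
  exact (h.jr r s).trans le_sup_left

lemma compSpan_seq2_succ_zero (h : Setup I J a b) (σ : R) (r : ℕ) :
    compSpan (seq2 h σ) (r + 1, 0) =
      Ideal.span {a} * nF I J (r, 0) ⊔ Ideal.span {σ} * nF I J (r + 1, 0) := by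
  rw [seq2, compSpan_cons_add _ _ (r, 0) _ (by simp), compSpan_cons_of_not _ _ _ (by simp),
    compSpan_single_zero]

lemma compSpan_seq2_zero_succ (h : Setup I J a b) (σ : R) (s : ℕ) :
    compSpan (seq2 h σ) (0, s + 1) =
      Ideal.span {b} * nF I J (0, s) ⊔ Ideal.span {σ} * nF I J (0, s + 1) := by
  rw [seq2, compSpan_cons_of_not _ _ _ (by simp), compSpan_cons_add _ _ (0, s) _ (by simp),
    compSpan_single_zero]

lemma compSpan_seq2_zero_zero (h : Setup I J a b) (σ : R) :
    compSpan (seq2 h σ) 0 = Ideal.span {σ} := by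
  rw [seq2, compSpan_cons_of_not _ _ _ (by simp), compSpan_cons_of_not _ _ _ (by simp),
    compSpan_single_zero, nF_zero, Ideal.mul_top]

/-- Step in the componentwise check that `σ = (a + b) ^ N` is regular modulo `a t₁`. -/
lemma Setup.sigma_step (h : Setup I J a b) (N : ℕ) {r s : ℕ} {z : R}
    (hz : z ∈ nF I J (r + 1, s)) (h' : (a + b) ^ N * z ∈ Ideal.span {a}) :
    z ∈ Ideal.span {a} * nF I J (r, s) := h.mem_a hz (h.reg_pow_a N z h')

theorem isWeaklyRegular_seq2 (h : Setup I J a b) (N : ℕ) :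
    IsWeaklyRegular (reesBar2 I J)
      ((seq2 h ((a + b) ^ N)).map (homEl (mem_reesBar2_nF I J))) := by
  have h1 : IsWeaklyRegular (reesBar2 I J)
      (([⟨(1, 0), a, h.a_mem_nF⟩] : List (Σ γ, nF I J γ)).map (homEl (mem_reesBar2_nF I J))) := by
    refine isWeaklyRegular_homEl_append _ [] _ (by simp) fun γ z hz hz' => ?_
    exact h.reg_a z hz'
  have h2 : IsWeaklyRegular (reesBar2 I J)
      (([⟨(1, 0), a, h.a_mem_nF⟩, ⟨(0, 1), b, h.b_mem_nF⟩] : List (Σ γ, nF I J γ)).map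
        (homEl (mem_reesBar2_nF I J))) := by
    refine isWeaklyRegular_homEl_append _ [_] _ h1 fun γ z hz hz' => ?_
    obtain ⟨r, s⟩ := γ
    cases r with
    | zero =>
      rw [compSpan_cons_of_not _ _ _ (by simp)] at hz'
      rw [h.reg_b z hz']
      exact zero_mem _
    | succ r =>
      rw [compSpan_cons_add _ _ (r, s + 1) _ (by simp), compSpan, sup_bot_eq] at hz'
      rw [compSpan_cons_add _ _ (r, s) _ (by simp), compSpan, sup_bot_eq]
      exact h.mem_a hz (h.reg_ab z (Ideal.mul_le_left hz'))
  refine isWeaklyRegular_homEl_append _ [_, _] _ h2 fun γ z hz hz' => ?_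
  obtain ⟨r, s⟩ := γ
  simp only [add_zero] at hz'
  cases r with
  | zero =>
    cases s with
    | zero =>
      rw [compSpan_cons_of_not _ _ _ (by simp), compSpan_cons_of_not _ _ _ (by simp)] at hz'
      rw [h.reg_pow N z hz']
      exact zero_mem _
    | succ s =>
      rw [compSpan_cons_of_not _ _ _ (by simp), compSpan_cons_add _ _ (0, s) _ (by simp),
        compSpan, sup_bot_eq] at hz' ⊢
      refine h.mem_b hz (h.symm.reg_pow_a N z ?_)
      rw [add_comm]
      exact Ideal.mul_le_left hz'
  | succ r =>
    cases s with
    | zero =>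
      rw [compSpan_cons_add _ _ (r, 0) _ (by simp), compSpan_cons_of_not _ _ _ (by simp),
        compSpan, sup_bot_eq] at hz' ⊢
      exact h.sigma_step N hz (Ideal.mul_le_left hz')
    | succ s =>
      rw [compSpan_cons_add _ _ (r, s + 1) _ (by simp),
        compSpan_cons_add _ _ (r + 1, s) _ (by simp), compSpan, sup_bot_eq]
      exact h.jr r s hz

/-- The homogeneous elements `a t, σ` of the Rees ring of the normal filtration of `I`. -/
noncomputable def seq1 (h : Setup I J a b) (σ : R) : List (Σ n : ℕ, nF I J (n, 0)) :=
  [⟨1, a, h.a_mem_nF⟩, ⟨0, σ, mem_nF_zero I J σ⟩]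

lemma compSpan_seq1_succ (h : Setup I J a b) (σ : R) (r : ℕ) :
    compSpan (seq1 h σ) (r + 1) =
      Ideal.span {a} * nF I J (r, 0) ⊔ Ideal.span {σ} * nF I J (r + 1, 0) := by
  rw [seq1, compSpan_cons_add _ _ r _ (by simp),
    compSpan_single_zero (F := fun n : ℕ => nF I J (n, 0))]

lemma compSpan_seq1_zero (h : Setup I J a b) (σ : R) :
    compSpan (seq1 h σ) 0 = Ideal.span {σ} := by
  rw [seq1, compSpan_cons_of_not _ _ _ (by simp),
    compSpan_single_zero (F := fun n : ℕ => nF I J (n, 0))]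
  have : nF I J (0, 0) = ⊤ := nF_zero I J
  rw [this, Ideal.mul_top]

theorem isWeaklyRegular_seq1 (h : Setup I J a b) (N : ℕ) :
    IsWeaklyRegular (reesBar1 I)
      ((seq1 h ((a + b) ^ N)).map (homEl (mem_reesBar1_nF I J))) := by
  have h1 : IsWeaklyRegular (reesBar1 I)
      (([⟨1, a, h.a_mem_nF⟩] : List (Σ n : ℕ, nF I J (n, 0))).map
        (homEl (mem_reesBar1_nF I J))) := by
    refine isWeaklyRegular_homEl_append _ [] _ (by simp) fun γ z hz hz' => ?_
    exact h.reg_a z hz'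
  refine isWeaklyRegular_homEl_append _ [_] _ h1 fun r z hz hz' => ?_
  simp only [add_zero] at hz'
  cases r with
  | zero =>
    rw [compSpan_cons_of_not _ _ _ (by simp)] at hz'
    rw [h.reg_pow N z hz']
    exact zero_mem _
  | succ r =>
    rw [compSpan_cons_add _ _ r _ (by simp), compSpan, sup_bot_eq] at hz' ⊢
    exact h.sigma_step N hz (Ideal.mul_le_left hz')

end Setup

/-! ### Cohen–Macaulayness implies `TwoGen` -/

section Star

variable {R : Type u} [CommRing R] {I J : Ideal R} {a b : R}

/-- `a' ∈ I ^ e` generates a reduction of `I ^ e` modulo `a`, with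
`I ^ (l + e) ⊆ a' I ^ l + (a)`, and `a'` is a nonzerodivisor modulo `a`. -/
structure Red (I : Ideal R) (a a' : R) (e l : ℕ) : Prop where
  one_le : 1 ≤ e
  mem : a' ∈ I ^ e
  le : I ^ (l + e) ≤ Ideal.span {a'} * I ^ l ⊔ Ideal.span {a}
  reg : ∀ z, a' * z ∈ Ideal.span {a} → z ∈ Ideal.span {a}

/-- The numerical form of Cohen–Macaulayness of the Rees ring: in degrees above `e` the normal
filtration of `I` is generated by `a` and `a'`. -/
def TwoGen (I J : Ideal R) (a a' : R) (e : ℕ) : Prop :=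
  ∀ m, nF I J (m + e + 1, 0) ≤
    Ideal.span {a} * nF I J (m + e, 0) ⊔ Ideal.span {a'} * nF I J (m + 1, 0)

lemma exists_sigma {a' σ : R} {e l : ℕ} (hr : Red I a a' e l) (hσ : σ ∈ I ^ (l + e)) :
    ∃ d ∈ I ^ l, ∃ w, σ = a' * d + a * w := by
  obtain ⟨p, hp, q, hq, rfl⟩ := Submodule.mem_sup.1 (hr.le hσ)
  obtain ⟨d, hd, rfl⟩ := Ideal.mem_span_singleton_mul.1 hp
  obtain ⟨w, rfl⟩ := Ideal.mem_span_singleton.1 hq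
  exact ⟨d, hd, w, rfl⟩

/-- Products of elements deep in the `I`-adic filtration with `d x` lie in the ideal generated by
`a t` and `σ`, where `σ ≡ a' d` modulo `a`. -/
lemma twoGen_aux (h : Setup I J a b) {a' σ d w : R} {e l : ℕ} (hr : Red I a a' e l)
    (hσ : σ = a' * d + a * w) {q D m : ℕ} (hq : D ≤ q + (l + e)) {u x : R}
    (hu : u ∈ I ^ (l + e) * nF I J (q, 0)) (hx : x ∈ nF I J (m + e + 1, 0)) :
    u * (d * x) ∈ Ideal.span {a} * nF I J (D + m, 0) ⊔
      Ideal.span {σ} * nF I J (D + m + 1, 0) := by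
  refine Submodule.mul_induction_on hu (fun g hg k hk => ?_) (fun y z hy hz => ?_)
  · obtain ⟨d', hd', w', rfl⟩ := exists_sigma hr hg
    have h1 : d' * k * x ∈ nF I J (D + m + 1, 0) := by
      have := nF_mul I J (nF_mul I J (pow_le_nF I J l hd') hk) hx
      refine nF_anti I J ?_ this
      simp only [Prod.mk_add_mk, Prod.mk_le_mk]
      omega
    have h2 : (a' * d' + a * w') * k * (d * x) ∈ nF I J (D + m + 1, 0) := by
      have := nF_mul I J (nF_mul I J (pow_le_nF I J _ hg) hk) hx
      have := Ideal.mul_mem_left _ d (nF_anti I J (γ := (D + m + 1, 0)) ?_ this)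
      · convert this using 1; ring
      · simp only [Prod.mk_add_mk, Prod.mk_le_mk]
        omega
    have h3 : (a' * d' + a * w') * k * (d * x) - σ * (d' * k * x) ∈ Ideal.span {a} := by
      refine Ideal.mem_span_singleton.2 ⟨w' * k * (d * x) - w * (d' * k * x), ?_⟩
      rw [hσ]; ring
    have h4 := h.mem_a (sub_mem h2 (Ideal.mul_mem_left _ σ h1)) h3
    have h5 : σ * (d' * k * x) ∈ Ideal.span {σ} * nF I J (D + m + 1, 0) :=
      Ideal.mul_mem_mul (Ideal.mem_span_singleton_self _) h1
    have := Submodule.add_mem_sup h4 h5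
    rwa [sub_add_cancel] at this
  · rw [add_mul]; exact add_mem hy hz

/-- From `d x ∈ (a t, σ)` in degree `m + 1` to the decomposition of `x`. -/
lemma twoGen_of_mem (h : Setup I J a b) {a' d w : R} {e l N : ℕ} (hr : Red I a a' e l)
    (hσ : (a + b) ^ N = a' * d + a * w) {m : ℕ} {x : R} (hx : x ∈ nF I J (m + e + 1, 0))
    (hm : d * x ∈ Ideal.span {a} * nF I J (m, 0) ⊔
      Ideal.span {(a + b) ^ N} * nF I J (m + 1, 0)) :
    x ∈ Ideal.span {a} * nF I J (m + e, 0) ⊔ Ideal.span {a'} * nF I J (m + 1, 0) := by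
  obtain ⟨p, hp, q, hq, hpq⟩ := Submodule.mem_sup.1 hm
  obtain ⟨α, hα, rfl⟩ := Ideal.mem_span_singleton_mul.1 hp
  obtain ⟨β, hβ, rfl⟩ := Ideal.mem_span_singleton_mul.1 hq
  have h1 : d * (x - a' * β) ∈ Ideal.span {a} := by
    refine Ideal.mem_span_singleton.2 ⟨α + w * β, ?_⟩
    rw [mul_sub, ← hpq, hσ]; ring
  have h2 : x - a' * β ∈ Ideal.span {a} := by
    refine h.reg_pow_a N _ ?_
    have : (a + b) ^ N * (x - a' * β) =
        a' * (d * (x - a' * β)) + (w * (x - a' * β)) * a := by rw [hσ]; ring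
    rw [this]
    exact add_mem (Ideal.mul_mem_left _ _ h1)
      (Ideal.mul_mem_left _ _ (Ideal.mem_span_singleton_self _))
  have h3 : a' * β ∈ nF I J (m + e + 1, 0) := by
    have := nF_mul I J (pow_le_nF I J e hr.mem) hβ
    rw [Prod.mk_add_mk, add_zero] at this
    rwa [show m + e + 1 = e + (m + 1) by omega]
  have h4 := h.mem_a (sub_mem hx h3) h2
  have h5 : a' * β ∈ Ideal.span {a'} * nF I J (m + 1, 0) :=
    Ideal.mul_mem_mul (Ideal.mem_span_singleton_self _) hβ
  have := Submodule.add_mem_sup h4 h5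
  rwa [sub_add_cancel] at this

variable [IsLocalRing R]

lemma exists_pow_mem (h : Setup I J a b) (hI : I.radical = maximalIdeal R)
    (hJ : J.radical = maximalIdeal R) (k : ℕ) : ∃ N, (a + b) ^ N ∈ I ^ k := by
  have h1 : a + b ∈ I.radical := by
    refine add_mem (Ideal.le_radical h.a_mem) ?_
    rw [hI, ← hJ]; exact Ideal.le_radical h.b_mem
  obtain ⟨n, hn⟩ := h1
  exact ⟨n * k, by rw [pow_mul]; exact Ideal.pow_mem_pow hn k⟩

theorem twoGen_of_CM1 [IsNoetherianRing R] (h : Setup I J a b) (hdim : ringKrullDim R = 2)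
    (hI : I.radical = maximalIdeal R) (hJ : J.radical = maximalIdeal R)
    {a' : R} {e l : ℕ} (hr : Red I a a' e l) (hCM : IsCMRing (reesBar1 I)) :
    TwoGen I J a a' e := by
  intro m x hx
  obtain ⟨N, hN⟩ := exists_pow_mem h hI hJ (l + e)
  obtain ⟨d, hd, w, hσ⟩ := exists_sigma hr hN
  refine twoGen_of_mem h hr hσ hx ?_
  have hx' : d * x ∈ nF I J (m + 1, 0) := by
    refine Ideal.mul_mem_left _ _ (nF_anti I J ?_ hx)
    simp only [Prod.mk_le_mk]; omega
  rw [← compSpan_seq1_succ h]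
  refine mem_of_CM isPositive_nat (mem_reesBar1_nF I J) (hCM _ inferInstance) _
    (isWeaklyRegular_seq1 h N) ?_ (m + 1) (d * x) hx' ?_
  · refine three_le_dim (mem_reesBar1_nF I J) hdim I hI ?_ (nF_zero I J)
    simpa using pow_le_nF I J 1
  · intro j c hc hj
    obtain ⟨M, hM⟩ := pow_mem_pow_mul' I J hI hc hj (l + e)
    refine ⟨M, ?_⟩
    rw [homEl_pow, homEl_mul]
    refine homEl_mem_ofList _ _ _ ?_
    rw [← add_assoc, compSpan_seq1_succ h, smul_eq_mul, mul_comm M j]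
    exact twoGen_aux h hr hσ (by omega) hM hx

theorem twoGen_of_CM2 [IsNoetherianRing R] (h : Setup I J a b) (hdim : ringKrullDim R = 2)
    (hI : I.radical = maximalIdeal R) (hJ : J.radical = maximalIdeal R)
    {a' : R} {e l : ℕ} (hr : Red I a a' e l) (hCM : IsCMRing (reesBar2 I J)) :
    TwoGen I J a a' e := by
  intro m x hx
  obtain ⟨N, hN⟩ := exists_pow_mem h hI hJ (l + e)
  obtain ⟨d, hd, w, hσ⟩ := exists_sigma hr hN
  refine twoGen_of_mem h hr hσ hx ?_
  have hx' : d * x ∈ nF I J (m + 1, 0) := by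
    refine Ideal.mul_mem_left _ _ (nF_anti I J ?_ hx)
    simp only [Prod.mk_le_mk]; omega
  rw [← compSpan_seq2_succ_zero h]
  refine mem_of_CM isPositive_nat2 (mem_reesBar2_nF I J) (hCM _ inferInstance) _
    (isWeaklyRegular_seq2 h N) ?_ (m + 1, 0) (d * x) hx' ?_
  · refine four_le_dim (mem_reesBar2_nF I J) hdim I J hI hJ ?_ ?_ (nF_zero I J)
    · simpa using pow_le_nF I J 1
    · rw [nF_swap]; simpa using pow_le_nF J I 1
  · rintro ⟨j, t⟩ c hc hj
    cases t with
    | zero =>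
      obtain ⟨M, hM⟩ := pow_mem_pow_mul' I J hI hc (fun h0 => hj (by rw [h0]; rfl)) (l + e)
      refine ⟨M, ?_⟩
      rw [homEl_pow, homEl_mul]
      refine homEl_mem_ofList _ _ _ ?_
      have e1 : M • (j, 0) + (m + 1, 0) = (j * M + m + 1, 0) := by
        simp [mul_comm, add_assoc]
      rw [e1, compSpan_seq2_succ_zero h]
      exact twoGen_aux h hr hσ (by omega) hM hx
    | succ t =>
      refine ⟨1, ?_⟩
      rw [pow_one, homEl_mul]
      refine homEl_mem_ofList _ _ _ ?_
      have h1 := nF_mul I J hc hx'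
      have e1 : (j, t + 1) + (m + 1, 0) = (j + m + 1, t + 1) := by
        simp [add_assoc]
      rw [e1] at h1 ⊢
      exact compSpan_seq2_succ_succ h _ _ _ h1

end Star

/-! ### Existence of the data, and symmetry in `I` and `J` -/

section Exist

variable {R : Type u} [CommRing R] [IsLocalRing R] [IsNoetherianRing R] {I J : Ideal R} {a b : R}

lemma mem_of_pair_regular {A : Type u} [CommRing A] {a b : A} (h : IsWeaklyRegular A [a, b]) :
    (∀ z, a * z = 0 → z = 0) ∧ ∀ z, b * z ∈ Ideal.span {a} → z ∈ Ideal.span {a} := by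
  rw [isWeaklyRegular_iff_mem] at h
  constructor
  · intro z hz
    simpa using h 0 (by simp) z (by simpa using hz)
  · intro z hz
    simpa [Ideal.ofList_singleton] using h 1 (by simp) z (by simpa [Ideal.ofList_singleton] using hz)

/-- The joint reduction formula in degree `(1, 1)` shows that `(a, b)` has radical `𝔪`; regularity
of the pairs follows as `R` is Cohen–Macaulay. -/
lemma setup_of_good (hCM : IsCMLocalRing R) (hdim : ringKrullDim R = 2)
    (hI : I.radical = maximalIdeal R) (hJ : J.radical = maximalIdeal R)
    (hg : IsGoodJointReduction I J a b)
    (hjr : ∀ r s : ℤ, 1 ≤ r → 1 ≤ s → IJbar I J r s =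
      Ideal.span {a} * IJbar I J (r - 1) s ⊔ Ideal.span {b} * IJbar I J r (s - 1)) :
    maximalIdeal R ≤ (Ideal.span {a, b}).radical ∧ Setup I J a b := by
  obtain ⟨ha, hb, -, hga, hgb⟩ := hg
  have hr : ∀ r s : ℕ, nF I J (r + 1, s + 1) ≤
      Ideal.span {a} * nF I J (r, s + 1) ⊔ Ideal.span {b} * nF I J (r + 1, s) := by
    intro r s
    have := hjr (r + 1 : ℕ) (s + 1 : ℕ) (by omega) (by omega)
    rw [show ((r + 1 : ℕ) : ℤ) - 1 = (r : ℕ) by omega,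
      show ((s + 1 : ℕ) : ℤ) - 1 = (s : ℕ) by omega] at this
    exact this.le
  have ham : a ∈ maximalIdeal R := hI ▸ Ideal.le_radical ha
  have hbm : b ∈ maximalIdeal R := hJ ▸ Ideal.le_radical hb
  have hrad : maximalIdeal R ≤ (Ideal.span {a, b}).radical := by
    intro x hx
    obtain ⟨n, hn⟩ := (hI ▸ hx : x ∈ I.radical)
    obtain ⟨k, hk⟩ := (hJ ▸ hx : x ∈ J.radical)
    refine ⟨n + k, ?_⟩
    have h1 : x ^ (n + k) ∈ nF I J (1, 1) := by
      rw [pow_add]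
      have := le_IJbar I J 1 1
      refine this ?_
      simpa using Ideal.mul_mem_mul hn hk
    have h2 := hr 0 0 h1
    rw [Ideal.span_insert]
    refine (?_ : _ ≤ Ideal.span {a} ⊔ Ideal.span {b}) h2
    exact sup_le_sup Ideal.mul_le_left Ideal.mul_le_left
  have p1 := (mem_of_pair_regular (hCM.pair_regular hdim a b ham hbm hrad))
  have p2 := (mem_of_pair_regular (hCM.pair_regular hdim b a hbm ham (by rwa [Set.pair_comm])))
  have hrad' : maximalIdeal R ≤ (Ideal.span {a + b, a}).radical := by
    refine hrad.trans (Ideal.radical_mono ?_)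
    rw [Ideal.span_le]
    rintro x (rfl | rfl)
    · exact Ideal.subset_span (by simp)
    · have : x = (a + x) - a := by ring
      rw [this]
      exact sub_mem (Ideal.subset_span (by simp)) (Ideal.subset_span (by simp))
  have p3 := (mem_of_pair_regular (hCM.pair_regular hdim (a + b) a (add_mem ham hbm) ham hrad'))
  refine ⟨hrad, ha, hb, ?_, ?_, hr, p1.1, p2.1, p1.2, p2.2, p3.1, p3.2⟩
  · intro r s z hz
    have := hga (r + 1 : ℕ) s (by omega)
    rw [show ((r + 1 : ℕ) : ℤ) - 1 = (r : ℕ) by omega] at this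
    have h1 : a * z ∈ Ideal.span {a} * IJbar I J r s := by
      rw [← this]
      exact ⟨Ideal.mul_mem_right _ _ (Ideal.mem_span_singleton_self _), hz⟩
    obtain ⟨w, hw, e⟩ := Ideal.mem_span_singleton_mul.1 h1
    have : z = w := sub_eq_zero.1 (p1.1 _ (by rw [mul_sub, e, sub_self]))
    exact this ▸ hw
  · intro r s z hz
    have := hgb r (s + 1 : ℕ) (by omega)
    rw [show ((s + 1 : ℕ) : ℤ) - 1 = (s : ℕ) by omega] at this
    have h1 : b * z ∈ Ideal.span {b} * IJbar I J r s := by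
      rw [← this]
      exact ⟨Ideal.mul_mem_right _ _ (Ideal.mem_span_singleton_self _), hz⟩
    obtain ⟨w, hw, e⟩ := Ideal.mem_span_singleton_mul.1 h1
    have : z = w := sub_eq_zero.1 (p2.1 _ (by rw [mul_sub, e, sub_self]))
    exact this ▸ hw

lemma exists_red (hCM : IsCMLocalRing R) (hdim : ringKrullDim R = 2)
    (hI : I.radical = maximalIdeal R) (ha : a ∈ I) (hb : b ∈ maximalIdeal R)
    (hab : maximalIdeal R ≤ (Ideal.span {a, b}).radical) :
    ∃ a' e l, Red I a a' e l := by
  have ham : a ∈ maximalIdeal R := hI ▸ Ideal.le_radical ha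
  obtain ⟨e, he, a', ha', l, hl⟩ := exists_reduction_mod I a b hI ham hb hab
  refine ⟨a', e, l, he, ha', hl, ?_⟩
  have hIm : I ≤ maximalIdeal R := hI ▸ Ideal.le_radical
  have ham' : a' ∈ maximalIdeal R := hIm (Ideal.pow_le_self (by omega) ha')
  have hrad : maximalIdeal R ≤ (Ideal.span {a, a'}).radical := by
    intro x hx
    obtain ⟨n, hn⟩ := (hI ▸ hx : x ∈ I.radical)
    refine ⟨n * (l + e), ?_⟩
    rw [pow_mul, Ideal.span_insert, sup_comm]
    refine (?_ : _ ≤ Ideal.span {a'} ⊔ Ideal.span {a}) (hl (Ideal.pow_mem_pow hn _))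
    exact sup_le_sup Ideal.mul_le_left le_rfl
  exact (mem_of_pair_regular (hCM.pair_regular hdim a a' ham ham' hrad)).2

end Exist

section Swap

theorem IsCMRing.of_ringEquiv {A : Type u} {B : Type v} [CommRing A] [CommRing B] (e : A ≃+* B)
    (h : IsCMRing A) : IsCMRing B := by
  intro P hP
  have hP' : (P.comap (e : A →+* B)).IsPrime := inferInstance
  refine IsCMLocalRing.of_ringEquiv ?_ (h _ hP')
  refine IsLocalization.ringEquivOfRingEquiv (M := (P.comap (e : A →+* B)).primeCompl)
    (T := P.primeCompl) _ _ e ?_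
  ext x
  simp only [Submonoid.mem_map]
  constructor
  · rintro ⟨y, hy, rfl⟩
    exact hy
  · intro hx
    exact ⟨e.symm x, by simpa [Ideal.primeCompl] using hx, by simp⟩

variable {R : Type u} [CommRing R] (I J : Ideal R)

/-- Interchanging `t₁` and `t₂`. -/
noncomputable def swapEquiv : reesBar2 I J ≃+* reesBar2 J I := by
  let θ : AddMonoidAlgebra R (ℕ × ℕ) ≃ₐ[R] AddMonoidAlgebra R (ℕ × ℕ) :=
    AddMonoidAlgebra.domCongr R R AddEquiv.prodComm
  have hθ : ∀ (f : AddMonoidAlgebra R (ℕ × ℕ)) (γ : ℕ × ℕ), (θ f).coeff γ = f.coeff γ.swap := by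
    intro f γ
    simp [θ, AddMonoidAlgebra.domCongr]
  have h : ∀ (I J : Ideal R) (f : reesBar2 I J), θ f ∈ reesBar2 J I := by
    intro I J f
    rw [mem_reesBar2_nF]
    rintro ⟨r, s⟩
    rw [hθ, nF_swap]
    exact (mem_reesBar2_nF I J _).1 f.2 (s, r)
  have hh : ∀ f, θ (θ f) = f := by
    intro f
    ext γ
    rw [hθ, hθ, Prod.swap_swap]
  exact
    { toFun f := ⟨θ f, h I J f⟩
      invFun f := ⟨θ f, h J I f⟩
      left_inv f := Subtype.ext (hh f)
      right_inv f := Subtype.ext (hh f)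
      map_mul' f g := Subtype.ext (map_mul θ _ _)
      map_add' f g := Subtype.ext (map_add θ _ _) }

end Swap

/-! ### The last member of the regular sequence -/

/-- A prime which is minimal over a regular sequence has Cohen–Macaulay localization. -/
theorem isCMLocalRing_of_minimal {S : Type u} [CommRing S] [IsNoetherianRing S] (𝔐 : Ideal S)
    [𝔐.IsPrime] (rs : List S) (hreg : IsWeaklyRegular S rs) (hmem : ∀ r ∈ rs, r ∈ 𝔐)
    (hmin : ∀ P : Ideal S, P.IsPrime → (∀ r ∈ rs, r ∈ P) → 𝔐 ≤ P) :
    IsCMLocalRing (Localization.AtPrime 𝔐) := by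
  classical
  refine isCMLocalRing_of_le (rs.map (algebraMap S _)) ?_
    (hreg.of_isLocalization (Localization.AtPrime 𝔐) 𝔐.primeCompl) ?_
  · intro x hx
    obtain ⟨r, hr, rfl⟩ := List.mem_map.1 hx
    exact (IsLocalization.AtPrime.to_map_mem_maximal_iff (Localization.AtPrime 𝔐) 𝔐 r).2 (hmem r hr)
  · rw [IsLocalization.AtPrime.ringKrullDim_eq_height 𝔐 (Localization.AtPrime 𝔐), List.length_map]
    have h1 : 𝔐 ∈ (Ideal.span (rs.toFinset : Set S)).minimalPrimes := by
      refine ⟨⟨inferInstance, ?_⟩, fun P hP _ => hmin P hP.1 fun r hr => hP.2 ?_⟩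
      · rw [Ideal.span_le]
        intro r hr
        exact hmem r (by simpa using hr)
      · exact Ideal.subset_span (by simpa using hr)
    have h2 := Ideal.height_le_card_of_mem_minimalPrimes_span_finset h1
    have h3 : 𝔐.height ≤ (rs.length : ℕ∞) := h2.trans (by exact_mod_cast rs.toFinset_card_le)
    exact WithBot.coe_le_coe.2 h3

section Graded

variable {R : Type u} [CommRing R] {Γ : Type v} [AddCommMonoid Γ]
  {S : Subalgebra R (AddMonoidAlgebra R Γ)} {F : Γ → Ideal R}

/-- A graded ring generated by finitely many of its components is Noetherian. -/
lemma isNoetherian_of_generated [IsNoetherianRing R] (hS : ∀ f, f ∈ S ↔ ∀ γ, f.coeff γ ∈ F γ)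
    (D : Set Γ) (hD : D.Finite)
    (h : ∀ T : Subalgebra R (AddMonoidAlgebra R Γ), (∀ γ ∈ D, F γ ≤ compIdeal T γ) →
      ∀ γ, F γ ≤ compIdeal T γ) : IsNoetherianRing S := by
  classical
  have hfg : ∀ γ, ∃ G : Set R, G.Finite ∧ Ideal.span G = F γ := fun γ =>
    Submodule.fg_def.1 (IsNoetherian.noetherian (F γ))
  choose G hGf hG using hfg
  let X : Set (AddMonoidAlgebra R Γ) := ⋃ γ ∈ D, AddMonoidAlgebra.single γ '' G γ
  have hX : X.Finite := hD.biUnion fun γ _ => (hGf γ).image _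
  have hST : S = Algebra.adjoin R X := by
    apply le_antisymm
    · intro f hf
      refine mem_of_forall_single _ _ fun γ => ?_
      refine h (Algebra.adjoin R X) (fun δ hδ => ?_) γ ((hS f).1 hf γ)
      rw [← hG, Ideal.span_le]
      intro g hg
      exact Algebra.subset_adjoin (Set.mem_biUnion hδ ⟨g, hg, rfl⟩)
    · refine Algebra.adjoin_le ?_
      intro f hf
      obtain ⟨γ, hγ, g, hg, rfl⟩ := Set.mem_iUnion₂.1 hf
      exact (homEl hS ⟨γ, g, by rw [← hG]; exact Ideal.subset_span hg⟩).2
  have : S.FG := by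
    rw [hST]
    exact ⟨hX.toFinset, by simp⟩
  have : Algebra.FiniteType R S := S.fg_iff_finiteType.1 this
  exact Algebra.FiniteType.isNoetherianRing R S

lemma coeff_mul_homEl_eq_zero (hS : ∀ f, f ∈ S ↔ ∀ γ, f.coeff γ ∈ F γ) (y : Σ γ, F γ) (g : S)
    (γ : Γ) (h : ∀ γ', γ' + y.1 ≠ γ) :
    ((homEl hS y * g : S) : AddMonoidAlgebra R Γ).coeff γ = 0 := by
  rw [MulMemClass.coe_mul, homEl_val]
  refine AddMonoidAlgebra.coeff_single_mul_of_forall_add_ne _ _ fun d hd => h d ?_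
  rw [add_comm]; exact hd

lemma coeff_mul_homEl_zero [IsCancelAdd Γ] (hS : ∀ f, f ∈ S ↔ ∀ γ, f.coeff γ ∈ F γ) (x : R)
    (hx : x ∈ F 0) (g : S) (γ : Γ) :
    ((homEl hS ⟨0, x, hx⟩ * g : S) : AddMonoidAlgebra R Γ).coeff γ =
      x * (g : AddMonoidAlgebra R Γ).coeff γ := by
  simpa only [add_zero] using coeff_mul_homEl hS ⟨0, x, hx⟩ g γ

lemma mem_sup_of_mem_mul_sup {A B C : Ideal R} {x : R} (h : x ∈ A * B ⊔ C) : x ∈ A ⊔ C := by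
  have : A * B ⊔ C ≤ A ⊔ C := sup_le_sup_right Ideal.mul_le_left C
  exact this h

lemma coeff_homEl_zero (hS : ∀ f, f ∈ S ↔ ∀ γ, f.coeff γ ∈ F γ) {γ : Γ} (x : R) (hx : x ∈ F γ)
    (h : γ ≠ 0) : (homEl hS ⟨γ, x, hx⟩ : AddMonoidAlgebra R Γ).coeff 0 = 0 := by
  classical
  rw [homEl_val, AddMonoidAlgebra.coeff_single, Finsupp.single_apply, if_neg h]

lemma coeff_homEl_self (hS : ∀ f, f ∈ S ↔ ∀ γ, f.coeff γ ∈ F γ) {γ : Γ} (x : R) (hx : x ∈ F γ) :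
    (homEl hS ⟨γ, x, hx⟩ : AddMonoidAlgebra R Γ).coeff γ = x := by
  rw [homEl_val, AddMonoidAlgebra.coeff_single, Finsupp.single_eq_same]

lemma homEl_mem_of_compSpan [IsCancelAdd Γ] (hS : ∀ f, f ∈ S ↔ ∀ γ, f.coeff γ ∈ F γ)
    (P : Ideal S) (ys : List (Σ γ, F γ)) (hys : ∀ y ∈ ys, homEl hS y ∈ P) {γ : Γ} {x : R}
    (hx : x ∈ F γ) (h : x ∈ compSpan ys γ) : homEl hS ⟨γ, x, hx⟩ ∈ P := by
  have h1 : Ideal.ofList (ys.map (homEl hS)) ≤ P := by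
    refine Ideal.span_le.2 ?_
    intro z hz
    obtain ⟨y, hy, rfl⟩ := List.mem_map.1 hz
    exact hys y hy
  exact h1 (homEl_mem_ofList hS ys hx h)

lemma homEl_add (hS : ∀ f, f ∈ S ↔ ∀ γ, f.coeff γ ∈ F γ) {γ : Γ} {x y : R}
    (hx : x ∈ F γ) (hy : y ∈ F γ) :
    homEl hS ⟨γ, x + y, add_mem hx hy⟩ = homEl hS ⟨γ, x, hx⟩ + homEl hS ⟨γ, y, hy⟩ := by
  apply Subtype.ext
  simp [homEl_val]

end Graded

section Tau

variable {R : Type u} [CommRing R] {I J : Ideal R} {a b : R}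

/-- The componentwise regularity of `a' t ^ e` modulo `a t` and `σ = a + b`; this is the step
where `TwoGen` is used. -/
lemma tau_step (h : Setup I J a b) {a' : R} {e l : ℕ} (hr : Red I a a' e l)
    (hs : TwoGen I J a a' e) {r : ℕ} {z : R} (hz : z ∈ nF I J (r + 1, 0))
    (hz' : a' * z ∈ Ideal.span {a} ⊔ Ideal.span {a + b} * nF I J (r + e + 1, 0)) :
    z ∈ Ideal.span {a} * nF I J (r, 0) ⊔ Ideal.span {a + b} * nF I J (r + 1, 0) := by
  obtain ⟨p, hp, q, hq, hpq⟩ := Submodule.mem_sup.1 hz'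
  obtain ⟨u, rfl⟩ := Ideal.mem_span_singleton.1 hp
  obtain ⟨v, hv, rfl⟩ := Ideal.mem_span_singleton_mul.1 hq
  obtain ⟨p', hp', q', hq', hv'⟩ := Submodule.mem_sup.1 (hs r hv)
  obtain ⟨α, hα, rfl⟩ := Ideal.mem_span_singleton_mul.1 hp'
  obtain ⟨β, hβ, rfl⟩ := Ideal.mem_span_singleton_mul.1 hq'
  have h1 : z - (a + b) * β ∈ Ideal.span {a} := by
    refine hr.reg _ (Ideal.mem_span_singleton.2 ⟨u + (a + b) * α, ?_⟩)
    rw [mul_sub, ← hpq, ← hv']; ring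
  have h2 := h.mem_a (sub_mem hz (Ideal.mul_mem_left _ (a + b) hβ)) h1
  have h3 : (a + b) * β ∈ Ideal.span {a + b} * nF I J (r + 1, 0) :=
    Ideal.mul_mem_mul (Ideal.mem_span_singleton_self _) hβ
  have := Submodule.add_mem_sup h2 h3
  rwa [sub_add_cancel] at this

lemma Red.mem_nF {a' : R} {e l : ℕ} (hr : Red I a a' e l) (J : Ideal R) : a' ∈ nF I J (e, 0) :=
  pow_le_nF I J e hr.mem

lemma Red.mem_nF' {a' : R} {e l : ℕ} (hr : Red I a a' e l) (J : Ideal R) : a' ∈ nF J I (0, e) := by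
  rw [nF_swap]; exact hr.mem_nF J

section One

/-- The inhomogeneous element `a' t ^ e + a` of the Rees ring of the normal filtration of `I`. -/
noncomputable def tau1 (I J : Ideal R) (a : R) {a' : R} {e l : ℕ} (hr : Red I a a' e l) :
    reesBar1 I :=
  homEl (mem_reesBar1_nF I J) ⟨e, a', hr.mem_nF J⟩ +
    homEl (mem_reesBar1_nF I J) ⟨0, a, mem_nF_zero I J a⟩

theorem isWeaklyRegular_tau1 (h : Setup I J a b) {a' : R} {e l : ℕ} (hr : Red I a a' e l)
    (hs : TwoGen I J a a' e) :
    IsWeaklyRegular (reesBar1 I)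
      ((seq1 h ((a + b) ^ 1)).map (homEl (mem_reesBar1_nF I J)) ++ [tau1 I J a hr]) := by
  refine isWeaklyRegular_append_singleton _ _ (isWeaklyRegular_seq1 h 1) fun f hf => ?_
  have hS := mem_reesBar1_nF I J
  have he := hr.one_le
  rw [mem_ofList_homEl] at hf ⊢
  rw [pow_one] at hf ⊢
  have hc : ∀ γ, f.1.coeff γ ∈ nF I J (γ, 0) := (hS _).1 f.2
  intro γ
  cases γ with
  | zero =>
    have h0 := hf 0
    rw [tau1, add_mul, AddMemClass.coe_add, AddMonoidAlgebra.coeff_add, Finsupp.add_apply,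
      coeff_mul_homEl_eq_zero _ _ _ _ (by intro γ'; simp; omega), zero_add,
      coeff_mul_homEl_zero, compSpan_seq1_zero] at h0
    rw [compSpan_seq1_zero]
    exact h.reg_add_a _ h0
  | succ r =>
    have h0 := hf (r + 1 + e)
    have h1 := coeff_mul_homEl hS ⟨e, a', hr.mem_nF J⟩ f (r + 1)
    rw [tau1, add_mul, AddMemClass.coe_add, AddMonoidAlgebra.coeff_add, Finsupp.add_apply,
      h1, coeff_mul_homEl_zero, show r + 1 + e = r + e + 1 by omega, compSpan_seq1_succ] at h0
    rw [compSpan_seq1_succ]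
    refine tau_step h hr hs (hc _) ?_
    have h3 : a' * f.1.coeff (r + 1) = (a' * f.1.coeff (r + 1) + a * f.1.coeff (r + e + 1)) -
      a * f.1.coeff (r + e + 1) := by ring
    rw [h3]
    refine sub_mem (mem_sup_of_mem_mul_sup h0) ?_
    exact Submodule.mem_sup_left (Ideal.mul_mem_right _ _ (Ideal.mem_span_singleton_self _))

end One

end Tau

/-! ### `TwoGen` implies Cohen–Macaulayness of the Rees ring of one ideal -/

section One

variable {R : Type u} [CommRing R] {I J : Ideal R} {a b : R}

/-- Under `TwoGen`, a multiplicative family of ideals containing `\overline{I^n}` for `n ≤ e`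
contains it for all `n`. -/
lemma axis_le (h : Setup I J a b) {a' : R} {e l : ℕ} (hr : Red I a a' e l)
    (hs : TwoGen I J a a' e) (G : ℕ → Ideal R) (hG : ∀ m n, G m * G n ≤ G (m + n))
    (hT : ∀ n ≤ e, nF I J (n, 0) ≤ G n) (n : ℕ) : nF I J (n, 0) ≤ G n := by
  have he := hr.one_le
  induction n using Nat.strong_induction_on with
  | _ n ih =>
    rcases le_or_gt n e with hn | hn
    · exact hT n hn
    obtain ⟨m, rfl⟩ : ∃ m, n = m + e + 1 := ⟨n - e - 1, by omega⟩
    refine (hs m).trans (sup_le ?_ ?_)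
    · refine (Ideal.mul_mono ?_ (ih (m + e) (by omega))).trans
        ((hG 1 (m + e)).trans (le_of_eq (congrArg _ (by omega))))
      rw [Ideal.span_singleton_le_iff_mem]
      exact hT 1 he h.a_mem_nF
    · refine (Ideal.mul_mono ?_ (ih (m + 1) (by omega))).trans
        ((hG e (m + 1)).trans (le_of_eq (congrArg _ (by omega))))
      rw [Ideal.span_singleton_le_iff_mem]
      exact hT e le_rfl (hr.mem_nF J)

lemma isNoetherian_reesBar1 [IsNoetherianRing R] (h : Setup I J a b) {a' : R} {e l : ℕ}
    (hr : Red I a a' e l) (hs : TwoGen I J a a' e) : IsNoetherianRing (reesBar1 I) := by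
  refine isNoetherian_of_generated (mem_reesBar1_nF I J) (Set.Iic e) (Set.finite_Iic e) ?_
  intro T hT
  exact axis_le h hr hs (compIdeal T) (compIdeal_mul_le T) fun n hn => hT n hn

/-- A prime ideal containing the constants `a` and `b` contains all constants in `𝔪`. -/
lemma homEl_zero_mem_of_radical {Γ : Type v} [AddCommMonoid Γ] [IsCancelAdd Γ]
    {S : Subalgebra R (AddMonoidAlgebra R Γ)} {F : Γ → Ideal R}
    (hS : ∀ f, f ∈ S ↔ ∀ γ, f.coeff γ ∈ F γ) (h0 : F 0 = ⊤) (P : Ideal S) [P.IsPrime]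
    (ha : a ∈ F 0) (hb : b ∈ F 0) (haP : homEl hS ⟨0, a, ha⟩ ∈ P) (hbP : homEl hS ⟨0, b, hb⟩ ∈ P)
    {x : R} (hx : x ∈ F 0) (hrad : x ∈ (Ideal.span {a, b}).radical) : homEl hS ⟨0, x, hx⟩ ∈ P := by
  obtain ⟨n, hn⟩ := hrad
  refine Ideal.IsPrime.mem_of_pow_mem ‹_› n ?_
  rw [homEl_pow]
  refine homEl_mem_of_compSpan hS P [⟨0, a, ha⟩, ⟨0, b, hb⟩] (by simp [haP, hbP]) _ ?_
  rw [smul_zero, compSpan_cons_add _ _ 0 _ (by simp), compSpan_single_zero]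
  change x ^ n ∈ Ideal.span {a} * F 0 ⊔ Ideal.span {b} * F 0
  rw [h0, Ideal.mul_top, Ideal.mul_top, ← Ideal.span_insert]
  exact hn

/-- A prime containing `a t, a + b, a' t^e + a` contains `a^2`, hence `a`, `b` and `a' t^e`, hence by
`TwoGen` the homogeneous maximal ideal; so the latter is minimal over this regular sequence. -/
theorem CM1_of_twoGen [IsLocalRing R] [IsNoetherianRing R] (h : Setup I J a b)
    (hI : I.radical = maximalIdeal R) (hJ : J.radical = maximalIdeal R)
    (hrad : maximalIdeal R ≤ (Ideal.span {a, b}).radical)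
    {a' : R} {e l : ℕ} (hr : Red I a a' e l) (hs : TwoGen I J a a' e) :
    IsCMRing (reesBar1 I) := by
  have hN := isNoetherian_reesBar1 h hr hs
  have hS := mem_reesBar1_nF I J
  have he := hr.one_le
  have ham : a ∈ maximalIdeal R := hI ▸ Ideal.le_radical h.a_mem
  have hbm : b ∈ maximalIdeal R := hJ ▸ Ideal.le_radical h.b_mem
  refine isCMRing_of_zeroPart1 hS ?_
  refine isCMLocalRing_of_minimal _ _ (isWeaklyRegular_tau1 h hr hs) ?_ ?_
  · intro x hx
    rw [mem_zeroPart]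
    rw [pow_one] at hx
    simp only [seq1, List.map_cons, List.map_nil, List.cons_append, List.nil_append,
      List.mem_cons, List.not_mem_nil, or_false] at hx
    rcases hx with rfl | rfl | rfl
    · rw [coeff_homEl_zero _ _ _ (by simp)]; exact zero_mem _
    · rw [coeff_homEl_self]; exact add_mem ham hbm
    · rw [tau1, AddMemClass.coe_add, AddMonoidAlgebra.coeff_add, Finsupp.add_apply,
        coeff_homEl_zero _ _ _ (by omega), coeff_homEl_self, zero_add]
      exact ham
  · intro P hP hPr
    rw [pow_one] at hPr
    simp only [seq1, List.map_cons, List.map_nil, List.cons_append, List.nil_append,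
      List.forall_mem_cons] at hPr
    obtain ⟨h1, h2, h3, -⟩ := hPr
    have hα : homEl hS ⟨0, a, mem_nF_zero I J a⟩ ∈ P := by
      refine (hP.mul_mem_iff_mem_or_mem.1 ?_).elim id id
      have e1 : homEl hS ⟨0, a, mem_nF_zero I J a⟩ * homEl hS ⟨e, a', hr.mem_nF J⟩ ∈ P := by
        rw [homEl_mul]
        refine homEl_mem_of_compSpan hS P [⟨1, a, h.a_mem_nF⟩] (by simpa using h1) _ ?_
        rw [compSpan_cons_add _ _ (e - 1) _ (by simp; omega), compSpan, sup_bot_eq]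
        refine Ideal.mul_mem_mul (Ideal.mem_span_singleton_self _)
          (nF_anti I J ?_ (hr.mem_nF J))
        simp
      have e2 := P.mul_mem_left (homEl hS ⟨0, a, mem_nF_zero I J a⟩) h3
      rw [tau1, mul_add] at e2
      exact (P.add_mem_iff_right e1).1 e2
    have hY : homEl hS ⟨e, a', hr.mem_nF J⟩ ∈ P := (P.add_mem_iff_left hα).1 h3
    have hβ : homEl hS ⟨0, b, mem_nF_zero I J b⟩ ∈ P := by
      refine (P.add_mem_iff_right hα).1 ?_
      rw [← homEl_add]; exact h2
    intro f hf
    rw [eq_sum_homEl hS f]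
    refine sum_mem fun γ _ => ?_
    rcases Nat.eq_zero_or_pos γ with rfl | hγ
    · exact homEl_zero_mem_of_radical hS (nF_zero I J) P _ _ hα hβ _ (hrad hf)
    · refine hP.mem_of_pow_mem (e + 1) ?_
      rw [homEl_pow]
      refine homEl_mem_of_compSpan hS P [⟨1, a, h.a_mem_nF⟩, ⟨e, a', hr.mem_nF J⟩]
        (by simp [h1, hY]) _ ?_
      have hm := F_pow hS ((hS _).1 f.2 γ) (e + 1)
      obtain ⟨m, hm'⟩ : ∃ m, (e + 1) • γ = m + e + 1 := by
        refine ⟨(e + 1) * γ - (e + 1), ?_⟩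
        have : (e + 1) * 1 ≤ (e + 1) * γ := Nat.mul_le_mul_left _ hγ
        rw [smul_eq_mul]; omega
      rw [hm'] at hm ⊢
      rw [compSpan_cons_add _ _ (m + e) _ (by simp),
        compSpan_cons_add _ _ (m + 1) _ (by simp; omega), compSpan, sup_bot_eq]
      exact hs m hm

end One

/-! ### `TwoGen` implies Cohen–Macaulayness of the bigraded Rees ring -/

section Two

variable {R : Type u} [CommRing R] {I J : Ideal R} {a b : R}

lemma isNoetherian_reesBar2 [IsNoetherianRing R] (h : Setup I J a b) {a' b' : R} {e l e' l' : ℕ}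
    (hr : Red I a a' e l) (hs : TwoGen I J a a' e) (hr' : Red J b b' e' l')
    (hs' : TwoGen J I b b' e') : IsNoetherianRing (reesBar2 I J) := by
  have he := hr.one_le
  have he' := hr'.one_le
  refine isNoetherian_of_generated (mem_reesBar2_nF I J) (Set.Iic (e, e')) (Set.finite_Iic _) ?_
  intro T hT
  have h1 : ∀ n, nF I J (n, 0) ≤ compIdeal T (n, 0) :=
    axis_le h hr hs (fun n => compIdeal T (n, 0))
      (fun m n => compIdeal_mul_le T (m, 0) (n, 0)) fun n hn =>
        hT (n, 0) (Prod.mk_le_mk.2 ⟨hn, Nat.zero_le _⟩)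
  have h2 : ∀ n, nF I J (0, n) ≤ compIdeal T (0, n) := fun n => by
    rw [nF_swap]
    refine axis_le h.symm hr' hs' (fun n => compIdeal T (0, n))
      (fun m n => compIdeal_mul_le T (0, m) (0, n)) (fun n hn => ?_) n
    rw [nF_swap]
    exact hT (0, n) (Prod.mk_le_mk.2 ⟨Nat.zero_le _, hn⟩)
  have ha : Ideal.span {a} ≤ compIdeal T (1, 0) := by
    rw [Ideal.span_singleton_le_iff_mem]; exact h1 1 h.a_mem_nF
  have hb : Ideal.span {b} ≤ compIdeal T (0, 1) := by
    rw [Ideal.span_singleton_le_iff_mem]; exact h2 1 h.b_mem_nF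
  rintro ⟨r, s⟩
  induction r generalizing s with
  | zero => exact h2 s
  | succ r ihr =>
    induction s with
    | zero => exact h1 _
    | succ s ihs =>
      refine (h.jr r s).trans (sup_le ?_ ?_)
      · refine (Ideal.mul_mono ha (ihr (s + 1))).trans
          ((compIdeal_mul_le T _ _).trans (le_of_eq (congrArg _ ?_)))
        ext <;> simp [add_comm]
      · refine (Ideal.mul_mono hb ihs).trans
          ((compIdeal_mul_le T _ _).trans (le_of_eq (congrArg _ ?_)))
        ext <;> simp [add_comm]

/-- The inhomogeneous element `a' t₁ ^ e + b' t₂ ^ e' + a` of the bigraded Rees ring. -/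
noncomputable def tau2 {a' b' : R} {e l e' l' : ℕ}
    (hr : Red I a a' e l) (hr' : Red J b b' e' l') : reesBar2 I J :=
  homEl (mem_reesBar2_nF I J) ⟨(e, 0), a', hr.mem_nF J⟩ +
    homEl (mem_reesBar2_nF I J) ⟨(0, e'), b', hr'.mem_nF' I⟩ +
      homEl (mem_reesBar2_nF I J) ⟨0, a, mem_nF_zero I J a⟩

theorem isWeaklyRegular_tau2 (h : Setup I J a b) {a' b' : R} {e l e' l' : ℕ}
    (hr : Red I a a' e l) (hs : TwoGen I J a a' e) (hr' : Red J b b' e' l')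
    (hs' : TwoGen J I b b' e') :
    IsWeaklyRegular (reesBar2 I J)
      ((seq2 h ((a + b) ^ 1)).map (homEl (mem_reesBar2_nF I J)) ++ [tau2 hr hr']) := by
  refine isWeaklyRegular_append_singleton _ _ (isWeaklyRegular_seq2 h 1) fun f hf => ?_
  have hS := mem_reesBar2_nF I J
  have he := hr.one_le
  have he' := hr'.one_le
  rw [mem_ofList_homEl] at hf ⊢
  rw [pow_one] at hf ⊢
  have hc : ∀ γ, f.1.coeff γ ∈ nF I J γ := (hS _).1 f.2
  have hf' : ∀ γ, (homEl hS ⟨(e, 0), a', hr.mem_nF J⟩ * f).1.coeff γ +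
      (homEl hS ⟨(0, e'), b', hr'.mem_nF' I⟩ * f).1.coeff γ + a * f.1.coeff γ ∈
        compSpan (seq2 h (a + b)) γ := by
    intro γ
    have := hf γ
    rw [tau2, add_mul, add_mul, AddMemClass.coe_add, AddMemClass.coe_add,
      AddMonoidAlgebra.coeff_add, AddMonoidAlgebra.coeff_add, Finsupp.add_apply,
      Finsupp.add_apply, coeff_mul_homEl_zero] at this
    exact this
  rintro ⟨r, s⟩
  cases r with
  | zero =>
    cases s with
    | zero =>
      have h0 := hf' 0
      rw [coeff_mul_homEl_eq_zero _ _ _ _ (by simp; omega),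
        coeff_mul_homEl_eq_zero _ _ _ _ (by simp; omega), zero_add, zero_add,
        compSpan_seq2_zero_zero] at h0
      have e0 : ((0, 0) : ℕ × ℕ) = 0 := rfl
      rw [e0, compSpan_seq2_zero_zero]
      exact h.reg_add_a _ h0
    | succ s =>
      have h0 := hf' (0, s + e' + 1)
      have h1 := coeff_mul_homEl hS ⟨(0, e'), b', hr'.mem_nF' I⟩ f (0, s + 1)
      have e1 : ((0, s + 1) : ℕ × ℕ) + (0, e') = (0, s + e' + 1) := by
        ext
        · simp
        · simp; omega
      rw [e1] at h1
      rw [coeff_mul_homEl_eq_zero _ _ _ _ (by simp; omega), h1, zero_add,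
        compSpan_seq2_zero_succ] at h0
      rw [compSpan_seq2_zero_succ, nF_swap I J 0 s, nF_swap I J 0 (s + 1), add_comm a b]
      refine tau_step h.symm hr' hs' (by rw [nF_swap]; exact hc _) ?_
      rw [nF_swap J I, add_comm b a]
      -- on this axis `a ≡ -b` modulo `σ = a + b`
      have h3 : b' * f.1.coeff (0, s + 1) =
          (b' * f.1.coeff (0, s + 1) + a * f.1.coeff (0, s + e' + 1)) +
          (b * f.1.coeff (0, s + e' + 1) - (a + b) * f.1.coeff (0, s + e' + 1)) := by ring
      rw [h3]
      refine add_mem (mem_sup_of_mem_mul_sup h0) (sub_mem ?_ ?_)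
      · exact Submodule.mem_sup_left (Ideal.mul_mem_right _ _ (Ideal.mem_span_singleton_self _))
      · exact Submodule.mem_sup_right
          (Ideal.mul_mem_mul (Ideal.mem_span_singleton_self _) (hc _))
  | succ r =>
    cases s with
    | zero =>
      have h0 := hf' (r + e + 1, 0)
      have h1 := coeff_mul_homEl hS ⟨(e, 0), a', hr.mem_nF J⟩ f (r + 1, 0)
      have e1 : ((r + 1, 0) : ℕ × ℕ) + (e, 0) = (r + e + 1, 0) := by
        ext
        · simp; omega
        · simp
      rw [e1] at h1
      rw [coeff_mul_homEl_eq_zero _ ⟨(0, e'), _⟩ _ _ (by simp; omega), h1, add_zero,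
        compSpan_seq2_succ_zero] at h0
      rw [compSpan_seq2_succ_zero]
      refine tau_step h hr hs (hc _) ?_
      have h3 : a' * f.1.coeff (r + 1, 0) =
          (a' * f.1.coeff (r + 1, 0) + a * f.1.coeff (r + e + 1, 0)) -
          a * f.1.coeff (r + e + 1, 0) := by ring
      rw [h3]
      refine sub_mem (mem_sup_of_mem_mul_sup h0) ?_
      exact Submodule.mem_sup_left (Ideal.mul_mem_right _ _ (Ideal.mem_span_singleton_self _))
    | succ s => exact compSpan_seq2_succ_succ h _ _ _ (hc _)

/-- As in the case of one ideal: a prime containing `a t₁, b t₂, a + b, a' t₁^e + b' t₂^e' + a`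
contains successively `a`, `b`, `a' t₁^e` and `b' t₂^e'`. -/
theorem CM2_of_twoGen [IsLocalRing R] [IsNoetherianRing R] (h : Setup I J a b)
    (hI : I.radical = maximalIdeal R) (hJ : J.radical = maximalIdeal R)
    (hrad : maximalIdeal R ≤ (Ideal.span {a, b}).radical)
    {a' b' : R} {e l e' l' : ℕ} (hr : Red I a a' e l) (hs : TwoGen I J a a' e)
    (hr' : Red J b b' e' l') (hs' : TwoGen J I b b' e') :
    IsCMRing (reesBar2 I J) := by
  have hN := isNoetherian_reesBar2 h hr hs hr' hs'
  have hS := mem_reesBar2_nF I J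
  have he := hr.one_le
  have he' := hr'.one_le
  have ham : a ∈ maximalIdeal R := hI ▸ Ideal.le_radical h.a_mem
  have hbm : b ∈ maximalIdeal R := hJ ▸ Ideal.le_radical h.b_mem
  refine isCMRing_of_zeroPart2 hS ?_
  refine isCMLocalRing_of_minimal _ _ (isWeaklyRegular_tau2 h hr hs hr' hs') ?_ ?_
  · intro x hx
    rw [mem_zeroPart]
    rw [pow_one] at hx
    simp only [seq2, List.map_cons, List.map_nil, List.cons_append, List.nil_append,
      List.mem_cons, List.not_mem_nil, or_false] at hx
    rcases hx with rfl | rfl | rfl | rfl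
    · rw [coeff_homEl_zero _ _ _ (by simp)]; exact zero_mem _
    · rw [coeff_homEl_zero _ _ _ (by simp)]; exact zero_mem _
    · rw [coeff_homEl_self]; exact add_mem ham hbm
    · rw [tau2, AddMemClass.coe_add, AddMonoidAlgebra.coeff_add, Finsupp.add_apply,
        AddMemClass.coe_add, AddMonoidAlgebra.coeff_add, Finsupp.add_apply,
        coeff_homEl_zero _ _ _ (by simp; omega), coeff_homEl_zero _ _ _ (by simp; omega),
        coeff_homEl_self, zero_add, zero_add]
      exact ham
  · intro P hP hPr
    rw [pow_one] at hPr
    simp only [seq2, List.map_cons, List.map_nil, List.cons_append, List.nil_append,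
      List.forall_mem_cons] at hPr
    obtain ⟨h1, h2, h3, h4, -⟩ := hPr
    -- components of positive bidegree lie in `(a t₁, b t₂)`
    have hpos : ∀ r s x (hx : x ∈ nF I J (r + 1, s + 1)),
        homEl hS ⟨(r + 1, s + 1), x, hx⟩ ∈ P := by
      intro r s x hx
      refine homEl_mem_of_compSpan hS P (seq2 h (a + b)) (by simpa [seq2] using ⟨h1, h2, h3⟩) _ ?_
      exact compSpan_seq2_succ_succ h _ _ _ hx
    let α := homEl hS ⟨0, a, mem_nF_zero I J a⟩
    let β := homEl hS ⟨0, b, mem_nF_zero I J b⟩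
    let Y := homEl hS ⟨(e, 0), a', hr.mem_nF J⟩
    let Z := homEl hS ⟨(0, e'), b', hr'.mem_nF' I⟩
    have hσ : α + β ∈ P := by
      have := h3
      rwa [homEl_add] at this
    have h4' : Y + Z + α ∈ P := h4
    have hαY : α * Y ∈ P := by
      rw [homEl_mul]
      refine homEl_mem_of_compSpan hS P [⟨(1, 0), a, h.a_mem_nF⟩] (by simpa using h1) _ ?_
      rw [compSpan_cons_add _ _ (e - 1, 0) _ (by simp; omega), compSpan, sup_bot_eq]
      refine Ideal.mul_mem_mul (Ideal.mem_span_singleton_self _) (nF_anti I J ?_ (hr.mem_nF J))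
      simp
    have hβZ : β * Z ∈ P := by
      rw [homEl_mul]
      refine homEl_mem_of_compSpan hS P [⟨(0, 1), b, h.b_mem_nF⟩] (by simpa using h2) _ ?_
      rw [compSpan_cons_add _ _ (0, e' - 1) _ (by simp; omega), compSpan, sup_bot_eq]
      refine Ideal.mul_mem_mul (Ideal.mem_span_singleton_self _) (nF_anti I J ?_ (hr'.mem_nF' I))
      simp
    have hα : α ∈ P := by
      refine hP.mem_of_pow_mem 2 ?_
      have e1 : α ^ 2 = α * (Y + Z + α) - α * Y - Z * (α + β) + β * Z := by ring
      rw [e1]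
      exact add_mem (sub_mem (sub_mem (P.mul_mem_left _ h4') hαY) (P.mul_mem_left _ hσ)) hβZ
    have hβ : β ∈ P := (P.add_mem_iff_right hα).1 hσ
    have hYZ : Y * Z ∈ P := by
      obtain ⟨p, rfl⟩ : ∃ p, e = p + 1 := ⟨e - 1, by omega⟩
      obtain ⟨q, rfl⟩ : ∃ q, e' = q + 1 := ⟨e' - 1, by omega⟩
      rw [homEl_mul]
      have e1 : ((p + 1, 0) : ℕ × ℕ) + (0, q + 1) = (p + 1, q + 1) := by simp
      have hm := nF_mul I J (hr.mem_nF J) (hr'.mem_nF' I)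
      rw [e1] at hm
      have := hpos p q _ hm
      rwa [homEl_congr hS _ hm e1 rfl]
    have hY : Y ∈ P := by
      refine hP.mem_of_pow_mem 2 ?_
      have e1 : Y ^ 2 = Y * (Y + Z + α) - Y * Z - Y * α := by ring
      rw [e1]
      exact sub_mem (sub_mem (P.mul_mem_left _ h4') hYZ) (P.mul_mem_left _ hα)
    have hZ : Z ∈ P := by
      have e1 : Z = (Y + Z + α) - Y - α := by ring
      rw [e1]
      exact sub_mem (sub_mem h4' hY) hα
    intro f hf
    rw [eq_sum_homEl hS f]
    refine sum_mem fun γ _ => ?_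
    have hc : f.1.coeff γ ∈ nF I J γ := (hS _).1 f.2 γ
    have hc0 : γ = 0 → f.1.coeff γ ∈ maximalIdeal R := by rintro rfl; exact hf
    change homEl hS ⟨γ, f.1.coeff γ, hc⟩ ∈ P
    generalize f.1.coeff γ = x at hc hc0
    obtain ⟨r, s⟩ := γ
    rcases r with _ | r
    · rcases s with _ | s
      · exact homEl_zero_mem_of_radical hS (nF_zero I J) P _ _ hα hβ _ (hrad (hc0 rfl))
      · refine hP.mem_of_pow_mem (e' + 1) ?_
        rw [homEl_pow]
        refine homEl_mem_of_compSpan hS P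
          [⟨(0, 1), b, h.b_mem_nF⟩, ⟨(0, e'), b', hr'.mem_nF' I⟩]
          (by simpa using ⟨h2, hZ⟩) _ ?_
        have hm := F_pow hS hc (e' + 1)
        have hm' : (e' + 1) • ((0, s + 1) : ℕ × ℕ) = (0, (e' + 1) * s + e' + 1) := by
          ext
          · simp
          · simp; ring
        rw [hm'] at hm ⊢
        rw [compSpan_cons_add _ _ (0, (e' + 1) * s + e') _ (by simp),
          compSpan_cons_add _ _ (0, (e' + 1) * s + 1) _ (by simp; omega), compSpan, sup_bot_eq]
        rw [nF_swap] at hm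
        have := hs' _ hm
        rwa [nF_swap J I, nF_swap J I] at this
    · rcases s with _ | s
      · refine hP.mem_of_pow_mem (e + 1) ?_
        rw [homEl_pow]
        refine homEl_mem_of_compSpan hS P
          [⟨(1, 0), a, h.a_mem_nF⟩, ⟨(e, 0), a', hr.mem_nF J⟩]
          (by simpa using ⟨h1, hY⟩) _ ?_
        have hm := F_pow hS hc (e + 1)
        have hm' : (e + 1) • ((r + 1, 0) : ℕ × ℕ) = ((e + 1) * r + e + 1, 0) := by
          ext
          · simp; ring
          · simp
        rw [hm'] at hm ⊢
        rw [compSpan_cons_add _ _ ((e + 1) * r + e, 0) _ (by simp),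
          compSpan_cons_add _ _ ((e + 1) * r + 1, 0) _ (by simp; omega), compSpan, sup_bot_eq]
        exact hs _ hm
      · exact hpos r s x hc

end Two

/-- Theorem 5.4.  Let `(R,𝔪)` be an analytically unramified
Cohen-Macaulay local ring of dimension `2`, `I, J` `𝔪`-primary ideals whose normal joint
reduction number is zero with respect to some good joint reduction.  Then
`\overline{𝓡}(I,J)` is Cohen-Macaulay iff `\overline{𝓡}(I)` and `\overline{𝓡}(J)` are
Cohen-Macaulay. -/
theorem reesBar2_CM_iff
    {R : Type*} [CommRing R] [IsLocalRing R] [IsNoetherianRing R]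
    (hur : AnalyticallyUnramified R) (hCM : IsCMLocalRing R)
    (hdim : ringKrullDim R = 2)
    (I J : Ideal R) (hI : IsMPrimary I) (hJ : IsMPrimary J)
    (hjr : ∃ a b : R, IsGoodJointReduction I J a b ∧
      ∀ r s : ℤ, 1 ≤ r → 1 ≤ s →
        IJbar I J r s =
          Ideal.span {a} * IJbar I J (r - 1) s ⊔ Ideal.span {b} * IJbar I J r (s - 1)) :
    IsCMRing ↥(reesBar2 I J) ↔ (IsCMRing ↥(reesBar1 I) ∧ IsCMRing ↥(reesBar1 J)) := by
  obtain ⟨a, b, hg, hjr⟩ := hjr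
  obtain ⟨hrad, h⟩ := setup_of_good hCM hdim hI hJ hg hjr
  have hIr : I.radical = maximalIdeal R := hI
  have hJr : J.radical = maximalIdeal R := hJ
  have hrad' : maximalIdeal R ≤ (Ideal.span {b, a}).radical := by rwa [Set.pair_comm]
  obtain ⟨a', e, l, hr⟩ :=
    exists_red hCM hdim hIr h.a_mem (hJr ▸ Ideal.le_radical h.b_mem) hrad
  obtain ⟨b', e', l', hr'⟩ :=
    exists_red hCM hdim hJr h.b_mem (hIr ▸ Ideal.le_radical h.a_mem) hrad'
  constructor
  · intro hS
    have hs := twoGen_of_CM2 h hdim hIr hJr hr hS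
    have hs' := twoGen_of_CM2 h.symm hdim hJr hIr hr' (hS.of_ringEquiv (swapEquiv I J))
    exact ⟨CM1_of_twoGen h hIr hJr hrad hr hs, CM1_of_twoGen h.symm hJr hIr hrad' hr' hs'⟩
  · rintro ⟨hA, hB⟩
    exact CM2_of_twoGen h hIr hJr hrad hr (twoGen_of_CM1 h hdim hIr hJr hr hA) hr'
      (twoGen_of_CM1 h.symm hdim hJr hIr hr' hB)
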